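/- arXiv:1102.5072 — 2 statements merged into one kernel-verified Lean document; each statement's English description precedes it below -/
import Mathlib

section
/- Let C be a rational plane curve of even degree d = 2c over an algebraically closed field, parameterized birationally and without base points by three forms of degree d. If p is a point on C and q is a singularity of multiplicity c infinitely near to p, then the multiplicity of C at p is also equal to c; moreover in this situation both column degrees d₁, d₂ of the homogeneous Hilbert–Burch matrix equal c. -/
set_option maxHeartbeats 1000000
set_option synthInstance.maxHeartbeats 1000000

open MvPolynomial

/-- The height of an ideal: the infimum of the heights of the primes containing it. -/
noncomputable def idealHeight {R : Type*} [CommRing R] (I : Ideal R) : ℕ∞ :=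
  ⨅ (P : PrimeSpectrum R) (_ : I ≤ P.asIdeal), Order.height P

/-- `e` is the Hilbert–Samuel multiplicity of the ideal `J` on the (one-dimensional) ring `R`,
characterized as the limit of `λ(R/Jⁿ)/n`; lengths are expressed as Krull dimensions of
submodule lattices. -/
def IsHSMultOfDimOne (R : Type*) [CommRing R] (J : Ideal R) (e : ℕ) : Prop :=
  ∃ len : ℕ → ℕ,
    (∀ n : ℕ, Order.krullDim (Submodule R (R ⧸ J ^ n)) = ((len n : ℕ∞) : WithBot ℕ∞)) ∧
    Filter.Tendsto (fun n : ℕ => (len n : ℝ) / (n : ℝ)) Filter.atTop (nhds (e : ℝ))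

/-- The ideal of nonunits of a subring (the maximal ideal, when the subring is local). -/
def nuIdeal {K : Type*} [CommRing K] (O : Subring K) : Ideal O :=
  Ideal.span {x : O | ¬IsUnit x}

/-- The set `m/f = {x ∈ K : f·x ∈ m}` used to form the blow-up ring `O[m/f]`. -/
def blowSet {K : Type*} [CommRing K] (O : Subring K) (f : O) : Set K :=
  {x : K | ∃ m : O, m ∈ nuIdeal O ∧ (f : K) * x = (m : K)}

/-- The blow-up ring `O[m/f]`. -/
def blowRing {K : Type*} [CommRing K] (O : Subring K) (f : O) : Subring K :=
  Subring.closure ((O : Set K) ∪ blowSet O f)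

/-- The localization of `O'` at `N`, as a subset of the ambient total quotient ring. -/
def locSet {K : Type*} [CommRing K] (O' : Subring K) (N : Ideal O') : Set K :=
  {x : K | ∃ a s : O', s ∉ N ∧ (s : K) * x = (a : K)}

/-- `O'` is one of the (local rings of the) points in the first neighborhood of the point with
local ring `O`: it is a localization, at a maximal ideal, of `O[m/f]` where `f ∈ m` satisfies
`m^{r+1} = f·m^r` for some `r ≥ 0`. -/
def IsFirstNbhdOf {K : Type*} [CommRing K] (O O' : Subring K) : Prop :=
  ∃ f : O, ¬IsUnit f ∧
    (∃ r : ℕ, nuIdeal O ^ (r + 1) = Ideal.span {f} * nuIdeal O ^ r) ∧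
    ∃ N : Ideal (blowRing O f), N.IsMaximal ∧
      O' = Subring.closure (locSet (blowRing O f) N)

/-- `O'` is (the local ring of) a point infinitely near to the point with local ring `O`:
it is obtained from `O` by finitely many (at least one) blow-up steps. -/
def IsInfinitelyNearTo {K : Type*} [CommRing K] (O O' : Subring K) : Prop :=
  Relation.TransGen IsFirstNbhdOf O O'

/-- The homogeneous coordinate ring `k[g₁,g₂,g₃]` of the parameterized plane curve. -/
noncomputable def coneRing {k : Type*} [Field k] (g : Fin 3 → MvPolynomial (Fin 2) k) :
    Subalgebra k (MvPolynomial (Fin 2) k) :=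
  Algebra.adjoin k (Set.range g)

/-- The generators `g i`, as elements of `k[g₁,g₂,g₃]`. -/
noncomputable def coneGen {k : Type*} [Field k] (g : Fin 3 → MvPolynomial (Fin 2) k)
    (i : Fin 3) : coneRing g :=
  ⟨g i, Algebra.subset_adjoin ⟨i, rfl⟩⟩

/-- The homogeneous prime of `k[g₁,g₂,g₃]` corresponding to the point `p = [a₁:a₂:a₃]` of the
curve. -/
noncomputable def pointIdeal {k : Type*} [Field k] (g : Fin 3 → MvPolynomial (Fin 2) k)
    (a : Fin 3 → k) : Ideal (coneRing g) :=
  Ideal.span {x : coneRing g | ∃ i j : Fin 3, x = a i • coneGen g j - a j • coneGen g i}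

/-- The local ring `O_{C,p}` of the curve `C` at the point `p = [a₁:a₂:a₃]`, realized as the
subring of the total quotient ring of `k[g₁,g₂,g₃]` consisting of fractions `f/s` with `f`, `s`
homogeneous of the same degree and `s ∉ 𝔭`. -/
noncomputable def curveLocalRing {k : Type*} [Field k] (g : Fin 3 → MvPolynomial (Fin 2) k)
    (a : Fin 3 → k) : Subring (FractionRing (coneRing g)) :=
  Subring.closure
    {x : FractionRing (coneRing g) |
      ∃ f s : coneRing g, ∃ e : ℕ,
        ((f : MvPolynomial (Fin 2) k).IsHomogeneous e) ∧
        ((s : MvPolynomial (Fin 2) k).IsHomogeneous e) ∧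
        s ∉ pointIdeal g a ∧
        algebraMap (coneRing g) (FractionRing (coneRing g)) s * x =
          algebraMap (coneRing g) (FractionRing (coneRing g)) f}

/-- `[a₁:a₂:a₃]` lies on the curve parameterized by `g₁, g₂, g₃`. -/
def onCurve {k : Type*} [Field k] (g : Fin 3 → MvPolynomial (Fin 2) k) (a : Fin 3 → k) : Prop :=
  ∃ q : Fin 2 → k, q ≠ 0 ∧ ∃ t : k, t ≠ 0 ∧ ∀ i, a i = t * eval q (g i)



section RelLen
variable {k L : Type*} [Field k] [Field L] [Algebra k L]

/-- relative length `A/B` over `k` -/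
noncomputable def rl (A B : Submodule k L) : ℕ∞ := Module.length k (A ⧸ B.submoduleOf A)

/-- `x·A` -/
noncomputable def sm (x : L) (A : Submodule k L) : Submodule k L := A.map (LinearMap.mulLeft k x)

lemma mem_sm {x : L} {A : Submodule k L} {z : L} : z ∈ sm x A ↔ ∃ a ∈ A, x * a = z := by
  simp [sm]

lemma sm_le_sm {x : L} {A B : Submodule k L} (h : B ≤ A) : sm x B ≤ sm x A :=
  Submodule.map_mono h

lemma sm_sm (x y : L) (A : Submodule k L) : sm x (sm y A) = sm (x * y) A := by
  ext z
  simp only [mem_sm]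
  constructor
  · rintro ⟨_, ⟨a, ha, rfl⟩, rfl⟩
    exact ⟨a, ha, by ring⟩
  · rintro ⟨a, ha, rfl⟩
    exact ⟨_, ⟨a, ha, rfl⟩, by ring⟩

lemma rl_add {A B C : Submodule k L} (hBA : B ≤ A) (hCB : C ≤ B) :
    rl A C = rl B C + rl A B := by
  unfold rl
  let f : (B ⧸ C.submoduleOf B) →ₗ[k] (A ⧸ C.submoduleOf A) :=
    Submodule.mapQ _ _ (Submodule.inclusion hBA) (by
      intro x hx
      simpa [Submodule.submoduleOf] using hx)
  let g : (A ⧸ C.submoduleOf A) →ₗ[k] (A ⧸ B.submoduleOf A) :=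
    Submodule.mapQ _ _ LinearMap.id (by
      intro x hx
      exact hCB hx)
  have hgm : ∀ x : A, g (Submodule.Quotient.mk x) = Submodule.Quotient.mk x := fun x => rfl
  have hfm : ∀ x : B, f (Submodule.Quotient.mk x) =
    Submodule.Quotient.mk (Submodule.inclusion hBA x) := fun x => rfl
  refine Module.length_eq_add_of_exact f g ?_ ?_ ?_
  · rw [← LinearMap.ker_eq_bot, LinearMap.ker_eq_bot']
    intro x
    induction x using Submodule.Quotient.induction_on with | _ x =>
    intro hx
    rw [hfm, Submodule.Quotient.mk_eq_zero] at hx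
    rw [Submodule.Quotient.mk_eq_zero]
    exact hx
  · intro x
    induction x using Submodule.Quotient.induction_on with | _ x =>
    exact ⟨Submodule.Quotient.mk x, hgm x⟩
  · intro x
    induction x using Submodule.Quotient.induction_on with | _ x =>
    rw [hgm, Submodule.Quotient.mk_eq_zero]
    constructor
    · intro hx
      exact ⟨Submodule.Quotient.mk ⟨x, hx⟩, hfm _⟩
    · rintro ⟨y, hy⟩
      induction y using Submodule.Quotient.induction_on with | _ y =>
      rw [hfm] at hy
      rw [Submodule.Quotient.eq] at hy
      have h1 : (y : L) - x ∈ C := hy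
      have : (x : L) ∈ B := by
        have := B.sub_mem y.2 (hCB h1)
        simpa using this
      exact this

lemma rl_sm {x : L} (hx : x ≠ 0) (A B : Submodule k L) : rl (sm x A) (sm x B) = rl A B := by
  unfold rl
  have hinj : Function.Injective (LinearMap.mulLeft k x) := fun a b h =>
    mul_left_cancel₀ hx h
  let e : A ≃ₗ[k] (sm x A) := Submodule.equivMapOfInjective (LinearMap.mulLeft k x) hinj A
  refine (Submodule.Quotient.equiv _ _ e ?_).length_eq.symm
  ext z
  simp only [Submodule.mem_map, Submodule.submoduleOf, Submodule.mem_comap, Submodule.subtype_apply]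
  constructor
  · rintro ⟨a, ha, rfl⟩
    exact mem_sm.2 ⟨a, ha, rfl⟩
  · intro hz
    obtain ⟨b, hb, hbz⟩ := mem_sm.1 hz
    obtain ⟨a, rfl⟩ := e.surjective z
    refine ⟨a, ?_, rfl⟩
    have : x * b = x * a := hbz
    have := mul_left_cancel₀ hx this
    rw [this] at hb
    exact hb

lemma rl_anti {A B C : Submodule k L} (hBA : B ≤ A) (hCB : C ≤ B) : rl A B ≤ rl A C := by
  rw [rl_add hBA hCB]; exact le_add_self

/-- lattice lemma -/
lemma rl_lattice {A V : Submodule k L} (h : A ≤ V) {x : L} (hx : x ≠ 0) (hA : sm x A ≤ A)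
    (hV : sm x V ≤ V) (hfin : rl V A ≠ ⊤) : rl A (sm x A) = rl V (sm x V) := by
  have h1 := rl_add h hA
  have h2 := rl_add hV (sm_le_sm (x := x) h)
  rw [rl_sm hx, h1, add_comm] at h2
  exact (ENat.add_right_injective_of_ne_top hfin) h2

open Polynomial in
/-- Krull–Akizuki over `k[τ]`. -/
lemma rl_KA (M : Submodule k L) (τ : L) (hτ : ∀ w ∈ M, τ * w ∈ M)
    (hfrac : ∀ w ∈ M, ∃ p q : k[X], aeval τ q ≠ 0 ∧ aeval τ q * w = aeval τ p)
    (P : k[X]) (hP : P ≠ 0) : rl M (sm (aeval τ P) M) ≤ P.natDegree := by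
  classical
  have hpoly : ∀ (p : k[X]), ∀ w ∈ M, aeval τ p * w ∈ M := by
    intro p w hw
    induction p using Polynomial.induction_on' with
    | add p q hp hq => rw [map_add, add_mul]; exact M.add_mem hp hq
    | monomial n a =>
      rw [Polynomial.aeval_monomial, mul_assoc, ← Algebra.smul_def]
      apply M.smul_mem
      induction n with
      | zero => simpa using hw
      | succ n ih => rw [pow_succ', mul_assoc]; exact hτ _ ih
  unfold rl
  rw [Module.length_eq_rank]
  suffices h : Module.rank k (M ⧸ (sm (aeval τ P) M).submoduleOf M) ≤ (P.natDegree : Cardinal) by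
    have := Cardinal.toENat.monotone' h
    simpa using this
  apply rank_le
  intro s hs
  let w : s → M := fun i => Quotient.out (i : (M ⧸ (sm (aeval τ P) M).submoduleOf M))
  have hw : ∀ i, Submodule.Quotient.mk (w i) = (i : (M ⧸ (sm (aeval τ P) M).submoduleOf M)) :=
    fun i => Quotient.out_eq _
  choose p q hq hpq using fun i : s => hfrac (w i) (w i).2
  let Q : k[X] := ∏ i, q i
  have hQ : aeval τ Q ≠ 0 := by
    simp only [Q, map_prod]
    exact Finset.prod_ne_zero_iff.2 fun i _ => hq i
  have hex : ∀ i, ∃ p' : k[X], aeval τ Q * w i = aeval τ p' := by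
    intro i
    refine ⟨(∏ j ∈ Finset.univ.erase i, q j) * p i, ?_⟩
    have : Q = (∏ j ∈ Finset.univ.erase i, q j) * q i :=
      (Finset.prod_erase_mul _ _ (Finset.mem_univ i)).symm
    rw [this, map_mul, map_mul, mul_assoc, hpq]
  choose p' hp' using hex
  let I : Ideal k[X] := Ideal.span (Set.range p')
  obtain ⟨z0, hz0⟩ := (IsPrincipalIdealRing.principal I).principal
  have hz0mem : z0 ∈ I := by rw [hz0]; exact Submodule.mem_span_singleton_self z0
  obtain ⟨a, ha⟩ := (Ideal.mem_span_range_iff_exists_fun).1 hz0mem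
  have hv : ∀ i, ∃ v, p' i = z0 * v := by
    intro i
    have : p' i ∈ I := Ideal.subset_span ⟨i, rfl⟩
    rw [hz0] at this
    exact Ideal.mem_span_singleton.1 this
  choose v hv using hv
  let z : L := ∑ i, aeval τ (a i) * w i
  have hzM : z ∈ M := M.sum_mem fun i _ => hpoly _ _ (w i).2
  have hQz : aeval τ Q * z = aeval τ z0 := by
    simp only [z, Finset.mul_sum]
    rw [← ha, map_sum]
    refine Finset.sum_congr rfl fun i _ => ?_
    rw [map_mul, ← hp']; ring
  have hwz : ∀ i, (w i : L) = aeval τ (v i) * z := by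
    intro i
    apply mul_left_cancel₀ hQ
    rw [hp', hv, map_mul, ← hQz]; ring
  have hli : LinearIndependent k
      (fun i : s => (Ideal.Quotient.mk (Ideal.span {P}) (v i))) := by
    rw [Fintype.linearIndependent_iff]
    intro c hc
    rw [Fintype.linearIndependent_iff] at hs
    apply hs
    have h1 : (∑ i, c i • v i) ∈ Ideal.span {P} := by
      rw [← Ideal.Quotient.eq_zero_iff_mem, map_sum, ← hc]
      refine Finset.sum_congr rfl fun i _ => ?_
      rfl
    obtain ⟨u, hu⟩ := Ideal.mem_span_singleton.1 h1
    have h2 : (∑ i, c i • (w i)) ∈ (sm (aeval τ P) M).submoduleOf M := by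
      change ((∑ i, c i • (w i) : M) : L) ∈ sm (aeval τ P) M
      refine mem_sm.2 ⟨aeval τ u * z, hpoly _ _ hzM, ?_⟩
      rw [← mul_assoc, ← map_mul, ← hu, map_sum, Finset.sum_mul]
      push_cast
      refine Finset.sum_congr rfl fun i _ => ?_
      rw [hwz, map_smul, smul_mul_assoc]
    rw [← (Submodule.Quotient.mk_eq_zero _).2 h2]
    rw [← Submodule.mkQ_apply, map_sum]
    refine Finset.sum_congr rfl fun i _ => ?_
    rw [map_smul, Submodule.mkQ_apply, hw]
  have hfin : Module.Finite k (k[X] ⧸ Ideal.span {P}) :=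
    (AdjoinRoot.powerBasis hP).finite
  have := hli.fintype_card_le_finrank
  rw [finrank_quotient_span_eq_natDegree] at this
  simpa using this

end RelLen

section HS
variable {k R : Type*} [Field k] [CommRing R] [IsDomain R] [Algebra k R]

lemma len_le_of_ge (I J : Ideal R) (h : I ≤ J) : Module.length R (R ⧸ J) ≤ Module.length R (R ⧸ I) :=
  Module.length_le_of_surjective (Submodule.mapQ I J LinearMap.id h) (by
    intro x
    induction x using Submodule.Quotient.induction_on with | _ x =>
    exact ⟨Submodule.Quotient.mk x, by simp⟩)

lemma HS_upper {J : Ideal R} {c N : ℕ} (h : IsHSMultOfDimOne R J c) {x : R} (hx : x ∈ J)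
    (hx0 : x ≠ 0) (hN : Module.length k (R ⧸ Ideal.span {x}) ≤ N) : c ≤ N := by
  obtain ⟨len, h1, h2⟩ := h
  have hN' : Ring.ord R x ≤ N := by
    refine le_trans ?_ hN
    unfold Ring.ord
    rw [Module.length, Module.length, WithBot.unbot_le_iff, WithBot.coe_unbot]
    exact Order.krullDim_le_of_strictMono (Submodule.restrictScalars k)
      (Submodule.restrictScalarsEmbedding k R _).strictMono
  have h3 : ∀ n, len n ≤ n * N := by
    intro n
    have e1 : Module.length R (R ⧸ J ^ n) = (len n : ℕ∞) := by
      apply WithBot.coe_injective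
      rw [Module.coe_length, h1]
    have e2 : Module.length R (R ⧸ J ^ n) ≤ Ring.ord R (x ^ n) := by
      apply len_le_of_ge
      rw [Ideal.span_singleton_le_iff_mem]
      exact Ideal.pow_mem_pow hx n
    rw [e1, Ring.ord_pow (mem_nonZeroDivisors_of_ne_zero hx0)] at e2
    have e3 : (n • Ring.ord R x) ≤ n • (N : ℕ∞) := nsmul_le_nsmul_right hN' n
    have := e2.trans e3
    rw [nsmul_eq_mul] at this
    exact_mod_cast this
  have h4 : (c : ℝ) ≤ N := by
    refine le_of_tendsto h2 ?_
    filter_upwards [Filter.eventually_gt_atTop 0] with n hn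
    rw [div_le_iff₀ (by exact_mod_cast hn)]
    have := h3 n
    rw [mul_comm]
    exact_mod_cast this
  exact_mod_cast h4

lemma HS_of_reduction {J : Ideal R} {c r : ℕ} {f : R} (hf : f ∈ J) (hf0 : f ≠ 0)
    (hred : J ^ (r + 1) = Ideal.span {f} * J ^ r) (hc : Ring.ord R f = c) :
    IsHSMultOfDimOne R J c := by
  have hup : ∀ n, Module.length R (R ⧸ J ^ n) ≤ (n * c : ℕ) := by
    intro n
    have e2 : Module.length R (R ⧸ J ^ n) ≤ Ring.ord R (f ^ n) := by
      apply len_le_of_ge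
      rw [Ideal.span_singleton_le_iff_mem]
      exact Ideal.pow_mem_pow hf n
    rw [Ring.ord_pow (mem_nonZeroDivisors_of_ne_zero hf0), hc, nsmul_eq_mul] at e2
    exact_mod_cast e2
  have hne : ∀ n, Module.length R (R ⧸ J ^ n) ≠ ⊤ := fun n =>
    ne_top_of_le_ne_top (ENat.natCast_ne_top _) (hup n)
  have hpow : ∀ n, J ^ (r + n) = Ideal.span {f ^ n} * J ^ r := by
    intro n
    induction n with
    | zero => simp
    | succ n ih =>
      rw [← add_assoc, pow_succ, ih, mul_assoc, ← pow_succ, hred, ← mul_assoc,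
        Ideal.span_singleton_mul_span_singleton, pow_succ]
  have hlow : ∀ n, ((n * c : ℕ) : ℕ∞) ≤ Module.length R (R ⧸ J ^ (r + n)) := by
    intro n
    have e2 : Ring.ord R (f ^ n) ≤ Module.length R (R ⧸ J ^ (r + n)) := by
      apply len_le_of_ge
      rw [hpow]
      exact Ideal.mul_le_inf.trans inf_le_left
    rw [Ring.ord_pow (mem_nonZeroDivisors_of_ne_zero hf0), hc, nsmul_eq_mul] at e2
    exact_mod_cast e2
  refine ⟨fun n => (Module.length R (R ⧸ J ^ n)).toNat, fun n => ?_, ?_⟩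
  · rw [ENat.natCast_toNat (hne n), Module.coe_length]
  · have hup' : ∀ n, (Module.length R (R ⧸ J ^ n)).toNat ≤ n * c := fun n =>
      ENat.toNat_le_of_le_natCast (hup n)
    have hlow' : ∀ n, n * c ≤ (Module.length R (R ⧸ J ^ (r + n))).toNat := fun n => by
      have := hlow n
      rw [← ENat.natCast_toNat (hne (r+n))] at this
      exact_mod_cast this
    have t1 : Filter.Tendsto (fun n : ℕ => (c : ℝ) - (r * c : ℝ) / n) Filter.atTop (nhds (c : ℝ)) := by
      have := (tendsto_const_div_atTop_nhds_zero_nat ((r * c : ℝ))).const_sub (c : ℝ)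
      simpa using this
    refine tendsto_of_tendsto_of_tendsto_of_le_of_le' t1 tendsto_const_nhds ?_ ?_
    · filter_upwards [Filter.eventually_ge_atTop (r + 1)] with n hn
      obtain ⟨m, rfl⟩ := Nat.exists_eq_add_of_le (show r ≤ n by omega)
      have hn' : (0 : ℝ) < ((r + m : ℕ) : ℝ) := by exact_mod_cast (show 0 < r + m by omega)
      rw [le_div_iff₀ hn', sub_mul, div_mul_cancel₀ _ hn'.ne']
      have : ((m * c : ℕ) : ℝ) ≤ _ := Nat.cast_le.2 (hlow' m)
      push_cast at this ⊢
      linarith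
    · filter_upwards [Filter.eventually_gt_atTop 0] with n hn
      rw [div_le_iff₀ (by exact_mod_cast hn), mul_comm]
      exact_mod_cast hup' n

end HS


section Len
variable {k R : Type*} [Field k] [CommRing R] [Algebra k R]

lemma simple_of_residue [IsLocalRing R] (hres : ∀ x : R, ∃ c : k, ¬ IsUnit (x - algebraMap k R c))
    {M : Type*} [AddCommGroup M] [Module R M] [Module k M] [IsScalarTower k R M]
    [IsSimpleModule R M] : IsSimpleModule k M := by
  have hmax : (Module.annihilator R M).IsMaximal := IsSimpleModule.annihilator_isMaximal
  have hann : ∀ x : R, ¬ IsUnit x → ∀ m : M, x • m = 0 := by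
    intro x hx m
    have : x ∈ Module.annihilator R M := by
      rw [IsLocalRing.eq_maximalIdeal hmax]; exact hx
    exact Module.mem_annihilator.1 this m
  rw [isSimpleModule_iff_toSpanSingleton_surjective]
  refine ⟨IsSimpleModule.nontrivial R M, fun q hq y => ?_⟩
  obtain ⟨r, hr⟩ := (isSimpleModule_iff_toSpanSingleton_surjective.1
    (inferInstance : IsSimpleModule R M)).2 q hq y
  obtain ⟨c, hc⟩ := hres r
  refine ⟨c, ?_⟩
  have := hann _ hc q
  rw [sub_smul, sub_eq_zero, algebraMap_smul] at this
  simp only [LinearMap.toSpanSingleton_apply] at hr ⊢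
  rw [← this, hr]

lemma length_eq_of_residue [IsLocalRing R]
    (hres : ∀ x : R, ∃ c : k, ¬ IsUnit (x - algebraMap k R c))
    {M : Type*} [AddCommGroup M] [Module R M] (h : IsFiniteLength R M) :
    ∀ [Module k M] [IsScalarTower k R M], Module.length k M = Module.length R M := by
  induction h with
  | of_subsingleton => intros; simp
  | @of_simple_quotient M _ _ N hs hN ih =>
    intro _ _
    have e1 : Module.length k M = Module.length k N + Module.length k (M ⧸ N) :=
      Module.length_eq_add_of_exact (N.subtype.restrictScalars k) (N.mkQ.restrictScalars k)
        N.injective_subtype N.mkQ_surjective (LinearMap.exact_subtype_mkQ N)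
    have e2 : Module.length R M = Module.length R N + Module.length R (M ⧸ N) :=
      Module.length_eq_add_of_exact N.subtype N.mkQ
        N.injective_subtype N.mkQ_surjective (LinearMap.exact_subtype_mkQ N)
    have : IsSimpleModule k (M ⧸ N) := simple_of_residue hres
    rw [e1, e2, ih, Module.length_eq_one (R := k) (M := M ⧸ N), Module.length_eq_one (R := R) (M := M ⧸ N)]

lemma length_le_k {M : Type*} [AddCommGroup M] [Module R M] [Module k M] [IsScalarTower k R M] :
    Module.length R M ≤ Module.length k M := by
  rw [Module.length, Module.length, WithBot.unbot_le_iff, WithBot.coe_unbot]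
  exact Order.krullDim_le_of_strictMono (Submodule.restrictScalars k)
    (Submodule.restrictScalarsEmbedding k R _).strictMono

variable {L : Type*} [Field L] [Algebra k L]

lemma length_quot_eq_rl (j : R →ₐ[k] L) (hj : Function.Injective j) (x : R) :
    Module.length k (R ⧸ Ideal.span {x}) =
      rl (LinearMap.range j.toLinearMap) (sm (j x) (LinearMap.range j.toLinearMap)) := by
  unfold rl
  let A := LinearMap.range j.toLinearMap
  let φ : R →ₗ[k] (A ⧸ (sm (j x) A).submoduleOf A) :=
    (Submodule.mkQ _).comp j.toLinearMap.rangeRestrict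
  have hφs : Function.Surjective φ :=
    (Submodule.mkQ_surjective _).comp (LinearMap.surjective_rangeRestrict _)
  have hker : LinearMap.ker φ = (Ideal.span {x}).restrictScalars k := by
    ext r
    rw [LinearMap.mem_ker]
    change Submodule.Quotient.mk _ = _ ↔ _
    rw [Submodule.Quotient.mk_eq_zero]
    change j r ∈ sm (j x) A ↔ r ∈ Ideal.span {x}
    rw [mem_sm, Ideal.mem_span_singleton']
    constructor
    · rintro ⟨_, ⟨a, rfl⟩, h⟩
      refine ⟨a, hj ?_⟩
      rw [map_mul, ← h, mul_comm]; rfl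
    · rintro ⟨a, rfl⟩
      exact ⟨j a, ⟨a, rfl⟩, by rw [map_mul, mul_comm]⟩
  have e := φ.quotKerEquivOfSurjective hφs
  rw [← e.length_eq, hker]
  exact (Submodule.Quotient.restrictScalarsEquiv k (Ideal.span {x})).length_eq.symm

end Len

section Blow
variable {K : Type*} [Field K]

lemma mem_closure_locSet (B : Subring K) (N : Ideal B) [hN : N.IsPrime] (x : K) :
    x ∈ Subring.closure (locSet B N) ↔ x ∈ locSet B N := by
  constructor
  swap
  · exact fun h => Subring.subset_closure h
  intro h
  have h1 : (1 : B) ∉ N := (Ideal.ne_top_iff_one N).1 hN.ne_top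
  induction h using Subring.closure_induction with
  | mem x hx => exact hx
  | zero => exact ⟨0, 1, h1, by simp⟩
  | one => exact ⟨1, 1, h1, by simp⟩
  | add x y _ _ hx hy =>
    obtain ⟨a, s, hs, h⟩ := hx
    obtain ⟨a', s', hs', h'⟩ := hy
    refine ⟨a * s' + a' * s, s * s', fun hh => (hN.mem_or_mem hh).elim hs hs', ?_⟩
    push_cast
    rw [← h, ← h']; ring
  | neg x _ hx =>
    obtain ⟨a, s, hs, h⟩ := hx
    exact ⟨-a, s, hs, by push_cast; rw [← h]; ring⟩
  | mul x y _ _ hx hy =>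
    obtain ⟨a, s, hs, h⟩ := hx
    obtain ⟨a', s', hs', h'⟩ := hy
    refine ⟨a * a', s * s', fun hh => (hN.mem_or_mem hh).elim hs hs', ?_⟩
    push_cast
    rw [← h, ← h']; ring

lemma le_closure_locSet (B : Subring K) (N : Ideal B) [hN : N.IsPrime] :
    B ≤ Subring.closure (locSet B N) := fun x hx =>
  Subring.subset_closure ⟨⟨x, hx⟩, 1, (Ideal.ne_top_iff_one N).1 hN.ne_top, by simp⟩

/-- inverse criterion for units in subrings of a field -/
lemma isUnit_subring_iff (O : Subring K) (x : O) : IsUnit x ↔ (x : K) ≠ 0 ∧ (x : K)⁻¹ ∈ O := by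
  constructor
  · rintro h
    obtain ⟨y, hy⟩ := h.exists_right_inv
    have hy' : (x : K) * y = 1 := by exact_mod_cast congrArg Subtype.val hy
    refine ⟨left_ne_zero_of_mul_eq_one hy', ?_⟩
    rw [← eq_inv_of_mul_eq_one_right hy']; exact y.2
  · rintro ⟨h0, h⟩
    refine IsUnit.of_mul_eq_one ⟨_, h⟩ ?_
    ext
    simp [h0]

lemma loc_unit_iff (B : Subring K) (N : Ideal B) [hN : N.IsPrime]
    (z : Subring.closure (locSet B N)) (a s : B) (hs : s ∉ N) (h : (s : K) * z = a) :
    IsUnit z ↔ a ∉ N := by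
  have hs0 : (s : K) ≠ 0 := by
    intro h0
    apply hs
    have : s = 0 := by ext; simpa using h0
    rw [this]; exact N.zero_mem
  rw [isUnit_subring_iff]
  constructor
  · rintro ⟨h0, hinv⟩ haN
    obtain ⟨a', s', hs', h'⟩ := (mem_closure_locSet B N _).1 hinv
    have : s' * s = a' * a := by
      ext
      push_cast
      rw [← h, ← h']
      field_simp
    have h2 : s' * s ∈ N := by rw [this]; exact N.mul_mem_left _ haN
    exact (hN.mem_or_mem h2).elim hs' hs
  · intro ha
    have ha0 : (a : K) ≠ 0 := by
      intro h0
      apply ha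
      have : a = 0 := by ext; simpa using h0
      rw [this]; exact N.zero_mem
    have hz0 : (z : K) ≠ 0 := by
      intro hz; rw [hz, mul_zero] at h; exact ha0 h.symm
    refine ⟨hz0, (mem_closure_locSet B N _).2 ⟨s, a, ha, ?_⟩⟩
    rw [← h]; field_simp

lemma loc_isLocal (B : Subring K) (N : Ideal B) [hN : N.IsPrime] :
    IsLocalRing (Subring.closure (locSet B N)) := by
  apply IsLocalRing.of_nonunits_add
  intro x y hx hy
  obtain ⟨a, s, hs, h⟩ := (mem_closure_locSet B N _).1 x.2
  obtain ⟨a', s', hs', h'⟩ := (mem_closure_locSet B N _).1 y.2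
  rw [mem_nonunits_iff, loc_unit_iff B N x a s hs h, not_not] at hx
  rw [mem_nonunits_iff, loc_unit_iff B N y a' s' hs' h', not_not] at hy
  rw [mem_nonunits_iff, loc_unit_iff B N (x + y) (a * s' + a' * s) (s * s')
    (fun hh => (hN.mem_or_mem hh).elim hs hs') (by push_cast; rw [← h, ← h']; ring), not_not]
  exact N.add_mem (N.mul_mem_right _ hx) (N.mul_mem_right _ hy)

lemma nuIdeal_eq (O : Subring K) [IsLocalRing O] : nuIdeal O = IsLocalRing.maximalIdeal O := by
  apply le_antisymm
  · rw [nuIdeal, Ideal.span_le]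
    intro x hx; exact hx
  · intro x hx; exact Ideal.subset_span hx

/-- the blow-up ring is integral over `O` -/
lemma blow_integral (O : Subring K) [IsLocalRing O] (hfg : (nuIdeal O).FG) (f : O)
    (hf : ¬ IsUnit f) (hf0 : f ≠ 0) (r : ℕ)
    (hred : nuIdeal O ^ (r + 1) = Ideal.span {f} * nuIdeal O ^ r) :
    ∀ b ∈ blowRing O f, IsIntegral O b := by
  suffices h : blowRing O f ≤ (integralClosure O K).toSubring from fun b hb => h hb
  rw [blowRing, Subring.closure_le]
  rintro x (hx | ⟨m, hm, hfx⟩)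
  · exact isIntegral_algebraMap (R := O) (x := ⟨x, hx⟩)
  · change IsIntegral O x
    let M : Submodule O K := Submodule.map (Algebra.linearMap O K) (nuIdeal O ^ r)
    have hf0' : (f : K) ≠ 0 := by simpa using hf0
    refine isIntegral_of_smul_mem_submodule M ?_ ?_ x ?_
    · rw [Submodule.ne_bot_iff]
      refine ⟨_, ⟨f ^ r, Ideal.pow_mem_pow (Ideal.subset_span hf) r, rfl⟩, ?_⟩
      change ((f ^ r : O) : K) ≠ 0
      push_cast
      exact pow_ne_zero _ hf0'
    · exact (Submodule.FG.pow hfg r).map _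
    · rintro _ ⟨w, hw, rfl⟩
      have h1 : m * w ∈ nuIdeal O ^ (r + 1) := by
        rw [pow_succ']; exact Ideal.mul_mem_mul hm hw
      rw [hred, Ideal.mem_span_singleton_mul] at h1
      obtain ⟨z, hz, hzw⟩ := h1
      refine ⟨z, hz, ?_⟩
      change (z : K) = x * w
      apply mul_left_cancel₀ hf0'
      rw [← mul_assoc, hfx]
      exact_mod_cast congrArg Subtype.val hzw

lemma le_blowRing (O : Subring K) (f : O) : O ≤ blowRing O f := fun x hx =>
  Subring.subset_closure (Or.inl hx)

/-- maximal ideals of the blow-up lie over the maximal ideal -/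
lemma blow_lies_over (O : Subring K) [IsLocalRing O] (f : O)
    (hinteg : ∀ b ∈ blowRing O f, IsIntegral O b) (N : Ideal (blowRing O f)) (hN : N.IsMaximal)
    (x : O) (hx : ¬ IsUnit x) : (⟨x, le_blowRing O f x.2⟩ : blowRing O f) ∈ N := by
  let i : O →+* blowRing O f := Subring.inclusion (le_blowRing O f)
  have hi : i.IsIntegral := by
    intro b
    obtain ⟨p, hp, hpb⟩ := hinteg b b.2
    refine ⟨p, hp, ?_⟩
    apply (blowRing O f).subtype_injective
    rw [map_zero, Polynomial.hom_eval₂]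
    exact hpb
  have hmax : (N.comap i).IsMaximal := Ideal.isMaximal_comap_of_isIntegral_of_isMaximal' i hi N
  have : x ∈ N.comap i := by rw [IsLocalRing.eq_maximalIdeal hmax]; exact hx
  exact this

end Blow


section Chain
variable {k K L : Type*} [Field k] [Field K] [Algebra k K] [Field L] [Algebra k L]

/-- `w` is a rational function of `τ` -/
def FracIn (k : Type*) {L : Type*} [Field k] [Field L] [Algebra k L] (τ w : L) : Prop :=
  ∃ p q : Polynomial k, Polynomial.aeval τ q ≠ 0 ∧ Polynomial.aeval τ q * w = Polynomial.aeval τ p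

lemma FracIn.add {τ w w' : L} (h : FracIn k τ w) (h' : FracIn k τ w') : FracIn k τ (w + w') := by
  obtain ⟨p, q, hq, e⟩ := h
  obtain ⟨p', q', hq', e'⟩ := h'
  refine ⟨p * q' + p' * q, q * q', by rw [map_mul]; exact mul_ne_zero hq hq', ?_⟩
  simp only [map_mul, map_add, ← e, ← e']; ring

lemma FracIn.mul {τ w w' : L} (h : FracIn k τ w) (h' : FracIn k τ w') : FracIn k τ (w * w') := by
  obtain ⟨p, q, hq, e⟩ := h
  obtain ⟨p', q', hq', e'⟩ := h'
  refine ⟨p * p', q * q', by rw [map_mul]; exact mul_ne_zero hq hq', ?_⟩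
  simp only [map_mul, ← e, ← e']; ring

lemma FracIn.poly (τ : L) (p : Polynomial k) : FracIn k τ (Polynomial.aeval τ p) :=
  ⟨p, 1, by simp, by simp⟩

lemma FracIn.neg {τ w : L} (h : FracIn k τ w) : FracIn k τ (-w) := by
  obtain ⟨p, q, hq, e⟩ := h
  exact ⟨-p, q, hq, by rw [map_neg, ← e]; ring⟩

lemma FracIn.inv {τ w : L} (h : FracIn k τ w) : FracIn k τ w⁻¹ := by
  by_cases hw : w = 0
  · subst hw; simpa using h
  obtain ⟨p, q, hq, e⟩ := h
  refine ⟨q, p, ?_, ?_⟩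
  · rw [← e]; exact mul_ne_zero hq hw
  · rw [← e]; field_simp

lemma FracIn.div {τ w w' : L} (h : FracIn k τ w) (h' : FracIn k τ w') : FracIn k τ (w / w') := by
  rw [div_eq_mul_inv]; exact h.mul h'.inv

/-- image of a subring in `L`, as a `k`-subspace -/
def imS (ι : K →ₐ[k] L) (O : Subring K) (hk : ∀ c : k, algebraMap k K c ∈ O) : Submodule k L where
  carrier := {w | ∃ z ∈ O, ι z = w}
  add_mem' := by
    rintro _ _ ⟨a, ha, rfl⟩ ⟨b, hb, rfl⟩
    exact ⟨a + b, O.add_mem ha hb, map_add _ _ _⟩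
  zero_mem' := ⟨0, O.zero_mem, map_zero _⟩
  smul_mem' := by
    rintro c _ ⟨a, ha, rfl⟩
    refine ⟨algebraMap k K c * a, O.mul_mem (hk c) ha, ?_⟩
    rw [map_mul, AlgHom.commutes, Algebra.smul_def]

lemma mem_imS {ι : K →ₐ[k] L} {O : Subring K} {hk : ∀ c : k, algebraMap k K c ∈ O} {w : L} :
    w ∈ imS ι O hk ↔ ∃ z ∈ O, ι z = w := Iff.rfl

/-- `O·E` -/
noncomputable def VO (ι : K →ₐ[k] L) (E : Subalgebra k L) (O : Subring K)
    (hk : ∀ c : k, algebraMap k K c ∈ O) : Submodule k L :=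
  imS ι O hk * Subalgebra.toSubmodule E

section
variable {ι : K →ₐ[k] L} {E : Subalgebra k L} {O : Subring K}
  {hk : ∀ c : k, algebraMap k K c ∈ O}

lemma imS_le_VO : imS ι O hk ≤ VO ι E O hk := by
  intro w hw
  have := Submodule.mul_mem_mul hw (show (1 : L) ∈ Subalgebra.toSubmodule E from E.one_mem)
  rwa [mul_one] at this

lemma E_le_VO : Subalgebra.toSubmodule E ≤ VO ι E O hk := by
  intro w hw
  have := Submodule.mul_mem_mul (show (1 : L) ∈ imS ι O hk from ⟨1, O.one_mem, map_one _⟩) hw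
  rwa [one_mul] at this

lemma VO_mul {a b : L} (ha : a ∈ VO ι E O hk) (hb : b ∈ VO ι E O hk) : a * b ∈ VO ι E O hk := by
  have h1 : imS ι O hk * imS ι O hk ≤ imS ι O hk := by
    rw [Submodule.mul_le]
    rintro _ ⟨a, ha, rfl⟩ _ ⟨b, hb, rfl⟩
    exact ⟨a * b, O.mul_mem ha hb, map_mul _ _ _⟩
  have h2 : Subalgebra.toSubmodule E * Subalgebra.toSubmodule E ≤ Subalgebra.toSubmodule E := by
    rw [Submodule.mul_le]
    intro a ha b hb
    exact E.mul_mem ha hb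
  have := Submodule.mul_mem_mul ha hb
  have e : VO ι E O hk * VO ι E O hk =
    (imS ι O hk * imS ι O hk) * (Subalgebra.toSubmodule E * Subalgebra.toSubmodule E) := by
    unfold VO; rw [mul_mul_mul_comm]
  rw [e] at this
  exact (mul_le_mul' h1 h2) this

lemma sm_VO_le {a : L} (ha : a ∈ VO ι E O hk) : sm a (VO ι E O hk) ≤ VO ι E O hk := by
  intro z hz
  obtain ⟨b, hb, rfl⟩ := mem_sm.1 hz
  exact VO_mul ha hb

lemma VO_frac {τ : L} (hE : ∀ e ∈ E, FracIn k τ e) (hO : ∀ z ∈ O, FracIn k τ (ι z)) :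
    ∀ w ∈ VO ι E O hk, FracIn k τ w := by
  intro w hw
  induction hw using Submodule.mul_induction_on' with
  | mem_mul_mem m hm n hn =>
    obtain ⟨z, hz, rfl⟩ := hm
    exact (hO z hz).mul (hE n hn)
  | add x _ y _ hx hy => exact hx.add hy

lemma VO_mono {O' : Subring K} {hk' : ∀ c : k, algebraMap k K c ∈ O'} (h : O ≤ O') :
    VO ι E O hk ≤ VO ι E O' hk' := by
  unfold VO
  refine mul_le_mul' ?_ le_rfl
  rintro _ ⟨z, hz, rfl⟩
  exact ⟨z, h hz, rfl⟩

lemma sm_eq_of_mul {x p w w' : L} (hw : w ∈ VO ι E O hk) (hw' : w' ∈ VO ι E O hk)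
    (h : x = p * w) (h' : p = x * w') : sm x (VO ι E O hk) = sm p (VO ι E O hk) := by
  apply le_antisymm
  · rw [h, ← sm_sm]; exact sm_le_sm (sm_VO_le hw)
  · conv_lhs => rw [h', ← sm_sm]
    exact sm_le_sm (sm_VO_le hw')

/-- Key dimension equality. -/
lemma rl_imS_eq {τ y : L} (hE : ∀ e ∈ E, FracIn k τ e) (hτ : τ ∈ E)
    (hO : ∀ z ∈ O, FracIn k τ (ι z)) (hy : y ≠ 0) (hyE : ∀ e ∈ E, y * e ∈ imS ι O hk)
    {x : K} (hx : x ∈ O) (hx0 : x ≠ 0) :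
    rl (imS ι O hk) (sm (ι x) (imS ι O hk)) = rl (VO ι E O hk) (sm (ι x) (VO ι E O hk)) := by
  have hιx : ι x ∈ imS ι O hk := ⟨x, hx, rfl⟩
  have hτV : ∀ w ∈ VO ι E O hk, τ * w ∈ VO ι E O hk := fun w hw => VO_mul (E_le_VO hτ) hw
  refine rl_lattice imS_le_VO (by simpa using hx0) ?_ (sm_VO_le (imS_le_VO hιx)) ?_
  · intro z hz
    obtain ⟨_, ⟨b, hb, rfl⟩, rfl⟩ := mem_sm.1 hz
    exact ⟨x * b, O.mul_mem hx hb, map_mul _ _ _⟩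
  · have hyV : sm y (VO ι E O hk) ≤ imS ι O hk := by
      intro z hz
      obtain ⟨b, hb, rfl⟩ := mem_sm.1 hz
      clear hz
      induction hb using Submodule.mul_induction_on' with
      | mem_mul_mem m hm n hn =>
        obtain ⟨z, hz, rfl⟩ := hm
        obtain ⟨z', hz', e⟩ := hyE n hn
        exact ⟨z * z', O.mul_mem hz hz', by rw [map_mul, e]; ring⟩
      | add x _ y _ hx hy => rw [mul_add]; exact Submodule.add_mem _ hx hy
    obtain ⟨z, hz, e⟩ := hyE 1 E.one_mem
    obtain ⟨p, q, hq, hpq⟩ := hO z hz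
    rw [e, mul_one] at hpq
    have hp : p ≠ 0 := by
      rintro rfl
      rw [map_zero] at hpq
      exact mul_ne_zero hq hy hpq
    have hqV : Polynomial.aeval τ q ∈ VO ι E O hk := by
      apply E_le_VO
      have : Polynomial.aeval τ q ∈ Algebra.adjoin k {τ} := Polynomial.aeval_mem_adjoin_singleton k τ
      exact (Algebra.adjoin_le (by simpa using hτ)) this
    have h1 : sm (Polynomial.aeval τ p) (VO ι E O hk) ≤ sm y (VO ι E O hk) := by
      rw [← hpq, mul_comm, ← sm_sm]
      exact sm_le_sm (sm_VO_le hqV)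
    have h2 := rl_KA (VO ι E O hk) τ hτV (VO_frac hE hO) p hp
    have h3 := (rl_anti imS_le_VO (h1.trans hyV)).trans h2
    exact ne_top_of_le_ne_top (ENat.natCast_ne_top _) h3

end

/-- The `k`-algebra structure on a subring containing `k`. -/
@[reducible] def algOf (O : Subring K) (hk : ∀ c : k, algebraMap k K c ∈ O) : Algebra k O :=
  ((algebraMap k K).codRestrict O hk).toAlgebra

/-- inclusion as algebra hom -/
def jOf (ι : K →ₐ[k] L) (O : Subring K) (hk : ∀ c : k, algebraMap k K c ∈ O) :
    letI := algOf O hk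
    O →ₐ[k] L :=
  letI := algOf O hk
  { (ι : K →+* L).comp O.subtype with
    commutes' := fun c => ι.commutes c }

lemma length_O_eq (ι : K →ₐ[k] L) (O : Subring K) (hk : ∀ c : k, algebraMap k K c ∈ O) (x : O) :
    letI := algOf O hk
    Module.length k (O ⧸ Ideal.span {x}) = rl (imS ι O hk) (sm (ι x) (imS ι O hk)) := by
  letI := algOf O hk
  have := length_quot_eq_rl (jOf ι O hk) (ι.injective.comp Subtype.val_injective) x
  rw [this]
  have h : LinearMap.range (jOf ι O hk).toLinearMap = imS ι O hk := by
    ext w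
    constructor
    · rintro ⟨z, rfl⟩; exact ⟨z, z.2, rfl⟩
    · rintro ⟨z, hz, rfl⟩; exact ⟨⟨z, hz⟩, rfl⟩
  rw [h]; rfl

/-- `z` is a nonunit element of `O` -/
def NU (O : Subring K) (z : K) : Prop := ∃ h : z ∈ O, ¬ IsUnit (⟨z, h⟩ : O)

lemma nuIdeal_fg (O : Subring K) (hk : ∀ c : k, algebraMap k K c ∈ O) (ι : K →ₐ[k] L)
    {x : K} (hx : NU O x)
    (hfin : rl (imS ι O hk) (sm (ι x) (imS ι O hk)) ≠ ⊤) : (nuIdeal O).FG := by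
  letI := algOf O hk
  obtain ⟨hxO, hxu⟩ := hx
  have h1 := length_O_eq ι O hk ⟨x, hxO⟩
  have h2 : Module.length O (O ⧸ Ideal.span {(⟨x, hxO⟩ : O)}) ≠ ⊤ :=
    ne_top_of_le_ne_top hfin (h1 ▸ length_le_k (k := k))
  rw [Module.length_ne_top_iff, isFiniteLength_iff_isNoetherian_isArtinian] at h2
  have := h2.1
  refine Submodule.fg_of_fg_map_of_fg_inf_ker (Submodule.mkQ (Ideal.span {(⟨x, hxO⟩ : O)}))
    (IsNoetherian.noetherian _) ?_
  rw [Submodule.ker_mkQ, inf_eq_right.2]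
  · exact ⟨{⟨x, hxO⟩}, by simp [Ideal.span]⟩
  · rw [Ideal.span_singleton_le_iff_mem]
    exact Ideal.subset_span hxu

/-- fixed setup -/
structure Setup (ι : K →ₐ[k] L) (E : Subalgebra k L) (O₀ : Subring K) (τ y : L) (x₀ : K)
    (h : Polynomial k) : Prop where
  hk : ∀ c : k, algebraMap k K c ∈ O₀
  hE : ∀ e ∈ E, FracIn k τ e
  hτ : τ ∈ E
  hO : ∀ z ∈ O₀, FracIn k τ (ι z)
  hloc : IsLocalRing O₀
  hy : y ≠ 0
  hyE : ∀ e ∈ E, y * e ∈ imS ι O₀ hk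
  hx : NU O₀ x₀
  hx0 : x₀ ≠ 0
  hh : h ≠ 0
  hxh : ∃ w ∈ VO ι E O₀ hk, ι x₀ = Polynomial.aeval τ h * w
  hhx : ∃ w ∈ VO ι E O₀ hk, Polynomial.aeval τ h = ι x₀ * w

/-- invariants -/
structure ChainInv (ι : K →ₐ[k] L) (O₀ : Subring K) (τ : L) (x₀ : K) (O : Subring K) : Prop where
  le : O₀ ≤ O
  hO : ∀ z ∈ O, FracIn k τ (ι z)
  hloc : IsLocalRing O
  hx : NU O x₀

variable {ι : K →ₐ[k] L} {E : Subalgebra k L} {O₀ : Subring K} {τ y : L} {x₀ : K}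
  {h : Polynomial k}

lemma Setup.inv (S : Setup ι E O₀ τ y x₀ h) : ChainInv ι O₀ τ x₀ O₀ :=
  ⟨le_rfl, S.hO, S.hloc, S.hx⟩

/-- the dimension equality for rings in the chain -/
lemma ChainInv.rl_eq (S : Setup ι E O₀ τ y x₀ h) {O : Subring K} (I : ChainInv ι O₀ τ x₀ O)
    (hk : ∀ c : k, algebraMap k K c ∈ O) {x : K} (hx : x ∈ O) (hx0 : x ≠ 0) :
    rl (imS ι O hk) (sm (ι x) (imS ι O hk)) = rl (VO ι E O hk) (sm (ι x) (VO ι E O hk)) := by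
  refine rl_imS_eq S.hE S.hτ I.hO S.hy ?_ hx hx0
  intro e he
  obtain ⟨z, hz, e⟩ := S.hyE e he
  exact ⟨z, I.le hz, e⟩

lemma ChainInv.rl_le (S : Setup ι E O₀ τ y x₀ h) {O : Subring K} (I : ChainInv ι O₀ τ x₀ O)
    (hk : ∀ c : k, algebraMap k K c ∈ O) {x : K} (hx : x ∈ O) (hx0 : x ≠ 0) {P : Polynomial k}
    (hP : P ≠ 0) {w w' : L} (hw : w ∈ VO ι E O₀ S.hk) (hw' : w' ∈ VO ι E O₀ S.hk)
    (e : ι x = Polynomial.aeval τ P * w) (e' : Polynomial.aeval τ P = ι x * w') :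
    rl (imS ι O hk) (sm (ι x) (imS ι O hk)) ≤ P.natDegree := by
  rw [I.rl_eq S hk hx hx0, sm_eq_of_mul (VO_mono I.le hw) (VO_mono I.le hw') e e']
  exact rl_KA _ τ (fun w hw => VO_mul (E_le_VO S.hτ) hw) (VO_frac S.hE I.hO) P hP

lemma ChainInv.fg (S : Setup ι E O₀ τ y x₀ h) {O : Subring K} (I : ChainInv ι O₀ τ x₀ O) :
    (nuIdeal O).FG := by
  obtain ⟨w, hw, e⟩ := S.hxh
  obtain ⟨w', hw', e'⟩ := S.hhx
  refine nuIdeal_fg O (fun c => I.le (S.hk c)) ι I.hx ?_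
  exact ne_top_of_le_ne_top (ENat.natCast_ne_top _)
    (I.rl_le S _ I.hx.1 S.hx0 S.hh hw hw' e e')

lemma ChainInv.f_ne (S : Setup ι E O₀ τ y x₀ h) {O : Subring K} (I : ChainInv ι O₀ τ x₀ O) {f : O} {r : ℕ}
    (hred : nuIdeal O ^ (r + 1) = Ideal.span {f} * nuIdeal O ^ r) : f ≠ 0 := by
  rintro rfl
  obtain ⟨hx, hu⟩ := I.hx
  have h1 : (⟨x₀, hx⟩ : O) ^ (r + 1) ∈ nuIdeal O ^ (r + 1) :=
    Ideal.pow_mem_pow (Ideal.subset_span hu) _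
  rw [hred, Ideal.span_singleton_zero, Ideal.bot_mul, Ideal.mem_bot] at h1
  have h2 := pow_eq_zero_iff (by omega) |>.1 h1
  exact S.hx0 (congrArg Subtype.val h2)

lemma ChainInv.integral (S : Setup ι E O₀ τ y x₀ h) {O : Subring K} (I : ChainInv ι O₀ τ x₀ O) {f : O}
    (hf : ¬ IsUnit f) {r : ℕ} (hred : nuIdeal O ^ (r + 1) = Ideal.span {f} * nuIdeal O ^ r) :
    ∀ b ∈ blowRing O f, IsIntegral O b := by
  have := I.hloc
  exact blow_integral O (I.fg S) f hf (I.f_ne S hred) r hred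

lemma NU_loc (B : Subring K) (N : Ideal B) [hN : N.IsPrime] (x : B) (hx : x ∈ N) :
    NU (Subring.closure (locSet B N)) x := by
  refine ⟨le_closure_locSet B N x.2, ?_⟩
  rw [loc_unit_iff B N _ x 1 ((Ideal.ne_top_iff_one N).1 hN.ne_top) (by simp), not_not]
  exact hx

lemma ChainInv.step (S : Setup ι E O₀ τ y x₀ h) {O O₁ : Subring K} (I : ChainInv ι O₀ τ x₀ O)
    (hO₁ : IsFirstNbhdOf O O₁) : ChainInv ι O₀ τ x₀ O₁ ∧ O ≤ O₁ ∧ ∀ z, NU O z → NU O₁ z := by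
  have := I.hloc
  obtain ⟨f, hf, ⟨r, hred⟩, N, hN, rfl⟩ := hO₁
  have hNp := hN.isPrime
  have hinteg := I.integral S hf hred
  have hle : O ≤ Subring.closure (locSet (blowRing O f) N) :=
    (le_blowRing O f).trans (le_closure_locSet _ N)
  have hf0 := I.f_ne S hred
  have hnu : ∀ z, NU O z → NU (Subring.closure (locSet (blowRing O f) N)) z := by
    rintro z ⟨hz, hzu⟩
    exact NU_loc _ N _ (blow_lies_over O f hinteg N hN ⟨z, hz⟩ hzu)
  have hB : ∀ z ∈ blowRing O f, FracIn k τ (ι z) := by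
    intro z hz
    induction hz using Subring.closure_induction with
    | mem x hx =>
      rcases hx with hx | ⟨m, hm, hfx⟩
      · exact I.hO x hx
      · have hf0' : (f : K) ≠ 0 := by simpa using hf0
        have : x = m / f := by rw [← hfx]; field_simp
        rw [this, map_div₀]
        exact (I.hO _ m.2).div (I.hO _ f.2)
    | zero => exact I.hO _ O.zero_mem
    | one => exact I.hO _ O.one_mem
    | add x y _ _ hx hy => rw [map_add]; exact hx.add hy
    | neg x _ hx => rw [map_neg]; exact hx.neg
    | mul x y _ _ hx hy => rw [map_mul]; exact hx.mul hy
  refine ⟨⟨I.le.trans hle, ?_, loc_isLocal _ N, hnu _ I.hx⟩, hle, hnu⟩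
  intro z hz
  obtain ⟨a, s, hs, e⟩ := (mem_closure_locSet _ N z).1 hz
  have hs0 : (s : K) ≠ 0 := by
    intro h0
    apply hs
    have : s = 0 := by ext; simpa using h0
    rw [this]; exact N.zero_mem
  have : z = a / s := by rw [← e]; field_simp
  rw [this, map_div₀]
  exact (hB _ a.2).div (hB _ s.2)

lemma ChainInv.chain (S : Setup ι E O₀ τ y x₀ h) {O O' : Subring K} (I : ChainInv ι O₀ τ x₀ O)
    (hO' : Relation.ReflTransGen IsFirstNbhdOf O O') :
    ChainInv ι O₀ τ x₀ O' ∧ O ≤ O' ∧ ∀ z, NU O z → NU O' z := by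
  induction hO' with
  | refl => exact ⟨I, le_rfl, fun _ h => h⟩
  | tail _ hs ih =>
    obtain ⟨I1, l1, n1⟩ := ih
    obtain ⟨I2, l2, n2⟩ := I1.step S hs
    exact ⟨I2, l1.trans l2, fun z hz => n2 z (n1 z hz)⟩

/-- bound of the multiplicity of rings in the chain -/
lemma ChainInv.mult_le (S : Setup ι E O₀ τ y x₀ h) {O : Subring K} (I : ChainInv ι O₀ τ x₀ O)
    {c : ℕ} (hc : IsHSMultOfDimOne O (nuIdeal O) c)
    {x : K} (hx : NU O x) (hx0 : x ≠ 0) {P : Polynomial k}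
    (hP : P ≠ 0) {w w' : L} (hw : w ∈ VO ι E O₀ S.hk) (hw' : w' ∈ VO ι E O₀ S.hk)
    (e : ι x = Polynomial.aeval τ P * w) (e' : Polynomial.aeval τ P = ι x * w') :
    c ≤ P.natDegree := by
  have hk : ∀ c : k, algebraMap k K c ∈ O := fun c => I.le (S.hk c)
  letI := algOf O hk
  refine HS_upper (k := k) hc (x := ⟨x, hx.1⟩) (Ideal.subset_span hx.2) ?_ ?_
  · intro h0; exact hx0 (congrArg Subtype.val h0)
  · rw [length_O_eq ι O hk]
    exact I.rl_le S hk hx.1 hx0 hP hw hw' e e'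

lemma Setup.mult_O (S : Setup ι E O₀ τ y x₀ h)
    (hres : ∀ z ∈ O₀, ∃ c : k, NU O₀ (z - algebraMap k K c))
    {r : ℕ} (hred : nuIdeal O₀ ^ (r + 1) = Ideal.span {(⟨x₀, S.hx.1⟩ : O₀)} * nuIdeal O₀ ^ r)
    (hlow : (h.natDegree : ℕ∞) ≤ rl (VO ι E O₀ S.hk)
      (sm (Polynomial.aeval τ h) (VO ι E O₀ S.hk))) :
    IsHSMultOfDimOne O₀ (nuIdeal O₀) h.natDegree := by
  have := S.hloc
  obtain ⟨w, hw, e⟩ := S.hxh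
  obtain ⟨w', hw', e'⟩ := S.hhx
  letI := algOf O₀ S.hk
  have hlen : Module.length k (O₀ ⧸ Ideal.span {(⟨x₀, S.hx.1⟩ : O₀)}) = h.natDegree := by
    rw [length_O_eq ι O₀ S.hk]
    apply le_antisymm
    · exact S.inv.rl_le S S.hk S.hx.1 S.hx0 S.hh hw hw' e e'
    · rw [S.inv.rl_eq S S.hk S.hx.1 S.hx0, sm_eq_of_mul hw hw' e e']
      exact hlow
  have hfin : IsFiniteLength O₀ (O₀ ⧸ Ideal.span {(⟨x₀, S.hx.1⟩ : O₀)}) := by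
    rw [← Module.length_ne_top_iff]
    exact ne_top_of_le_ne_top (hlen ▸ ENat.natCast_ne_top _) (length_le_k (k := k))
  refine HS_of_reduction (f := ⟨x₀, S.hx.1⟩) (Ideal.subset_span S.hx.2) ?_ hred ?_
  · intro h0; exact S.hx0 (congrArg Subtype.val h0)
  · rw [Ring.ord, ← length_eq_of_residue (k := k) ?_ hfin, hlen]
    intro z
    obtain ⟨c, hc, hc'⟩ := hres z z.2
    exact ⟨c, hc'⟩

/-- residues in the blow-up -/
lemma Setup.residue [IsAlgClosed k] (S : Setup ι E O₀ τ y x₀ h)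
    (hres : ∀ z ∈ O₀, ∃ c : k, NU O₀ (z - algebraMap k K c))
    {f : O₀} (hinteg : ∀ b ∈ blowRing O₀ f, IsIntegral O₀ b)
    (N : Ideal (blowRing O₀ f)) (hN : N.IsMaximal) (b : blowRing O₀ f) :
    ∃ c : k, b - ⟨algebraMap k K c, le_blowRing O₀ f (S.hk c)⟩ ∈ N := by
  have := S.hloc
  have hNp := hN.isPrime
  letI := algOf (blowRing O₀ f) (fun c => le_blowRing O₀ f (S.hk c))
  let i : O₀ →+* blowRing O₀ f := Subring.inclusion (le_blowRing O₀ f)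
  letI : Field (blowRing O₀ f ⧸ N) := Ideal.Quotient.field N
  let π : O₀ →+* (blowRing O₀ f ⧸ N) := (Ideal.Quotient.mk N).comp i
  choose c hc using hres
  have hπ : ∀ z : O₀, π z = algebraMap k (blowRing O₀ f ⧸ N) (c z z.2) := by
    intro z
    have h1 := hc z z.2
    have h2 := blow_lies_over O₀ f hinteg N hN ⟨_, h1.1⟩ h1.2
    rw [← sub_eq_zero]
    have : π z - algebraMap k (blowRing O₀ f ⧸ N) (c z z.2) =
      Ideal.Quotient.mk N ⟨_, le_blowRing O₀ f h1.1⟩ := by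
      rw [show algebraMap k (blowRing O₀ f ⧸ N) (c z z.2) =
        Ideal.Quotient.mk N (algebraMap k (blowRing O₀ f) (c z z.2)) from rfl]
      simp only [π, RingHom.comp_apply]
      rw [← map_sub]
      rfl
    rw [this]
    exact Ideal.Quotient.eq_zero_iff_mem.2 h2
  have hb : IsIntegral k (Ideal.Quotient.mk N b) := by
    obtain ⟨p, hp, hpb⟩ := hinteg b b.2
    have h1 : Polynomial.eval₂ i b p = 0 := by
      apply (blowRing O₀ f).subtype_injective
      rw [map_zero, Polynomial.hom_eval₂]
      exact hpb
    have h2 : Polynomial.eval₂ π (Ideal.Quotient.mk N b) p = 0 := by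
      rw [← Polynomial.hom_eval₂, h1, map_zero]
    have h3 : (p.map π) ∈ Polynomial.lifts (algebraMap k (blowRing O₀ f ⧸ N)) := by
      rw [Polynomial.lifts_iff_coeff_lifts]
      intro n
      rw [Polynomial.coeff_map, hπ]
      exact ⟨_, rfl⟩
    obtain ⟨q, hq, _, hqm⟩ := Polynomial.lifts_and_degree_eq_and_monic h3 (hp.map π)
    refine ⟨q, hqm, ?_⟩
    rw [← Polynomial.eval_map, hq, Polynomial.eval_map, h2]
  have : Algebra.IsIntegral k (Algebra.adjoin k {Ideal.Quotient.mk N b}) := Algebra.IsIntegral.adjoin (by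
    rintro _ rfl; exact hb)
  obtain ⟨c, hc⟩ := (IsAlgClosed.algebraMap_bijective_of_isIntegral (k := k)
    (K := Algebra.adjoin k {Ideal.Quotient.mk N b})).2
      ⟨Ideal.Quotient.mk N b, Algebra.subset_adjoin rfl⟩
  refine ⟨c, ?_⟩
  rw [← Ideal.Quotient.eq_zero_iff_mem, map_sub, sub_eq_zero]
  exact (congrArg Subtype.val hc).symm

end Chain


section Forms
variable {k : Type*} [Field k]

lemma hom_scale {σ B : Type*} [CommRing B] [Algebra k B] {F : MvPolynomial σ k} {e : ℕ}
    (hF : F.IsHomogeneous e) (c : B) (v : σ → B) :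
    aeval (fun i => c * v i) F = c ^ e * aeval v F := by
  rw [aeval_def, aeval_def, eval₂_eq, eval₂_eq, Finset.mul_sum]
  refine Finset.sum_congr rfl fun s hs => ?_
  have h1 : ∑ i ∈ s.support, s i = e := by
    rw [hF.degree_eq_sum_deg_support hs]
  simp only [mul_pow, Finset.prod_mul_distrib, Finset.prod_pow_eq_pow_sum, h1]
  ring

lemma hom_scale_eval {σ : Type*} {F : MvPolynomial σ k} {e : ℕ}
    (hF : F.IsHomogeneous e) (c : k) (v : σ → k) :
    eval (fun i => c * v i) F = c ^ e * eval v F := by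
  have := hom_scale hF c v
  simpa [aeval_eq_eval] using this

lemma comp_mul {σ : Type*} {F : MvPolynomial σ k} {d : ℕ} (hF : F.IsHomogeneous d)
    (e : ℕ) (P : MvPolynomial σ k) :
    homogeneousComponent (d + e) (F * P) = F * homogeneousComponent e P := by
  conv_lhs => rw [← sum_homogeneousComponent P]
  rw [Finset.mul_sum, map_sum]
  have : ∀ i ∈ Finset.range (P.totalDegree + 1), homogeneousComponent (d + e)
      (F * homogeneousComponent i P) = if i = e then F * homogeneousComponent i P else 0 := by
    intro i _
    rw [homogeneousComponent_of_mem (hF.mul (homogeneousComponent_isHomogeneous i P))]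
    simp [eq_comm]
  rw [Finset.sum_congr rfl this, Finset.sum_ite_eq']
  split_ifs with h
  · rfl
  · rw [homogeneousComponent_eq_zero, mul_zero]
    simpa using h

lemma comp_mul_lt {σ : Type*} {F : MvPolynomial σ k} {d : ℕ} (hF : F.IsHomogeneous d)
    (e : ℕ) (he : e < d) (P : MvPolynomial σ k) :
    homogeneousComponent e (F * P) = 0 := by
  conv_lhs => rw [← sum_homogeneousComponent P]
  rw [Finset.mul_sum, map_sum]
  refine Finset.sum_eq_zero fun i _ => ?_
  rw [homogeneousComponent_of_mem (hF.mul (homogeneousComponent_isHomogeneous i P)), if_neg]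
  omega

/-- the affine chart -/
noncomputable def th (r r' : Fin 2 → k) : MvPolynomial (Fin 2) k →ₐ[k] Polynomial k :=
  aeval fun i => Polynomial.C (r' i) + Polynomial.X * Polynomial.C (r i)

noncomputable def l1 (r' : Fin 2 → k) : MvPolynomial (Fin 2) k := C (r' 1) * X 0 - C (r' 0) * X 1
noncomputable def l2 (r : Fin 2 → k) : MvPolynomial (Fin 2) k := C (r 0) * X 1 - C (r 1) * X 0

lemma l1_hom (r : Fin 2 → k) : (l1 r).IsHomogeneous 1 :=
  (isHomogeneous_C_mul_X _ _).sub (isHomogeneous_C_mul_X _ _)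
lemma l2_hom (r : Fin 2 → k) : (l2 r).IsHomogeneous 1 :=
  (isHomogeneous_C_mul_X _ _).sub (isHomogeneous_C_mul_X _ _)

lemma th_eval (r r' : Fin 2 → k) (t : k) (F : MvPolynomial (Fin 2) k) :
    (th r r' F).eval t = eval (fun i => r' i + t * r i) F := by
  have : (Polynomial.aeval t).comp (th r r') = aeval (fun i => r' i + t * r i) := by
    ext i; simp [th]; ring
  have h := DFunLike.congr_fun this F
  simpa [aeval_eq_eval] using h

lemma th_deg (r r' : Fin 2 → k) {F : MvPolynomial (Fin 2) k} {e : ℕ} (hF : F.IsHomogeneous e) :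
    (th r r' F).natDegree ≤ e ∧ (th r r' F).coeff e = eval r F := by
  have hlin : ∀ i, (Polynomial.C (r' i) + Polynomial.X * Polynomial.C (r i)).natDegree ≤ 1 := by
    intro i
    compute_degree
  have hs : ∀ s ∈ F.support, (∏ i : Fin 2, (Polynomial.C (r' i) +
      Polynomial.X * Polynomial.C (r i)) ^ s i).natDegree ≤ e ∧
      (∏ i : Fin 2, (Polynomial.C (r' i) +
      Polynomial.X * Polynomial.C (r i)) ^ s i).coeff e = ∏ i : Fin 2, r i ^ s i := by
    intro s hs
    have h1 : e = s 0 + s 1 := by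
      rw [hF.degree_eq_sum_deg_support hs, Finset.sum_subset (Finset.subset_univ _)]
      · simp
      · intro i _ hi; simpa using hi
    have h2 : ∀ i, ((Polynomial.C (r' i) +
      Polynomial.X * Polynomial.C (r i)) ^ s i).natDegree ≤ s i := fun i => by
        have := Polynomial.natDegree_pow_le_of_le (s i) (hlin i)
        simpa using this
    have h3 : ∀ i, ((Polynomial.C (r' i) +
      Polynomial.X * Polynomial.C (r i)) ^ s i).coeff (s i) = r i ^ s i := fun i => by
        have := Polynomial.coeff_pow_of_natDegree_le (m := s i) (hlin i)
        rw [mul_one] at this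
        rw [this]; simp [Polynomial.coeff_C]
    rw [Fin.prod_univ_two, Fin.prod_univ_two, h1]
    refine ⟨Polynomial.natDegree_mul_le_of_le (h2 0) (h2 1), ?_⟩
    rw [Polynomial.coeff_mul_add_eq_of_natDegree_le (h2 0) (h2 1), h3, h3]
  have he : th r r' F = ∑ s ∈ F.support, Polynomial.C (coeff s F) * (∏ i : Fin 2, (Polynomial.C (r' i) +
      Polynomial.X * Polynomial.C (r i)) ^ s i) := by
    rw [th, aeval_def, eval₂_eq']
    rfl
  rw [he]
  constructor
  · refine Polynomial.natDegree_sum_le_of_forall_le _ _ fun s hs' => ?_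
    exact (Polynomial.natDegree_C_mul_le _ _).trans (hs s hs').1
  · rw [Polynomial.finsetSum_coeff, eval_eq']
    refine Finset.sum_congr rfl fun s hs' => ?_
    rw [Polynomial.coeff_C_mul, (hs s hs').2]


lemma X_eq {r r' : Fin 2 → k} (hdet : r 0 * r' 1 - r 1 * r' 0 = 1) (i : Fin 2) :
    (X i : MvPolynomial (Fin 2) k) = l2 r * C (r' i) + l1 r' * C (r i) := by
  have h := congrArg (C : k → MvPolynomial (Fin 2) k) hdet
  simp only [map_sub, map_mul, map_one] at h
  fin_cases i
  · simp only [l1, l2, Fin.zero_eta]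
    linear_combination (-X 0) * h
  · simp only [l1, l2, Fin.mk_one]
    linear_combination (-X 1) * h

lemma th_l1 {r r' : Fin 2 → k} (hdet : r 0 * r' 1 - r 1 * r' 0 = 1) :
    th r r' (l1 r') = Polynomial.X := by
  have h := congrArg (Polynomial.C : k → Polynomial k) hdet
  simp only [map_sub, map_mul, map_one] at h
  simp only [th, l1, map_sub, map_mul, algHom_C, aeval_X, Polynomial.algebraMap_eq]
  linear_combination Polynomial.X * h

lemma th_l2 {r r' : Fin 2 → k} (hdet : r 0 * r' 1 - r 1 * r' 0 = 1) :
    th r r' (l2 r) = 1 := by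
  have h := congrArg (Polynomial.C : k → Polynomial k) hdet
  simp only [map_sub, map_mul, map_one] at h
  simp only [th, l2, map_sub, map_mul, algHom_C, aeval_X, Polynomial.algebraMap_eq]
  linear_combination h

lemma l2_ne {r r' : Fin 2 → k} (hdet : r 0 * r' 1 - r 1 * r' 0 = 1) : l2 r ≠ 0 := by
  intro h0
  have := th_l2 hdet
  rw [h0, map_zero] at this
  exact zero_ne_one this

/-- key identity -/
lemma key_id {L : Type*} [Field L] [Algebra k L] [Algebra (MvPolynomial (Fin 2) k) L]
    [IsScalarTower k (MvPolynomial (Fin 2) k) L]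
    (hinj : Function.Injective (algebraMap (MvPolynomial (Fin 2) k) L))
    {r r' : Fin 2 → k} (hdet : r 0 * r' 1 - r 1 * r' 0 = 1)
    {F : MvPolynomial (Fin 2) k} {e : ℕ} (hF : F.IsHomogeneous e) :
    algebraMap _ L F = algebraMap _ L (l2 r) ^ e *
      Polynomial.aeval (algebraMap _ L (l1 r') / algebraMap _ L (l2 r)) (th r r' F) := by
  have h0 : algebraMap _ L (l2 r) ≠ 0 := by
    rw [Ne, map_eq_zero_iff _ hinj]; exact l2_ne hdet
  set τ := algebraMap _ L (l1 r') / algebraMap _ L (l2 r) with hτ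
  have h1 : (Polynomial.aeval τ).comp (th r r') =
      aeval (fun i => algebraMap k L (r' i) + τ * algebraMap k L (r i)) := by
    ext i; simp [th]; ring
  have h2 := DFunLike.congr_fun h1 F
  rw [AlgHom.comp_apply] at h2
  rw [h2, ← hom_scale hF]
  have h3 : (IsScalarTower.toAlgHom k (MvPolynomial (Fin 2) k) L) =
      aeval (fun i => algebraMap _ L (l2 r) * (algebraMap k L (r' i) + τ * algebraMap k L (r i))) := by
    ext i
    simp only [IsScalarTower.coe_toAlgHom', aeval_X]
    rw [X_eq hdet i, hτ]
    have : ∀ c : k, algebraMap (MvPolynomial (Fin 2) k) L (C c) = algebraMap k L c := by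
      intro c
      rw [IsScalarTower.algebraMap_apply k (MvPolynomial (Fin 2) k) L]; rfl
    simp only [map_add, map_mul, this]
    field_simp
  exact DFunLike.congr_fun h3 F

lemma th_inj {r r' : Fin 2 → k} (hdet : r 0 * r' 1 - r 1 * r' 0 = 1)
    {F : MvPolynomial (Fin 2) k} {e : ℕ} (hF : F.IsHomogeneous e) (h : th r r' F = 0) : F = 0 := by
  have hinj := IsFractionRing.injective (MvPolynomial (Fin 2) k)
    (FractionRing (MvPolynomial (Fin 2) k))
  have := key_id (L := FractionRing (MvPolynomial (Fin 2) k)) hinj hdet hF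
  rw [h, map_zero, mul_zero] at this
  exact (map_eq_zero_iff _ hinj).1 this

/-- homogenization -/
noncomputable def homog (r r' : Fin 2 → k) (p : Polynomial k) (e : ℕ) : MvPolynomial (Fin 2) k :=
  ∑ i ∈ Finset.range (e + 1), C (p.coeff i) * (l1 r' ^ i * l2 r ^ (e - i))

lemma homog_hom (r r' : Fin 2 → k) (p : Polynomial k) (e : ℕ) :
    (homog r r' p e).IsHomogeneous e := by
  refine IsHomogeneous.sum _ _ _ fun i hi => ?_
  have h := (((l1_hom r').pow i).mul ((l2_hom r).pow (e - i))).C_mul (p.coeff i)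
  have : 1 * i + 1 * (e - i) = e := by
    have := Finset.mem_range.1 hi; omega
  rwa [this] at h

lemma th_homog {r r' : Fin 2 → k} (hdet : r 0 * r' 1 - r 1 * r' 0 = 1) {p : Polynomial k} {e : ℕ}
    (hp : p.natDegree ≤ e) : th r r' (homog r r' p e) = p := by
  rw [homog, map_sum]
  conv_rhs => rw [p.as_sum_range' (e + 1) (by omega)]
  refine Finset.sum_congr rfl fun i _ => ?_
  simp only [map_mul, map_pow, th_l1 hdet, th_l2 hdet, algHom_C, Polynomial.algebraMap_eq]
  rw [one_pow, mul_one, Polynomial.C_mul_X_pow_eq_monomial]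

/-- points of the projective line -/
lemma eval_pt {r r' : Fin 2 → k} (hdet : r 0 * r' 1 - r 1 * r' 0 = 1) {z : Fin 2 → k} (hz : z ≠ 0) :
    (∃ t c : k, c ≠ 0 ∧ ∀ (e : ℕ) (F : MvPolynomial (Fin 2) k), F.IsHomogeneous e →
      eval z F = c ^ e * (th r r' F).eval t) ∨
    (∃ c : k, c ≠ 0 ∧ ∀ (e : ℕ) (F : MvPolynomial (Fin 2) k), F.IsHomogeneous e →
      eval z F = c ^ e * eval r F) := by
  set b := r 0 * z 1 - r 1 * z 0 with hb
  set a := r' 1 * z 0 - r' 0 * z 1 with ha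
  have hz' : ∀ i, z i = b * r' i + a * r i := by
    intro i
    fin_cases i
    · simp only [Fin.zero_eta, ha, hb]; linear_combination (- z 0) * hdet
    · simp only [Fin.mk_one, ha, hb]; linear_combination (- z 1) * hdet
  by_cases hb0 : b = 0
  · right
    refine ⟨a, ?_, fun e F hF => ?_⟩
    · intro ha0
      apply hz
      ext i
      rw [hz' i, hb0, ha0]; simp
    · rw [← hom_scale_eval hF]
      congr 2
      ext i
      rw [hz' i, hb0]; simp
  · left
    refine ⟨a / b, b, hb0, fun e F hF => ?_⟩
    rw [th_eval, ← hom_scale_eval hF]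
    congr 2
    ext i
    rw [hz' i]; field_simp

lemma exists_zero [IsAlgClosed k] {F : MvPolynomial (Fin 2) k} {e : ℕ} (hF : F.IsHomogeneous e)
    (he : e ≠ 0) : ∃ z : Fin 2 → k, z ≠ 0 ∧ eval z F = 0 := by
  obtain ⟨h1, h2⟩ := th_deg ![0, 1] ![1, 0] hF
  by_cases hd : (th ![0, 1] ![1, 0] F).degree = 0
  · refine ⟨![0, 1], fun h => by simpa using congrFun h 1, ?_⟩
    rw [← h2]
    apply Polynomial.coeff_eq_zero_of_natDegree_lt
    have := Polynomial.natDegree_eq_of_degree_eq_some (n := 0) hd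
    omega
  · obtain ⟨t, ht⟩ := IsAlgClosed.exists_root _ hd
    refine ⟨fun i => (![1, 0] : Fin 2 → k) i + t * (![0, 1] : Fin 2 → k) i, ?_, ?_⟩
    · intro h
      simpa using congrFun h 0
    · rw [← th_eval]; exact ht

lemma exists_compl {r : Fin 2 → k} (hr : r ≠ 0) :
    ∃ r' : Fin 2 → k, r 0 * r' 1 - r 1 * r' 0 = 1 := by
  by_cases h : r 0 = 0
  · have h1 : r 1 ≠ 0 := by
      intro h1; apply hr; ext i; fin_cases i <;> simp [h, h1]
    exact ⟨![-(r 1)⁻¹, 0], by simp [h1]⟩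
  · exact ⟨![0, (r 0)⁻¹], by simp [h]⟩

end Forms


section Cone
variable {k : Type*} [Field k]

lemma no_common_zero {d : ℕ} (g : Fin 3 → MvPolynomial (Fin 2) k) (hd : d ≠ 0)
    (hg : ∀ i, (g i).IsHomogeneous d)
    (hht : idealHeight (Ideal.span (Set.range g)) = 2) {z : Fin 2 → k} (hz : z ≠ 0) :
    ∃ i, eval z (g i) ≠ 0 := by
  by_contra hcon
  push Not at hcon
  let ψ : MvPolynomial (Fin 2) k →ₐ[k] Polynomial k :=
    aeval fun i => Polynomial.X * Polynomial.C (z i)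
  let ε : MvPolynomial (Fin 2) k →ₐ[k] k := aeval fun _ => 0
  let P : PrimeSpectrum (MvPolynomial (Fin 2) k) := ⟨RingHom.ker ψ, RingHom.ker_isPrime _⟩
  let M : PrimeSpectrum (MvPolynomial (Fin 2) k) := ⟨RingHom.ker ε, RingHom.ker_isPrime _⟩
  have hP : Ideal.span (Set.range g) ≤ P.asIdeal := by
    rw [Ideal.span_le]
    rintro _ ⟨i, rfl⟩
    change ψ (g i) = 0
    simp only [ψ]
    rw [hom_scale (hg i)]
    have : aeval (fun i => Polynomial.C (z i)) (g i) = Polynomial.C (eval z (g i)) := by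
      have h1 : (aeval (fun i => Polynomial.C (z i)) : MvPolynomial (Fin 2) k →ₐ[k] _) =
        (Polynomial.CAlgHom).comp (aeval z) := by
        ext i; simp
      rw [h1]; simp [aeval_eq_eval]
    rw [this, hcon i]; simp
  have hε : ∀ f, ε f = (ψ f).eval 0 := by
    intro f
    have h1 : ε = (Polynomial.aeval (0 : k)).comp ψ := by
      ext i; simp [ε, ψ]
    rw [h1]; simp [Polynomial.coe_aeval_eq_eval]
  have hPM : P < M := by
    obtain ⟨i, hi⟩ := Function.ne_iff.1 hz
    rw [← PrimeSpectrum.asIdeal_lt_asIdeal]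
    refine lt_of_le_of_ne ?_ ?_
    · intro f hf
      change ε f = 0
      rw [hε, show ψ f = 0 from hf]; simp
    · intro h
      have h1 : (X i : MvPolynomial (Fin 2) k) ∈ M.asIdeal := by
        change ε (X i) = 0
        simp [ε]
      rw [← h] at h1
      have h2 : ψ (X i) = 0 := h1
      simp [ψ] at h2
      exact hi h2
  have h1 := Order.height_add_one_le hPM
  have h2 := Order.height_le_krullDim M
  have h3 : Order.krullDim (PrimeSpectrum (MvPolynomial (Fin 2) k)) = 2 := by
    have := MvPolynomial.ringKrullDim_of_isNoetherianRing (R := k) (ι := Fin 2)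
    rw [ringKrullDim_eq_zero_of_field] at this
    simpa [ringKrullDim] using this
  have h4 : (2 : ℕ∞) ≤ Order.height P := by
    rw [← hht]
    exact iInf₂_le P hP
  rw [h3] at h2
  have h5 : Order.height M ≤ 2 := WithBot.coe_le_coe.1 h2
  have h6 : (2 : ℕ∞) + 1 ≤ 2 := (add_le_add_left h4 1).trans (h1.trans h5)
  exact absurd h6 (by decide)

lemma form_mem {e : ℕ} {F : MvPolynomial (Fin 2) k} (hF : F.IsHomogeneous e)
    (M : Submodule k (MvPolynomial (Fin 2) k))
    (h : ∀ a b, a + b = e → X 0 ^ a * X 1 ^ b ∈ M) : F ∈ M := by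
  rw [F.as_sum]
  refine Submodule.sum_mem _ fun s hs => ?_
  have h1 : s 0 + s 1 = e := by
    rw [hF.degree_eq_sum_deg_support hs, Finset.sum_subset (Finset.subset_univ s.support)]
    · simp
    · intro i _ hi; simpa using hi
  have h2 := M.smul_mem (coeff s F) (h _ _ h1)
  have h3 : monomial s (coeff s F) = coeff s F • (X 0 ^ s 0 * X 1 ^ s 1) := by
    rw [monomial_eq, Finsupp.prod_fintype _ _ (by simp), Fin.prod_univ_two, smul_eq_C_mul]
  rwa [h3]

variable {d : ℕ} {g : Fin 3 → MvPolynomial (Fin 2) k}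

lemma cone_comp (hd : d ≠ 0) (hg : ∀ i, (g i).IsHomogeneous d) (Q : MvPolynomial (Fin 3) k)
    (e : ℕ) : homogeneousComponent e (aeval g Q) = 0 ∨
      ∃ n, e = d * n ∧ homogeneousComponent e (aeval g Q) = aeval g (homogeneousComponent n Q) := by
  have h1 : ∀ n, (aeval g (homogeneousComponent n Q)).IsHomogeneous (d * n) := fun n =>
    (homogeneousComponent_isHomogeneous n Q).aeval g hg
  have h2 : homogeneousComponent e (aeval g Q) = ∑ n ∈ Finset.range (Q.totalDegree + 1),
      if d * n = e then aeval g (homogeneousComponent n Q) else 0 := by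
    conv_lhs => rw [← sum_homogeneousComponent Q]
    rw [map_sum, map_sum]
    refine Finset.sum_congr rfl fun n _ => ?_
    rw [homogeneousComponent_of_mem (h1 n)]
    simp [eq_comm]
  by_cases he : d ∣ e
  · obtain ⟨n, rfl⟩ := he
    right
    refine ⟨n, rfl, ?_⟩
    rw [h2]
    have : ∀ i, (if d * i = d * n then aeval g (homogeneousComponent i Q) else 0) =
      if i = n then aeval g (homogeneousComponent i Q) else 0 := by
      intro i; simp [hd]
    simp only [this, Finset.sum_ite_eq']
    split_ifs with h
    · rfl
    · rw [homogeneousComponent_eq_zero, map_zero]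
      simpa using h
  · left
    rw [h2]
    refine Finset.sum_eq_zero fun n _ => if_neg ?_
    rintro rfl; exact he (dvd_mul_right _ _)

lemma cone_mem_iff {f : MvPolynomial (Fin 2) k} : f ∈ coneRing g ↔ ∃ Q : MvPolynomial (Fin 3) k, aeval g Q = f := by
  rw [coneRing, Algebra.adjoin_range_eq_range_aeval]; rfl

lemma cone_comp_mem (hd : d ≠ 0) (hg : ∀ i, (g i).IsHomogeneous d) {f : MvPolynomial (Fin 2) k}
    (hf : f ∈ coneRing g) (e : ℕ) : homogeneousComponent e f ∈ coneRing g := by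
  obtain ⟨Q, rfl⟩ := cone_mem_iff.1 hf
  rcases cone_comp hd hg Q e with h | ⟨n, _, h⟩
  · rw [h]; exact zero_mem _
  · rw [h]; exact cone_mem_iff.2 ⟨_, rfl⟩

lemma cone_hom (hd : d ≠ 0) (hg : ∀ i, (g i).IsHomogeneous d) {f : MvPolynomial (Fin 2) k}
    (hf : f ∈ coneRing g) {e : ℕ} (he : f.IsHomogeneous e) :
    f = 0 ∨ ∃ n, e = d * n ∧ ∃ P : MvPolynomial (Fin 3) k, P.IsHomogeneous n ∧ aeval g P = f := by
  obtain ⟨Q, rfl⟩ := cone_mem_iff.1 hf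
  have h0 := homogeneousComponent_eq_self he
  rcases cone_comp hd hg Q e with h | ⟨n, hn, h⟩
  · left; rw [← h0, h]
  · right; exact ⟨n, hn, _, homogeneousComponent_isHomogeneous n Q, by rw [← h, h0]⟩

/-- high degree forms lie in the ideal, with homogeneous coefficients -/
lemma high_deg [IsAlgClosed k] (hg : ∀ i, (g i).IsHomogeneous d)
    (hnz : ∀ z : Fin 2 → k, z ≠ 0 → ∃ i, eval z (g i) ≠ 0) :
    ∃ N, ∀ e, N ≤ e → ∀ F : MvPolynomial (Fin 2) k, F.IsHomogeneous (d + e) →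
      ∃ h : Fin 3 → MvPolynomial (Fin 2) k, (∀ i, (h i).IsHomogeneous e) ∧ F = ∑ i, g i * h i := by
  set I := Ideal.span (Set.range g) with hI
  have hX : ∀ j : Fin 2, ∃ n, (X j : MvPolynomial (Fin 2) k) ^ n ∈ I := by
    intro j
    have h1 : (X j : MvPolynomial (Fin 2) k) ∈ I.radical := by
      rw [← vanishingIdeal_zeroLocus_eq_radical (K := k), mem_vanishingIdeal_iff]
      intro z hz
      have : z = 0 := by
        by_contra hz0
        obtain ⟨i, hi⟩ := hnz z hz0
        apply hi
        have := hz (g i) (Ideal.subset_span ⟨i, rfl⟩)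
        simpa [aeval_eq_eval] using this
      subst this; simp
    exact h1
  obtain ⟨n0, h0⟩ := hX 0
  obtain ⟨n1, h1⟩ := hX 1
  refine ⟨n0 + n1, fun e he F hF => ?_⟩
  have hFI : F ∈ I := by
    refine form_mem hF (I.restrictScalars k) fun a b hab => ?_
    change _ ∈ I
    by_cases ha : n0 ≤ a
    · obtain ⟨c, rfl⟩ := Nat.exists_eq_add_of_le ha
      rw [pow_add, mul_assoc]; exact I.mul_mem_right _ h0
    · obtain ⟨c, rfl⟩ := Nat.exists_eq_add_of_le (show n1 ≤ b by omega)
      rw [pow_add, mul_left_comm]; exact I.mul_mem_right _ h1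
  obtain ⟨c, hc⟩ := (Ideal.mem_span_range_iff_exists_fun).1 hFI
  refine ⟨fun i => homogeneousComponent e (c i), fun i => homogeneousComponent_isHomogeneous _ _, ?_⟩
  rw [← homogeneousComponent_eq_self hF, ← hc, map_sum]
  refine Finset.sum_congr rfl fun i _ => ?_
  rw [mul_comm, comp_mul (hg i)]

lemma mono_mem (n : ℕ) : ∀ a b : ℕ, a + b = d * n → (X 0 ^ a * X 1 ^ b : MvPolynomial (Fin 2) k) ∈
    Algebra.adjoin k {f : MvPolynomial (Fin 2) k | f.IsHomogeneous d} := by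
  induction n with
  | zero =>
    intro a b h
    have ha : a = 0 := by omega
    have hb : b = 0 := by omega
    subst ha hb; simp
  | succ n ih =>
    intro a b h
    have hs : d * (n + 1) = d * n + d := by ring
    obtain ⟨a', b', a'', b'', ha, hb, h'⟩ : ∃ a' b' a'' b'', a = a' + a'' ∧ b = b' + b'' ∧ a' + b' = d := by
      refine ⟨min a d, d - min a d, a - min a d, b - (d - min a d), ?_, ?_, ?_⟩ <;> omega
    have e : (X 0 ^ a * X 1 ^ b : MvPolynomial (Fin 2) k) =
      (X 0 ^ a' * X 1 ^ b') * (X 0 ^ a'' * X 1 ^ b'') := by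
      rw [ha, hb, pow_add, pow_add]; ring
    rw [e]
    refine Subalgebra.mul_mem _ (Algebra.subset_adjoin ?_) (ih _ _ (by omega))
    have := (isHomogeneous_X_pow (R := k) (0 : Fin 2) a').mul (isHomogeneous_X_pow (R := k) (1 : Fin 2) b')
    rwa [h'] at this

lemma cone_conductor [IsAlgClosed k] (hd : d ≠ 0) (hg : ∀ i, (g i).IsHomogeneous d)
    (hnz : ∀ z : Fin 2 → k, z ≠ 0 → ∃ i, eval z (g i) ≠ 0)
    (hbir : ∀ v ∈ Algebra.adjoin k {f : MvPolynomial (Fin 2) k | f.IsHomogeneous d},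
      ∃ x ∈ Algebra.adjoin k (Set.range g), ∃ y ∈ Algebra.adjoin k (Set.range g),
        y ≠ 0 ∧ y * v = x) :
    ∃ Y ∈ coneRing g, Y ≠ 0 ∧ (∃ e, Y.IsHomogeneous (d * e)) ∧
      ∀ n (P : MvPolynomial (Fin 2) k), P.IsHomogeneous (d * n) → Y * P ∈ coneRing g := by
  obtain ⟨N, hN⟩ := high_deg hg hnz
  have hfin : ∀ T : Finset (MvPolynomial (Fin 2) k),
      (∀ v ∈ T, v ∈ Algebra.adjoin k {f : MvPolynomial (Fin 2) k | f.IsHomogeneous d}) →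
      ∃ Y ∈ coneRing g, Y ≠ 0 ∧ ∀ v ∈ T, Y * v ∈ coneRing g := by
    classical
    intro T
    induction T using Finset.induction_on with
    | empty => intro _; exact ⟨1, one_mem _, one_ne_zero, by simp⟩
    | insert v T _ ih =>
      intro hT
      obtain ⟨Y, hY, hY0, hYT⟩ := ih fun w hw => hT w (Finset.mem_insert_of_mem hw)
      obtain ⟨x, hx, y, hy, hy0, e⟩ := hbir v (hT v (Finset.mem_insert_self _ _))
      refine ⟨Y * y, mul_mem hY hy, mul_ne_zero hY0 hy0, ?_⟩
      intro w hw
      rcases Finset.mem_insert.1 hw with rfl | hw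
      · rw [mul_assoc, e]; exact mul_mem hY hx
      · rw [mul_right_comm]; exact mul_mem (hYT w hw) hy
  classical
  let S : Finset (ℕ × ℕ) := (Finset.range (d * (N + 1) + 1) ×ˢ Finset.range (d * (N + 1) + 1)).filter
    fun s => d ∣ s.1 + s.2
  obtain ⟨Y, hY, hY0, hYT⟩ := hfin (S.image fun s => X 0 ^ s.1 * X 1 ^ s.2) (by
    intro v hv
    obtain ⟨s, hs, rfl⟩ := Finset.mem_image.1 hv
    obtain ⟨n, hn⟩ := (Finset.mem_filter.1 hs).2
    exact mono_mem n _ _ hn)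
  have hmain : ∀ n (P : MvPolynomial (Fin 2) k), P.IsHomogeneous (d * n) → Y * P ∈ coneRing g := by
    intro n
    induction n with
    | zero =>
      intro P hP
      refine form_mem hP ((Subalgebra.toSubmodule (coneRing g)).comap (LinearMap.mulLeft k Y)) ?_
      intro a b hab
      have ha : a = 0 := by omega
      have hb : b = 0 := by omega
      subst ha hb
      simpa using hY
    | succ n ih =>
      intro P hP
      by_cases hn : N ≤ n
      · have hdn : N ≤ d * n := hn.trans (Nat.le_mul_of_pos_left _ (Nat.pos_of_ne_zero hd))
        obtain ⟨h, hh, rfl⟩ := hN (d * n) hdn P (by rwa [mul_add, mul_one, add_comm] at hP)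
        rw [Finset.mul_sum]
        refine Subalgebra.sum_mem _ fun i _ => ?_
        rw [mul_left_comm]
        exact mul_mem (Algebra.subset_adjoin ⟨i, rfl⟩) (ih _ (hh i))
      · refine form_mem hP ((Subalgebra.toSubmodule (coneRing g)).comap (LinearMap.mulLeft k Y)) ?_
        intro a b hab
        refine hYT _ (Finset.mem_image.2 ⟨(a, b), ?_, rfl⟩)
        have : d * (n + 1) ≤ d * (N + 1) := Nat.mul_le_mul_left _ (by omega)
        simp only [S, Finset.mem_filter, Finset.mem_product, Finset.mem_range]
        exact ⟨⟨by omega, by omega⟩, ⟨_, hab⟩⟩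
  obtain ⟨e, he⟩ : ∃ e, homogeneousComponent e Y ≠ 0 := by
    by_contra hcon
    push Not at hcon
    apply hY0
    rw [← sum_homogeneousComponent Y]
    exact Finset.sum_eq_zero fun i _ => hcon i
  refine ⟨homogeneousComponent e Y, cone_comp_mem hd hg hY e, he, ?_, ?_⟩
  · have hh := homogeneousComponent_isHomogeneous e Y
    rcases cone_hom hd hg (cone_comp_mem hd hg hY e) hh with h | ⟨n, hn, _⟩
    · exact absurd h he
    · exact ⟨n, hn ▸ hh⟩
  · intro n P hP
    have := cone_comp_mem hd hg (hmain n P hP) (d * n + e)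
    rwa [mul_comm Y, comp_mul hP, mul_comm] at this

end Cone


section Loc
variable {k : Type*} [Field k]

/-- hypotheses on the curve, the point and the chart -/
structure PD (d : ℕ) (g : Fin 3 → MvPolynomial (Fin 2) k) (a : Fin 3 → k) (i0 : Fin 3)
    (q : Fin 2 → k) (t : k) (r r' : Fin 2 → k) : Prop where
  hd : d ≠ 0
  hg : ∀ i, (g i).IsHomogeneous d
  hnz : ∀ z : Fin 2 → k, z ≠ 0 → ∃ i, eval z (g i) ≠ 0
  hlin : LinearIndependent k g
  hq : eval q (g i0) ≠ 0
  ht : t ≠ 0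
  ha : ∀ i, a i = t * eval q (g i)
  hdet : r 0 * r' 1 - r 1 * r' 0 = 1
  hr : eval r (g i0) = 0

/-- the function field of the line -/
abbrev LL (k : Type*) [Field k] := FractionRing (MvPolynomial (Fin 2) k)
/-- the fraction field of the cone -/
abbrev KK {k : Type*} [Field k] (g : Fin 3 → MvPolynomial (Fin 2) k) := FractionRing (coneRing g)

lemma incl_aux (g : Fin 3 → MvPolynomial (Fin 2) k) : Function.Injective
    ((IsScalarTower.toAlgHom k (MvPolynomial (Fin 2) k) (LL k)).comp (coneRing g).val) :=
  (IsFractionRing.injective (MvPolynomial (Fin 2) k) (LL k)).comp Subtype.val_injective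

noncomputable def incl (g : Fin 3 → MvPolynomial (Fin 2) k) : KK g →ₐ[k] LL k :=
  IsFractionRing.liftAlgHom (incl_aux g)

lemma incl_alg (g : Fin 3 → MvPolynomial (Fin 2) k) (f : coneRing g) :
    incl g (algebraMap _ (KK g) f) = algebraMap (MvPolynomial (Fin 2) k) (LL k) f := by
  rw [incl, IsFractionRing.liftAlgHom_apply]
  exact IsFractionRing.lift_algebraMap (incl_aux g) f

lemma algL_inj : Function.Injective (algebraMap (MvPolynomial (Fin 2) k) (LL k)) :=
  IsFractionRing.injective (MvPolynomial (Fin 2) k) (LL k)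

lemma algK_inj (g : Fin 3 → MvPolynomial (Fin 2) k) :
    Function.Injective (algebraMap (coneRing g) (KK g)) :=
  IsFractionRing.injective (coneRing g) (KK g)

/-- `z = f / s` with `s` not vanishing at `q` -/
def PRep {g : Fin 3 → MvPolynomial (Fin 2) k} (q : Fin 2 → k) (z : KK g) (f s : coneRing g) (e : ℕ) :
    Prop :=
  (f : MvPolynomial (Fin 2) k).IsHomogeneous e ∧ (s : MvPolynomial (Fin 2) k).IsHomogeneous e ∧
    eval q (s : MvPolynomial (Fin 2) k) ≠ 0 ∧
    algebraMap (coneRing g) (KK g) s * z = algebraMap (coneRing g) (KK g) f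

variable {d : ℕ} {g : Fin 3 → MvPolynomial (Fin 2) k} {a : Fin 3 → k} {i0 : Fin 3}
  {q : Fin 2 → k} {t : k} {r r' : Fin 2 → k}

lemma aeval_coneGen (P : MvPolynomial (Fin 3) k) :
    ((aeval (coneGen g) P : coneRing g) : MvPolynomial (Fin 2) k) = aeval g P := by
  have : ((coneRing g).val).comp (aeval (coneGen g)) = aeval g := by
    ext i; simp [coneGen]
  exact DFunLike.congr_fun this P

lemma eval_aeval (z : Fin 2 → k) (P : MvPolynomial (Fin 3) k) :
    eval z (aeval g P) = eval (fun i => eval z (g i)) P := by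
  have : (aeval z : MvPolynomial (Fin 2) k →ₐ[k] k).comp (aeval g) =
      aeval (fun i => eval z (g i)) := by
    ext i; simp [aeval_eq_eval]
  have := DFunLike.congr_fun this P
  simpa [aeval_eq_eval] using this

lemma PD.a_ne (D : PD d g a i0 q t r r') : a i0 ≠ 0 := by
  rw [D.ha]; exact mul_ne_zero D.ht D.hq

lemma PD.pt (D : PD d g a i0 q t r r') (s : coneRing g) {e : ℕ}
    (hs : (s : MvPolynomial (Fin 2) k).IsHomogeneous e) :
    s ∈ pointIdeal g a ↔ eval q (s : MvPolynomial (Fin 2) k) = 0 := by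
  constructor
  · intro h
    have : pointIdeal g a ≤ RingHom.ker ((eval q).comp (coneRing g).val.toRingHom) := by
      rw [pointIdeal, Ideal.span_le]
      rintro _ ⟨i, j, rfl⟩
      change eval q ((a i • coneGen g j - a j • coneGen g i : coneRing g) :
        MvPolynomial (Fin 2) k) = 0
      simp only [coneGen, AddSubgroupClass.coe_sub, SetLike.val_smul, map_sub, smul_eval, D.ha]
      ring
    exact this h
  · intro h
    rcases cone_hom D.hd D.hg s.2 hs with h0 | ⟨n, rfl, P, hP, hPs⟩
    · have : s = 0 := Subtype.ext h0
      rw [this]; exact zero_mem _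
    · have hs' : s = aeval (coneGen g) P := by
        ext1; rw [aeval_coneGen, hPs]
      rw [hs', ← Ideal.Quotient.eq_zero_iff_mem]
      have h1 : Ideal.Quotient.mk (pointIdeal g a) (aeval (coneGen g) P) =
        aeval (fun j => Ideal.Quotient.mk (pointIdeal g a) (coneGen g j)) P := by
        have : (Ideal.Quotient.mkₐ k (pointIdeal g a)).comp (aeval (coneGen g)) =
          aeval (fun j => Ideal.Quotient.mk (pointIdeal g a) (coneGen g j)) := by
          ext i; simp
        exact DFunLike.congr_fun this P
      have h2 : ∀ j, Ideal.Quotient.mk (pointIdeal g a) (coneGen g j) =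
          Ideal.Quotient.mk (pointIdeal g a) (coneGen g i0) *
            algebraMap k _ (a j * (a i0)⁻¹) := by
        intro j
        have h3 : a i0 • coneGen g j - a j • coneGen g i0 ∈ pointIdeal g a :=
          Ideal.subset_span ⟨i0, j, rfl⟩
        have h4 : coneGen g j - (a j * (a i0)⁻¹) • coneGen g i0 ∈ pointIdeal g a := by
          have := (pointIdeal g a).mul_mem_left (algebraMap k _ (a i0)⁻¹) h3
          rw [← Algebra.smul_def, smul_sub, smul_smul, smul_smul, inv_mul_cancel₀ D.a_ne,
            one_smul, mul_comm (a i0)⁻¹] at this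
          exact this
        rw [← Ideal.Quotient.eq_zero_iff_mem, map_sub, sub_eq_zero] at h4
        rw [h4, Algebra.smul_def, map_mul]
        exact mul_comm (Ideal.Quotient.mk (pointIdeal g a) (algebraMap k _ (a j * (a i0)⁻¹)))
          (Ideal.Quotient.mk (pointIdeal g a) (coneGen g i0))
      rw [h1, funext h2]
      refine (hom_scale hP (Ideal.Quotient.mk (pointIdeal g a) (coneGen g i0))
        (fun j => algebraMap k (coneRing g ⧸ pointIdeal g a) (a j * (a i0)⁻¹))).trans ?_
      have h5 : aeval (fun j => algebraMap k (coneRing g ⧸ pointIdeal g a) (a j * (a i0)⁻¹)) P =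
        algebraMap k _ (eval (fun j => a j * (a i0)⁻¹) P) := by
        have : (Algebra.ofId k (coneRing g ⧸ pointIdeal g a)).comp
            (aeval (fun j => a j * (a i0)⁻¹)) =
          aeval (fun j => algebraMap k (coneRing g ⧸ pointIdeal g a) (a j * (a i0)⁻¹)) := by
          ext i; simp [Algebra.ofId_apply]
        rw [← aeval_eq_eval]
        exact (DFunLike.congr_fun this P).symm
      have h6 : eval (fun j => a j * (a i0)⁻¹) P = 0 := by
        have : (fun j => a j * (a i0)⁻¹) = fun j => ((a i0)⁻¹ * t) * eval q (g j) := by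
          ext j; rw [D.ha j]; ring
        rw [this, hom_scale_eval hP, ← eval_aeval, hPs, h, mul_zero]
      rw [h5, h6, map_zero, mul_zero]

lemma rep_s_ne {z : KK g} {f s : coneRing g} {e : ℕ} (h : PRep q z f s e) : s ≠ 0 := by
  rintro rfl
  exact h.2.2.1 (by simp)

lemma rep_eq {z : KK g} {f s : coneRing g} {e : ℕ} (h : PRep q z f s e) :
    z = algebraMap _ (KK g) f / algebraMap _ (KK g) s := by
  have h0 : algebraMap _ (KK g) s ≠ 0 := by
    rw [Ne, map_eq_zero_iff _ (algK_inj g)]; exact rep_s_ne h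
  rw [← h.2.2.2]; field_simp

lemma rep_incl {z : KK g} {f s : coneRing g} {e : ℕ} (h : PRep q z f s e) :
    incl g z = algebraMap _ (LL k) (f : MvPolynomial (Fin 2) k) /
      algebraMap _ (LL k) (s : MvPolynomial (Fin 2) k) := by
  rw [rep_eq h, map_div₀, incl_alg, incl_alg]

lemma PD.mem_iff (D : PD d g a i0 q t r r') (z : KK g) :
    z ∈ curveLocalRing g a ↔ ∃ f s e, PRep q z f s e := by
  constructor
  · intro h
    induction h using Subring.closure_induction with
    | mem x hx =>
      obtain ⟨f, s, e, hf, hs, hsp, he⟩ := hx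
      refine ⟨f, s, e, hf, hs, ?_, he⟩
      rwa [Ne, ← D.pt s hs]
    | zero => exact ⟨0, 1, 0, isHomogeneous_zero _ _ _, isHomogeneous_one _ _, by simp, by simp⟩
    | one => exact ⟨1, 1, 0, isHomogeneous_one _ _, isHomogeneous_one _ _, by simp, by simp⟩
    | add x y _ _ hx hy =>
      obtain ⟨f, s, e, hf, hs, hsp, he⟩ := hx
      obtain ⟨f', s', e', hf', hs', hsp', he'⟩ := hy
      refine ⟨f * s' + s * f', s * s', e + e', (hf.mul hs').add (hs.mul hf'), hs.mul hs', ?_, ?_⟩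
      · change eval q ((s : MvPolynomial (Fin 2) k) * s') ≠ 0
        rw [map_mul]; exact mul_ne_zero hsp hsp'
      · simp only [map_mul, map_add, ← he, ← he']; ring
    | neg x _ hx =>
      obtain ⟨f, s, e, hf, hs, hsp, he⟩ := hx
      exact ⟨-f, s, e, hf.neg, hs, hsp, by rw [map_neg, ← he]; ring⟩
    | mul x y _ _ hx hy =>
      obtain ⟨f, s, e, hf, hs, hsp, he⟩ := hx
      obtain ⟨f', s', e', hf', hs', hsp', he'⟩ := hy
      refine ⟨f * f', s * s', e + e', hf.mul hf', hs.mul hs', ?_, ?_⟩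
      · change eval q ((s : MvPolynomial (Fin 2) k) * s') ≠ 0
        rw [map_mul]; exact mul_ne_zero hsp hsp'
      · simp only [map_mul, ← he, ← he']; ring
  · rintro ⟨f, s, e, hf, hs, hsp, he⟩
    refine Subring.subset_closure ⟨f, s, e, hf, hs, ?_, he⟩
    rwa [D.pt s hs]

lemma PD.NU_iff (D : PD d g a i0 q t r r') {z : KK g} {f s : coneRing g} {e : ℕ}
    (h : PRep q z f s e) : NU (curveLocalRing g a) z ↔ eval q (f : MvPolynomial (Fin 2) k) = 0 := by
  have hz : z ∈ curveLocalRing g a := (D.mem_iff z).2 ⟨f, s, e, h⟩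
  have hz' := rep_eq h
  constructor
  · rintro ⟨h1, h2⟩
    by_contra hf
    apply h2
    rw [isUnit_subring_iff]
    have hf0 : f ≠ 0 := by rintro rfl; exact hf (by simp)
    have hf0' : algebraMap _ (KK g) f ≠ 0 := by
      rwa [Ne, map_eq_zero_iff _ (algK_inj g)]
    have hs0' : algebraMap _ (KK g) s ≠ 0 := by
      rw [Ne, map_eq_zero_iff _ (algK_inj g)]; exact rep_s_ne h
    refine ⟨?_, (D.mem_iff _).2 ⟨s, f, e, h.2.1, h.1, hf, ?_⟩⟩
    · change z ≠ 0
      rw [hz']; exact div_ne_zero hf0' hs0'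
    · change _ * z⁻¹ = _
      rw [hz']; field_simp
  · intro hf
    refine ⟨hz, fun hu => ?_⟩
    rw [isUnit_subring_iff] at hu
    obtain ⟨h0, h1⟩ := hu
    obtain ⟨f', s', e', hf', hs', hsp', he'⟩ := (D.mem_iff _).1 h1
    have h3 : f * f' = s * s' := by
      apply algK_inj g
      rw [map_mul, map_mul, ← he', ← h.2.2.2]
      change algebraMap _ (KK g) s * z * (algebraMap _ (KK g) s' * z⁻¹) = _
      have : z ≠ 0 := h0
      field_simp
    have h4 := congrArg (fun x : coneRing g => eval q (x : MvPolynomial (Fin 2) k)) h3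
    simp only [MulMemClass.coe_mul, map_mul, hf, zero_mul] at h4
    exact mul_ne_zero h.2.2.1 hsp' h4.symm

lemma PD.hk (D : PD d g a i0 q t r r') (c : k) : algebraMap k (KK g) c ∈ curveLocalRing g a := by
  refine (D.mem_iff _).2 ⟨algebraMap k _ c, 1, 0, isHomogeneous_C _ c, isHomogeneous_one _ _,
    by simp, ?_⟩
  rw [map_one, one_mul]; rfl

lemma PD.loc (D : PD d g a i0 q t r r') : IsLocalRing (curveLocalRing g a) := by
  apply IsLocalRing.of_nonunits_add
  rintro ⟨x, hx⟩ ⟨y, hy⟩ hxu hyu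
  obtain ⟨f, s, e, h⟩ := (D.mem_iff _).1 hx
  obtain ⟨f', s', e', h'⟩ := (D.mem_iff _).1 hy
  have hf := (D.NU_iff h).1 ⟨hx, hxu⟩
  have hf' := (D.NU_iff h').1 ⟨hy, hyu⟩
  have h3 : PRep q (x + y) (f * s' + s * f') (s * s') (e + e') := by
    obtain ⟨hf, hs, hsp, he⟩ := h
    obtain ⟨hf', hs', hsp', he'⟩ := h'
    refine ⟨(hf.mul hs').add (hs.mul hf'), hs.mul hs', ?_, ?_⟩
    · change eval q ((s : MvPolynomial (Fin 2) k) * s') ≠ 0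
      rw [map_mul]; exact mul_ne_zero hsp hsp'
    · simp only [map_mul, map_add, ← he, ← he']; ring
  have h4 := (D.NU_iff h3).2 (by
    simp only [AddMemClass.coe_add, MulMemClass.coe_mul, map_add, map_mul, hf, hf']; ring)
  exact h4.2

lemma PD.res (D : PD d g a i0 q t r r') (z : KK g) (hz : z ∈ curveLocalRing g a) :
    ∃ c : k, NU (curveLocalRing g a) (z - algebraMap k (KK g) c) := by
  obtain ⟨f, s, e, h⟩ := (D.mem_iff _).1 hz
  set c := eval q (f : MvPolynomial (Fin 2) k) / eval q (s : MvPolynomial (Fin 2) k) with hc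
  have h3 : PRep q (z - algebraMap k (KK g) c) (f - algebraMap k _ c * s) s e := by
    obtain ⟨hf, hs, hsp, he⟩ := h
    refine ⟨hf.sub (hs.C_mul c), hs, hsp, ?_⟩
    rw [map_sub, map_mul, ← he, ← IsScalarTower.algebraMap_apply]; ring
  refine ⟨c, (D.NU_iff h3).2 ?_⟩
  have : ((f - algebraMap k _ c * s : coneRing g) : MvPolynomial (Fin 2) k) =
    (f : MvPolynomial (Fin 2) k) - C c * (s : MvPolynomial (Fin 2) k) := rfl
  have hsp := h.2.2.1
  rw [this, map_sub, map_mul, eval_C, hc]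
  field_simp
  ring

end Loc


section Loc2
variable {k : Type*} [Field k]

/-- the linear forms vanishing at the point -/
noncomputable def UU (g : Fin 3 → MvPolynomial (Fin 2) k) (q : Fin 2 → k) (i0 : Fin 3)
    (j : Fin 3) : MvPolynomial (Fin 2) k :=
  g j - C (eval q (g j) / eval q (g i0)) * g i0

/-- gcd in the chart -/
noncomputable def hh (g : Fin 3 → MvPolynomial (Fin 2) k) (q : Fin 2 → k) (i0 : Fin 3)
    (r r' : Fin 2 → k) : Polynomial k :=
  Submodule.IsPrincipal.generator (Ideal.span (Set.range fun j => th r r' (UU g q i0 j)))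

/-- the coordinate -/
noncomputable def tau (r r' : Fin 2 → k) : LL k :=
  algebraMap (MvPolynomial (Fin 2) k) (LL k) (l1 r') / algebraMap (MvPolynomial (Fin 2) k) (LL k) (l2 r)

variable {d : ℕ} {g : Fin 3 → MvPolynomial (Fin 2) k} {a : Fin 3 → k} {i0 : Fin 3}
  {q : Fin 2 → k} {t : k} {r r' : Fin 2 → k}

lemma PD.U_hom (D : PD d g a i0 q t r r') (j : Fin 3) : (UU g q i0 j).IsHomogeneous d :=
  (D.hg j).sub ((D.hg i0).C_mul _)

lemma U_mem (j : Fin 3) : UU g q i0 j ∈ coneRing g := by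
  refine sub_mem (Algebra.subset_adjoin ⟨j, rfl⟩) ?_
  rw [← smul_eq_C_mul]
  have : g i0 ∈ coneRing g := Algebra.subset_adjoin ⟨i0, rfl⟩
  exact Subalgebra.smul_mem _ this _

lemma PD.U_eval (D : PD d g a i0 q t r r') (j : Fin 3) : eval q (UU g q i0 j) = 0 := by
  have := D.hq
  rw [UU, map_sub, map_mul, eval_C]; field_simp; ring

lemma PD.U_i0 (D : PD d g a i0 q t r r') : UU g q i0 i0 = 0 := by
  rw [UU, div_self D.hq]; simp

lemma PD.U_lin (D : PD d g a i0 q t r r') (c : Fin 3 → k) (hc : ∑ j, c j • UU g q i0 j = 0)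
    (j : Fin 3) (hj : j ≠ i0) : c j = 0 := by
  have h := Fintype.linearIndependent_iff.1 D.hlin
    (fun j => c j - if j = i0 then ∑ l, c l * (eval q (g l) / eval q (g i0)) else 0) (by
      rw [← hc]
      simp only [sub_smul, ite_smul, zero_smul, Finset.sum_sub_distrib, Finset.sum_ite_eq',
        Finset.mem_univ, if_true, UU, smul_sub, Finset.sum_smul, smul_eq_C_mul, map_mul, mul_assoc]) j
  simpa [hj] using h

lemma PD.U_ne (D : PD d g a i0 q t r r') (j : Fin 3) (hj : j ≠ i0) : UU g q i0 j ≠ 0 := by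
  intro h
  have := D.U_lin (Pi.single j 1) (by simp [Pi.single_apply, h]) j hj
  simp at this

lemma hh_dvd_U (j : Fin 3) : hh g q i0 r r' ∣ th r r' (UU g q i0 j) := by
  rw [hh, ← Ideal.mem_span_singleton, Ideal.span_singleton_generator]
  exact Ideal.subset_span ⟨j, rfl⟩

lemma hh_comb : ∃ c : Fin 3 → Polynomial k,
    hh g q i0 r r' = ∑ j, c j * th r r' (UU g q i0 j) := by
  have h : hh g q i0 r r' ∈ Ideal.span (Set.range fun j => th r r' (UU g q i0 j)) :=
    Submodule.IsPrincipal.generator_mem _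
  obtain ⟨c, hc⟩ := Ideal.mem_span_range_iff_exists_fun.1 h
  exact ⟨c, hc.symm⟩


lemma PD.hh_ne (D : PD d g a i0 q t r r') : hh g q i0 r r' ≠ 0 := by
  intro h
  obtain ⟨j, hj⟩ := exists_ne i0
  have := hh_dvd_U (g := g) (q := q) (i0 := i0) (r := r) (r' := r') j
  rw [h, zero_dvd_iff] at this
  exact D.U_ne j hj (th_inj D.hdet (D.U_hom j) this)

lemma PD.dvd (D : PD d g a i0 q t r r') (f : coneRing g) {e : ℕ}
    (hf : (f : MvPolynomial (Fin 2) k).IsHomogeneous e)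
    (h : eval q (f : MvPolynomial (Fin 2) k) = 0) : hh g q i0 r r' ∣ th r r' f := by
  have h1 := (D.pt f hf).2 h
  have h2 : pointIdeal g a ≤ (Ideal.span {hh g q i0 r r'}).comap
      ((th r r').toRingHom.comp (coneRing g).val.toRingHom) := by
    rw [pointIdeal, Ideal.span_le]
    rintro _ ⟨i, j, rfl⟩
    change th r r' ((a i • coneGen g j - a j • coneGen g i : coneRing g) :
        MvPolynomial (Fin 2) k) ∈ Ideal.span {hh g q i0 r r'}
    rw [Ideal.mem_span_singleton]
    have : ((a i • coneGen g j - a j • coneGen g i : coneRing g) : MvPolynomial (Fin 2) k) =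
        C (a i) * UU g q i0 j - C (a j) * UU g q i0 i := by
      simp only [coneGen, AddSubgroupClass.coe_sub, SetLike.val_smul, smul_eq_C_mul, UU, D.ha]
      have h3 : C (t * eval q (g i)) * C (eval q (g j) / eval q (g i0)) =
        (C (t * eval q (g j)) * C (eval q (g i) / eval q (g i0)) : MvPolynomial (Fin 2) k) := by
        rw [← C_mul, ← C_mul]; congr 1; ring
      linear_combination (g i0) * h3
    rw [this, map_sub, map_mul, map_mul]
    exact dvd_sub (Dvd.dvd.mul_left (hh_dvd_U j) _) (Dvd.dvd.mul_left (hh_dvd_U i) _)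
  have h3 := h2 h1
  exact Ideal.mem_span_singleton.1 h3

lemma chart_ne {r r' : Fin 2 → k} (hdet : r 0 * r' 1 - r 1 * r' 0 = 1) (x : k) :
    (fun i => r' i + x * r i) ≠ 0 := by
  intro h
  have h0 := congrFun h 0
  have h1 := congrFun h 1
  simp only [Pi.zero_apply] at h0 h1
  have : (1 : k) = 0 := by
    rw [← hdet]; linear_combination r 0 * h1 - r 1 * h0
  exact one_ne_zero this

lemma PD.cop [IsAlgClosed k] (D : PD d g a i0 q t r r') (s : coneRing g) {e : ℕ}
    (hs : (s : MvPolynomial (Fin 2) k).IsHomogeneous e)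
    (h : eval q (s : MvPolynomial (Fin 2) k) ≠ 0) : IsCoprime (th r r' s) (hh g q i0 r r') := by
  rw [Polynomial.isCoprime_iff_aeval_ne_zero_of_isAlgClosed k k]
  intro x
  by_contra hcon
  push Not at hcon
  obtain ⟨h1, h2⟩ := hcon
  simp only [Polynomial.coe_aeval_eq_eval] at h1 h2
  obtain ⟨n, rfl⟩ : ∃ n, e = d * n := by
    rcases cone_hom D.hd D.hg s.2 hs with h0 | ⟨n, hn, _⟩
    · rw [h0] at h; simp at h
    · exact ⟨n, hn⟩
  have hroot : ∀ p, hh g q i0 r r' ∣ p → p.eval x = 0 := by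
    rintro _ ⟨p, rfl⟩; rw [Polynomial.eval_mul, h2, zero_mul]
  obtain ⟨i, hi⟩ := D.hnz _ (chart_ne D.hdet x)
  rw [← th_eval] at hi
  have hU := hroot _ (hh_dvd_U (g := g) i)
  rw [UU, map_sub, map_mul, algHom_C, Polynomial.algebraMap_eq, Polynomial.eval_sub,
    Polynomial.eval_mul, Polynomial.eval_C] at hU
  have hG : (th r r' (g i0)).eval x ≠ 0 := by
    intro h0; rw [h0, mul_zero, sub_zero] at hU; exact hi hU
  set c := eval q (s : MvPolynomial (Fin 2) k) / eval q (g i0) ^ n with hc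
  have hc0 : c ≠ 0 := div_ne_zero h (pow_ne_zero _ D.hq)
  let f : coneRing g := s - algebraMap k _ c * coneGen g i0 ^ n
  have hf : (f : MvPolynomial (Fin 2) k) =
      (s : MvPolynomial (Fin 2) k) - C c * g i0 ^ n := rfl
  have h5 := D.dvd f (e := d * n) (by rw [hf]; exact hs.sub (((D.hg i0).pow n).C_mul c)) (by
    have := D.hq
    rw [hf, map_sub, map_mul, map_pow, eval_C, hc]; field_simp; ring)
  have h6 := hroot _ h5
  rw [hf, map_sub, map_mul, map_pow, algHom_C, Polynomial.algebraMap_eq, Polynomial.eval_sub,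
    Polynomial.eval_mul, Polynomial.eval_C, h1, zero_sub, neg_eq_zero, Polynomial.eval_pow] at h6
  exact mul_ne_zero hc0 (pow_ne_zero _ hG) h6

lemma PD.key (D : PD d g a i0 q t r r') {F : MvPolynomial (Fin 2) k} {e : ℕ}
    (hF : F.IsHomogeneous e) : algebraMap _ (LL k) F = algebraMap _ (LL k) (l2 r) ^ e *
      Polynomial.aeval (tau r r') (th r r' F) := key_id algL_inj D.hdet hF

lemma PD.l2L (D : PD d g a i0 q t r r') : algebraMap _ (LL k) (l2 r) ≠ 0 := by
  rw [Ne, map_eq_zero_iff _ algL_inj]; exact l2_ne D.hdet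

lemma PD.tau_inj (D : PD d g a i0 q t r r') {p : Polynomial k}
    (h : Polynomial.aeval (tau r r') p = 0) : p = 0 := by
  have h1 := D.key (homog_hom r r' p p.natDegree)
  rw [th_homog D.hdet le_rfl, h, mul_zero, map_eq_zero_iff _ algL_inj] at h1
  rw [← th_homog D.hdet (le_refl p.natDegree), h1, map_zero]

lemma PD.th_ne (D : PD d g a i0 q t r r') {F : MvPolynomial (Fin 2) k} {e : ℕ}
    (hF : F.IsHomogeneous e) (h0 : F ≠ 0) : Polynomial.aeval (tau r r') (th r r' F) ≠ 0 :=
  fun h => h0 (th_inj D.hdet hF (D.tau_inj h))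

lemma PD.rep_th (D : PD d g a i0 q t r r') {z : KK g} {f s : coneRing g} {e : ℕ}
    (h : PRep q z f s e) : Polynomial.aeval (tau r r') (th r r' s) * incl g z =
      Polynomial.aeval (tau r r') (th r r' f) := by
  have h0 := pow_ne_zero e D.l2L
  have h1 := D.th_ne h.2.1 (fun h0 => rep_s_ne h (Subtype.ext h0))
  rw [rep_incl h, D.key h.1, D.key h.2.1]
  field_simp

lemma PD.G_ne (D : PD d g a i0 q t r r') : g i0 ≠ 0 := by
  intro h; apply D.hq; rw [h, map_zero]

lemma PD.GL (D : PD d g a i0 q t r r') : algebraMap _ (LL k) (g i0) ≠ 0 := by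
  rw [Ne, map_eq_zero_iff _ algL_inj]; exact D.G_ne

/-- the ring of the affine line minus the zeros of `g i0` -/
noncomputable def EE (D : PD d g a i0 q t r r') : Subalgebra k (LL k) where
  carrier := {w | ∃ n, ∃ P : MvPolynomial (Fin 2) k, P.IsHomogeneous (d * n) ∧
    algebraMap _ (LL k) (g i0) ^ n * w = algebraMap _ (LL k) P}
  mul_mem' := by
    rintro x y ⟨n, P, hP, e⟩ ⟨n', P', hP', e'⟩
    refine ⟨n + n', P * P', by rw [mul_add]; exact hP.mul hP', ?_⟩
    rw [map_mul, ← e, ← e']; ring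
  add_mem' := by
    rintro x y ⟨n, P, hP, e⟩ ⟨n', P', hP', e'⟩
    refine ⟨n + n', P * g i0 ^ n' + g i0 ^ n * P', ?_, ?_⟩
    · rw [mul_add]; exact (hP.mul ((D.hg i0).pow n')).add (((D.hg i0).pow n).mul hP')
    · rw [map_add, map_mul, map_mul, map_pow, map_pow, ← e, ← e']; ring
  algebraMap_mem' := by
    intro c
    refine ⟨0, C c, by simpa using isHomogeneous_C _ c, ?_⟩
    rw [pow_zero, one_mul, IsScalarTower.algebraMap_apply k (MvPolynomial (Fin 2) k) (LL k)]; rfl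

lemma PD.E_th (D : PD d g a i0 q t r r') {w : LL k} (hw : w ∈ EE D) :
    ∃ n, ∃ P : MvPolynomial (Fin 2) k, P.IsHomogeneous (d * n) ∧
    Polynomial.aeval (tau r r') (th r r' (g i0)) ^ n * w = Polynomial.aeval (tau r r') (th r r' P) := by
  obtain ⟨n, P, hP, e⟩ := hw
  refine ⟨n, P, hP, ?_⟩
  rw [D.key hP, D.key (D.hg i0), mul_pow, ← pow_mul, mul_assoc] at e
  exact mul_left_cancel₀ (pow_ne_zero _ D.l2L) e

lemma PD.tau_mem (D : PD d g a i0 q t r r') : tau r r' ∈ EE D := by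
  obtain ⟨e, he⟩ := Nat.exists_eq_succ_of_ne_zero D.hd
  have hdeg : (th r r' (g i0)).natDegree ≤ e := by
    obtain ⟨h1, h2⟩ := th_deg r r' (D.hg i0)
    rw [D.hr] at h2
    by_contra hlt
    have : (th r r' (g i0)).natDegree = d := by omega
    rw [← this, Polynomial.coeff_natDegree, Polynomial.leadingCoeff_eq_zero] at h2
    rw [h2] at this; simp at this; omega
  set G' := homog r r' (th r r' (g i0)) e with hG'
  have hG'h : G'.IsHomogeneous e := homog_hom _ _ _ _
  have h1 : g i0 = l2 r * G' := by
    rw [← sub_eq_zero]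
    refine th_inj D.hdet (e := d) ?_ ?_
    · refine (D.hg i0).sub ?_
      rw [he, Nat.succ_eq_one_add]
      exact (l2_hom r).mul hG'h
    · rw [map_sub, map_mul, th_l2 D.hdet, hG', th_homog D.hdet hdeg]; ring
  refine ⟨1, l1 r' * G', ?_, ?_⟩
  · rw [mul_one, he, Nat.succ_eq_one_add]; exact (l1_hom r').mul hG'h
  · have := D.l2L
    rw [pow_one, h1, map_mul, map_mul, tau]; field_simp

lemma PD.poly_mem (D : PD d g a i0 q t r r') (p : Polynomial k) :
    Polynomial.aeval (tau r r') p ∈ EE D := by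
  have : Polynomial.aeval (tau r r') p ∈ Algebra.adjoin k {tau r r'} :=
    Polynomial.aeval_mem_adjoin_singleton k _
  exact (Algebra.adjoin_le (by simpa using D.tau_mem)) this

/-- the overring -/
noncomputable def VV (D : PD d g a i0 q t r r') : Submodule k (LL k) :=
  VO (incl g) (EE D) (curveLocalRing g a) D.hk

lemma PD.inv_mem (D : PD d g a i0 q t r r') (s : coneRing g) {e : ℕ}
    (hs : (s : MvPolynomial (Fin 2) k).IsHomogeneous e)
    (h : eval q (s : MvPolynomial (Fin 2) k) ≠ 0) :
    ∃ w ∈ VV D, Polynomial.aeval (tau r r') (th r r' s) * w = 1 := by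
  obtain ⟨n, rfl⟩ : ∃ n, e = d * n := by
    rcases cone_hom D.hd D.hg s.2 hs with h0 | ⟨n, hn, _⟩
    · rw [h0] at h; simp at h
    · exact ⟨n, hn⟩
  have hs0 : s ≠ 0 := by rintro rfl; exact h (by simp)
  have hsK : algebraMap _ (KK g) s ≠ 0 := by rwa [Ne, map_eq_zero_iff _ (algK_inj g)]
  have hsL : algebraMap _ (LL k) (s : MvPolynomial (Fin 2) k) ≠ 0 := by
    rw [Ne, map_eq_zero_iff _ algL_inj]; exact fun h => hs0 (Subtype.ext h)
  let z : KK g := algebraMap _ (KK g) (coneGen g i0 ^ n) / algebraMap _ (KK g) s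
  have hz : PRep q z (coneGen g i0 ^ n) s (d * n) :=
    ⟨(D.hg i0).pow n, hs, h, by simp only [z]; field_simp⟩
  have hG := pow_ne_zero n D.GL
  refine ⟨incl g z * (algebraMap _ (LL k) (l2 r ^ (d * n)) / algebraMap _ (LL k) (g i0) ^ n), ?_, ?_⟩
  · refine Submodule.mul_mem_mul ⟨z, (D.mem_iff z).2 ⟨_, _, _, hz⟩, rfl⟩ ⟨n, l2 r ^ (d * n), ?_, ?_⟩
    · simpa using (l2_hom r).pow (d * n)
    · field_simp
  · have h1 := D.key hs
    have h2 : (((coneGen g i0 ^ n : coneRing g)) : MvPolynomial (Fin 2) k) = g i0 ^ n := rfl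
    rw [rep_incl hz, h2, map_pow, map_pow]
    field_simp
    rw [h1]; ring

lemma PD.V_mul (D : PD d g a i0 q t r r') {x y : LL k} (hx : x ∈ VV D) (hy : y ∈ VV D) :
    x * y ∈ VV D := VO_mul hx hy

lemma PD.poly_memV (D : PD d g a i0 q t r r') (p : Polynomial k) :
    Polynomial.aeval (tau r r') p ∈ VV D := E_le_VO (D.poly_mem p)

lemma PD.V_cop [IsAlgClosed k] (D : PD d g a i0 q t r r') {w : LL k} (hw : w ∈ VV D) :
    ∃ p σ : Polynomial k, IsCoprime σ (hh g q i0 r r') ∧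
      Polynomial.aeval (tau r r') σ * w = Polynomial.aeval (tau r r') p := by
  induction hw using Submodule.mul_induction_on' with
  | mem_mul_mem m hm n hn =>
    obtain ⟨z, hz, rfl⟩ := hm
    obtain ⟨f, s, e, h⟩ := (D.mem_iff z).1 hz
    obtain ⟨l, P, hP, hl⟩ := D.E_th hn
    refine ⟨th r r' f * th r r' P, th r r' s * th r r' (g i0) ^ l, ?_, ?_⟩
    · exact (D.cop s h.2.1 h.2.2.1).mul_left
        (IsCoprime.pow_left (D.cop (coneGen g i0) (D.hg i0) D.hq))
    · rw [map_mul, map_mul, ← D.rep_th h, ← hl, map_pow]; ring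
  | add x _ y _ hx hy =>
    obtain ⟨p, σ, h, e⟩ := hx
    obtain ⟨p', σ', h', e'⟩ := hy
    refine ⟨p * σ' + σ * p', σ * σ', h.mul_left h', ?_⟩
    simp only [map_mul, map_add, ← e, ← e']; ring

lemma PD.E_frac (D : PD d g a i0 q t r r') {w : LL k} (hw : w ∈ EE D) : FracIn k (tau r r') w := by
  obtain ⟨n, P, _, h⟩ := D.E_th hw
  refine ⟨th r r' P, th r r' (g i0) ^ n, ?_, ?_⟩
  · rw [map_pow]; exact pow_ne_zero _ (D.th_ne (D.hg i0) D.G_ne)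
  · rw [map_pow, h]

lemma PD.O_frac (D : PD d g a i0 q t r r') {z : KK g} (hz : z ∈ curveLocalRing g a) :
    FracIn k (tau r r') (incl g z) := by
  obtain ⟨f, s, e, h⟩ := (D.mem_iff z).1 hz
  exact ⟨th r r' f, th r r' s, D.th_ne h.2.1 (fun h0 => rep_s_ne h (Subtype.ext h0)), D.rep_th h⟩

lemma PD.low [IsAlgClosed k] (D : PD d g a i0 q t r r') :
    ((hh g q i0 r r').natDegree : ℕ∞) ≤
      rl (VV D) (sm (Polynomial.aeval (tau r r') (hh g q i0 r r')) (VV D)) := by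
  set h := hh g q i0 r r' with hh'
  set W := sm (Polynomial.aeval (tau r r') h) (VV D) with hW
  let F : Polynomial.degreeLT k h.natDegree →ₗ[k] (VV D ⧸ W.submoduleOf (VV D)) :=
    (Submodule.mkQ _).comp ((LinearMap.codRestrict (VV D) (Polynomial.aeval (tau r r')).toLinearMap
      (fun p => D.poly_memV p)).comp (Submodule.subtype _))
  have hF : Function.Injective F := by
    rw [injective_iff_map_eq_zero]
    rintro ⟨p, hp⟩ h0
    have h1 : Polynomial.aeval (tau r r') p ∈ W := by
      have := (Submodule.Quotient.mk_eq_zero _).1 h0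
      exact this
    obtain ⟨w, hw, e⟩ := mem_sm.1 h1
    obtain ⟨p', σ, hσ, e'⟩ := D.V_cop hw
    have h2 : σ * p = h * p' := by
      rw [← sub_eq_zero]
      apply D.tau_inj
      rw [map_sub, map_mul, map_mul, ← e, ← e']; ring
    have h3 : h ∣ p := hσ.symm.dvd_of_dvd_mul_left ⟨p', h2⟩
    have h4 : p = 0 := by
      refine Polynomial.eq_zero_of_dvd_of_degree_lt h3 ?_
      rw [Polynomial.degree_eq_natDegree D.hh_ne]
      exact Polynomial.mem_degreeLT.1 hp
    exact Subtype.ext h4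
  have h1 := Module.length_le_of_injective F hF
  have h2 : Module.length k (Polynomial.degreeLT k h.natDegree) = h.natDegree := by
    rw [(Polynomial.degreeLTEquiv k h.natDegree).length_eq, Module.length_eq_finrank]
    simp
  rw [h2] at h1
  exact h1

end Loc2


section Loc3
variable {k : Type*} [Field k]

variable {d : ℕ} {g : Fin 3 → MvPolynomial (Fin 2) k} {a : Fin 3 → k} {i0 : Fin 3}
  {q : Fin 2 → k} {t : k} {r r' : Fin 2 → k}

/-- the overring as an algebra -/
noncomputable def VA (D : PD d g a i0 q t r r') : Subalgebra k (LL k) where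
  carrier := VV D
  mul_mem' := fun hx hy => D.V_mul hx hy
  add_mem' := fun hx hy => (VV D).add_mem hx hy
  algebraMap_mem' := fun c => E_le_VO ((EE D).algebraMap_mem c)

lemma PD.incl_memV (D : PD d g a i0 q t r r') {z : KK g} (hz : z ∈ curveLocalRing g a) :
    incl g z ∈ VV D := imS_le_VO ⟨z, hz, rfl⟩

/-- the map to the overring -/
noncomputable def vi (D : PD d g a i0 q t r r') : curveLocalRing g a →+* VA D :=
  RingHom.codRestrict ((incl g).toRingHom.comp (curveLocalRing g a).subtype) (VA D)
    (fun z => D.incl_memV z.2)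

/-- affine coordinates at the point -/
noncomputable def uu (g : Fin 3 → MvPolynomial (Fin 2) k) (q : Fin 2 → k) (i0 j : Fin 3) : KK g :=
  algebraMap (coneRing g) (KK g) ⟨UU g q i0 j, U_mem j⟩ / algebraMap (coneRing g) (KK g) (coneGen g i0)

lemma PD.GK (D : PD d g a i0 q t r r') : algebraMap (coneRing g) (KK g) (coneGen g i0) ≠ 0 := by
  rw [Ne, map_eq_zero_iff _ (algK_inj g)]
  intro h; exact D.G_ne (congrArg Subtype.val h)

lemma PD.uu_rep (D : PD d g a i0 q t r r') (j : Fin 3) :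
    PRep q (uu g q i0 j) ⟨UU g q i0 j, U_mem j⟩ (coneGen g i0) d :=
  ⟨D.U_hom j, D.hg i0, D.hq, by have := D.GK; rw [uu]; field_simp⟩

lemma PD.uu_NU (D : PD d g a i0 q t r r') (j : Fin 3) : NU (curveLocalRing g a) (uu g q i0 j) :=
  (D.NU_iff (D.uu_rep j)).2 (D.U_eval j)

/-- the gcd as an element of the overring -/
noncomputable def hV (D : PD d g a i0 q t r r') : VA D :=
  ⟨Polynomial.aeval (tau r r') (hh g q i0 r r'), D.poly_memV _⟩

lemma PD.NU_dvd (D : PD d g a i0 q t r r') {z : KK g} (hz : NU (curveLocalRing g a) z) :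
    ∃ w ∈ VV D, incl g z = Polynomial.aeval (tau r r') (hh g q i0 r r') * w := by
  obtain ⟨f, s, e, h⟩ := (D.mem_iff z).1 hz.1
  obtain ⟨p, hp⟩ := D.dvd f h.1 ((D.NU_iff h).1 hz)
  obtain ⟨w, hw, e1⟩ := D.inv_mem s h.2.1 h.2.2.1
  refine ⟨_, D.V_mul (D.poly_memV p) hw, ?_⟩
  have h2 := D.rep_th h
  rw [hp, map_mul] at h2
  linear_combination w * h2 - incl g z * e1

lemma PD.map_eq (D : PD d g a i0 q t r r') :
    Ideal.map (vi D) (nuIdeal (curveLocalRing g a)) = Ideal.span {hV D} := by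
  apply le_antisymm
  · rw [nuIdeal, Ideal.map_span, Ideal.span_le]
    rintro _ ⟨z, hz, rfl⟩
    obtain ⟨w, hw, e⟩ := D.NU_dvd ⟨z.2, hz⟩
    exact Ideal.mem_span_singleton.2 ⟨⟨w, hw⟩, Subtype.ext e⟩
  · rw [Ideal.span_singleton_le_iff_mem]
    obtain ⟨c, hc⟩ := hh_comb (g := g) (q := q) (i0 := i0) (r := r) (r' := r')
    have : hV D = ∑ j, (⟨Polynomial.aeval (tau r r') (c j * th r r' (g i0)), D.poly_memV _⟩ : VA D) *
        vi D ⟨uu g q i0 j, (D.uu_NU j).1⟩ := by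
      apply Subtype.ext
      rw [AddSubmonoidClass.coe_finsetSum]
      change Polynomial.aeval (tau r r') (hh g q i0 r r') = ∑ j,
        Polynomial.aeval (tau r r') (c j * th r r' (g i0)) * incl g (uu g q i0 j)
      rw [hc, map_sum]
      refine Finset.sum_congr rfl fun j _ => ?_
      have := D.rep_th (D.uu_rep j)
      rw [map_mul, map_mul, mul_assoc]
      exact congrArg _ this.symm
    rw [this]
    refine Ideal.sum_mem _ fun j _ => Ideal.mul_mem_left _ _ (Ideal.mem_map_of_mem _ ?_)
    exact Ideal.subset_span (D.uu_NU j).2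

lemma PD.hV_ne (D : PD d g a i0 q t r r') : hV D ≠ 0 := by
  intro h; exact D.hh_ne (D.tau_inj (congrArg Subtype.val h))

lemma PD.red_dvd (D : PD d g a i0 q t r r') {f : curveLocalRing g a} {n : ℕ}
    (hred : nuIdeal (curveLocalRing g a) ^ (n + 1) = Ideal.span {f} * nuIdeal (curveLocalRing g a) ^ n) :
    ∃ w ∈ VV D, Polynomial.aeval (tau r r') (hh g q i0 r r') = incl g f * w := by
  have h := congrArg (Ideal.map (vi D)) hred
  rw [Ideal.map_pow, Ideal.map_mul, Ideal.map_pow, D.map_eq, Ideal.map_span, Set.image_singleton,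
    Ideal.span_singleton_pow, Ideal.span_singleton_pow, Ideal.span_singleton_mul_span_singleton] at h
  have h1 : hV D ^ (n + 1) ∈ Ideal.span {vi D f * hV D ^ n} := h ▸ Ideal.mem_span_singleton_self _
  obtain ⟨w, hw⟩ := Ideal.mem_span_singleton.1 h1
  have h2 : hV D = vi D f * w := by
    refine mul_left_cancel₀ (pow_ne_zero n D.hV_ne) ?_
    rw [← pow_succ, hw]; ring
  exact ⟨w, w.2, congrArg Subtype.val h2⟩

lemma PD.hhL (D : PD d g a i0 q t r r') :
    Polynomial.aeval (tau r r') (hh g q i0 r r') ≠ 0 := fun h => D.hh_ne (D.tau_inj h)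

lemma PD.setup [IsAlgClosed k] (D : PD d g a i0 q t r r')
    (hbir : ∀ v ∈ Algebra.adjoin k {f : MvPolynomial (Fin 2) k | f.IsHomogeneous d},
      ∃ x ∈ Algebra.adjoin k (Set.range g), ∃ y ∈ Algebra.adjoin k (Set.range g),
        y ≠ 0 ∧ y * v = x)
    {f : curveLocalRing g a} (hf : ¬ IsUnit f) {n : ℕ}
    (hred : nuIdeal (curveLocalRing g a) ^ (n + 1) = Ideal.span {f} * nuIdeal (curveLocalRing g a) ^ n) :
    ∃ y : LL k, Setup (incl g) (EE D) (curveLocalRing g a) (tau r r') y (f : KK g) (hh g q i0 r r') := by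
  obtain ⟨Y, hY, hY0, ⟨e, hYe⟩, hcond⟩ := cone_conductor D.hd D.hg D.hnz hbir
  have hYL : algebraMap _ (LL k) Y ≠ 0 := by rwa [Ne, map_eq_zero_iff _ algL_inj]
  obtain ⟨w, hw, hfw⟩ := D.red_dvd hred
  have hG := D.GL
  refine ⟨algebraMap _ (LL k) Y / algebraMap _ (LL k) (g i0) ^ e,
    D.hk, fun e he => D.E_frac he, D.tau_mem, fun z hz => D.O_frac hz, D.loc,
    div_ne_zero hYL (pow_ne_zero _ hG), ?_, ⟨f.2, hf⟩, ?_, D.hh_ne, D.NU_dvd ⟨f.2, hf⟩, ⟨w, hw, hfw⟩⟩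
  · rintro v ⟨m, P, hP, hv⟩
    have hGK := pow_ne_zero (e + m) D.GK
    have hrep : PRep q (algebraMap (coneRing g) (KK g) ⟨Y * P, hcond m P hP⟩ /
        algebraMap (coneRing g) (KK g) (coneGen g i0 ^ (e + m)))
        ⟨Y * P, hcond m P hP⟩ (coneGen g i0 ^ (e + m)) (d * (e + m)) := by
      refine ⟨?_, (D.hg i0).pow _, ?_, ?_⟩
      · rw [mul_add]; exact hYe.mul hP
      · have : ((coneGen g i0 ^ (e + m) : coneRing g) : MvPolynomial (Fin 2) k) = g i0 ^ (e + m) := rfl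
        rw [this, map_pow]; exact pow_ne_zero _ D.hq
      · rw [map_pow]; field_simp
    refine ⟨_, (D.mem_iff _).2 ⟨_, _, _, hrep⟩, ?_⟩
    rw [rep_incl hrep]
    have : ((coneGen g i0 ^ (e + m) : coneRing g) : MvPolynomial (Fin 2) k) = g i0 ^ (e + m) := rfl
    rw [this, map_mul, ← hv, map_pow]
    field_simp
    ring
  · intro h0
    rw [h0, map_zero, zero_mul] at hfw
    exact D.hhL hfw

end Loc3


section Loc4
variable {k : Type*} [Field k]

lemma hom_congr {R : Type*} [CommRing R] (φ : MvPolynomial (Fin 3) k →+* R) (I : Ideal R)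
    (β : Fin 3 → k) (h : ∀ j, φ (X j) - φ (C (β j)) ∈ I) (P : MvPolynomial (Fin 3) k) :
    φ P - φ (C (eval β P)) ∈ I := by
  induction P using MvPolynomial.induction_on with
  | C a => simp
  | add p q hp hq =>
    have := I.add_mem hp hq
    rw [map_add, map_add, map_add, map_add]
    convert this using 1; ring
  | mul_X p j hp =>
    have := I.add_mem (I.mul_mem_right (φ (X j)) hp) (I.mul_mem_left (φ (C (eval β p))) (h j))
    rw [map_mul, map_mul, eval_X, C_mul, map_mul]
    convert this using 1; ring

variable {d : ℕ} {g : Fin 3 → MvPolynomial (Fin 2) k} {a : Fin 3 → k} {i0 : Fin 3}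
  {q : Fin 2 → k} {t : k} {r r' : Fin 2 → k}

lemma PD.gen (D : PD d g a i0 q t r r') {z : KK g} (hz : NU (curveLocalRing g a) z) :
    ∃ b : Fin 3 → curveLocalRing g a, z = ∑ j, (b j : KK g) * uu g q i0 j := by
  set u : Fin 3 → curveLocalRing g a := fun j => ⟨uu g q i0 j, (D.uu_NU j).1⟩ with hu
  suffices h : (⟨z, hz.1⟩ : curveLocalRing g a) ∈ Ideal.span (Set.range u) by
    obtain ⟨b, hb⟩ := Ideal.mem_span_range_iff_exists_fun.1 h
    refine ⟨b, ?_⟩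
    have := congrArg Subtype.val hb
    rw [AddSubmonoidClass.coe_finsetSum] at this
    exact this.symm
  obtain ⟨f, s, e, h⟩ := (D.mem_iff z).1 hz.1
  have hfq := (D.NU_iff h).1 hz
  have hzz := rep_eq h
  rcases cone_hom D.hd D.hg f.2 h.1 with h0 | ⟨n, rfl, P, hP, hPf⟩
  · have : (⟨z, hz.1⟩ : curveLocalRing g a) = 0 := by
      apply Subtype.ext
      have h1 : f = 0 := Subtype.ext h0
      rw [h1, map_zero, zero_div] at hzz
      exact hzz
    rw [this]; exact zero_mem _
  have hsK : algebraMap _ (KK g) s ≠ 0 := by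
    rw [Ne, map_eq_zero_iff _ (algK_inj g)]; exact rep_s_ne h
  have hGK := D.GK
  set β : Fin 3 → k := fun j => eval q (g j) / eval q (g i0) with hβ
  let kO : k →+* curveLocalRing g a := (algebraMap k (KK g)).codRestrict _ D.hk
  let φ : MvPolynomial (Fin 3) k →+* curveLocalRing g a := eval₂Hom kO (fun j => kO (β j) + u j)
  have h1 := hom_congr φ (Ideal.span (Set.range u)) β (by
    intro j
    have : φ (X j) - φ (C (β j)) = u j := by simp [φ]
    rw [this]; exact Ideal.subset_span ⟨j, rfl⟩) P
  have h2 : eval β P = 0 := by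
    have h3 : β = fun j => (eval q (g i0))⁻¹ * eval q (g j) := by
      ext j; rw [hβ]; simp only; rw [div_eq_inv_mul]
    rw [h3, hom_scale_eval hP, ← eval_aeval, hPf, hfq, mul_zero]
  rw [h2, C_0, map_zero, sub_zero] at h1
  have h4 : ((φ P : curveLocalRing g a) : KK g) = (algebraMap (coneRing g) (KK g) (coneGen g i0))⁻¹ ^ n *
      algebraMap (coneRing g) (KK g) f := by
    have h5 : ((φ P : curveLocalRing g a) : KK g) = aeval (fun j =>
        (algebraMap (coneRing g) (KK g) (coneGen g i0))⁻¹ * algebraMap (coneRing g) (KK g) (coneGen g j)) P := by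
      have : ((curveLocalRing g a).subtype) (φ P) = _ := hom_eval₂ P kO (curveLocalRing g a).subtype _
      change ((curveLocalRing g a).subtype) (φ P) = _
      rw [this, aeval_def]
      congr 1
      ext j
      change algebraMap k (KK g) (β j) + uu g q i0 j = _
      have e1 : (⟨UU g q i0 j, U_mem j⟩ : coneRing g) = coneGen g j - algebraMap k _ (β j) * coneGen g i0 := rfl
      rw [uu, e1, map_sub, map_mul, ← IsScalarTower.algebraMap_apply]
      field_simp
      ring
    rw [h5, hom_scale hP]
    congr 1
    have : aeval (fun j => algebraMap (coneRing g) (KK g) (coneGen g j)) P =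
        algebraMap (coneRing g) (KK g) (aeval (coneGen g) P) := by
      rw [← aeval_algebraMap_apply]; rfl
    rw [this]
    congr 1
    exact Subtype.ext (by rw [aeval_coneGen, hPf])
  have hrep : PRep q (algebraMap (coneRing g) (KK g) (coneGen g i0 ^ n) / algebraMap (coneRing g) (KK g) s)
      (coneGen g i0 ^ n) s (d * n) := ⟨(D.hg i0).pow n, h.2.1, h.2.2.1, by field_simp⟩
  have h6 : (⟨z, hz.1⟩ : curveLocalRing g a) = ⟨_, (D.mem_iff _).2 ⟨_, _, _, hrep⟩⟩ * φ P := by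
    apply Subtype.ext
    change z = (algebraMap (coneRing g) (KK g) (coneGen g i0 ^ n) / algebraMap (coneRing g) (KK g) s) *
      ((φ P : curveLocalRing g a) : KK g)
    rw [h4, hzz, map_pow, inv_pow]
    field_simp
  rw [h6]
  exact Ideal.mul_mem_left _ _ h1

lemma third : ∀ i j : Fin 3, j ≠ i → ∃ l, l ≠ i ∧ l ≠ j := by decide

lemma PD.bound [IsAlgClosed k] (D : PD d g a i0 q t r r')
    (hbir : ∀ v ∈ Algebra.adjoin k {f : MvPolynomial (Fin 2) k | f.IsHomogeneous d},
      ∃ x ∈ Algebra.adjoin k (Set.range g), ∃ y ∈ Algebra.adjoin k (Set.range g),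
        y ≠ 0 ∧ y * v = x)
    {O' : Subring (KK g)} (hnear : IsInfinitelyNearTo (curveLocalRing g a) O') {c : ℕ}
    (hmultc : IsHSMultOfDimOne O' (nuIdeal O') c) :
    c ≤ (hh g q i0 r r').natDegree ∧ c + (hh g q i0 r r').natDegree ≤ d ∧
    IsHSMultOfDimOne (curveLocalRing g a) (nuIdeal (curveLocalRing g a))
      (hh g q i0 r r').natDegree := by
  obtain ⟨O₁, h1, h2⟩ := Relation.TransGen.head'_iff.1 hnear
  have h1' := h1
  obtain ⟨f, hf, ⟨n, hred⟩, N, hN, rfl⟩ := h1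
  obtain ⟨y, S⟩ := D.setup hbir hf hred
  obtain ⟨I1, -, -⟩ := S.inv.step S h1'
  obtain ⟨I, -, hNU⟩ := I1.chain S h2
  obtain ⟨w, hw, ew⟩ := S.hxh
  obtain ⟨w', hw', ew'⟩ := S.hhx
  refine ⟨I.mult_le S hmultc I.hx S.hx0 S.hh hw hw' ew ew', ?_, S.mult_O D.res hred D.low⟩
  have hNp := hN.isPrime
  have hinteg := S.inv.integral S hf hred
  have hf0 := S.hx0
  have hfL : incl g (f : KK g) ≠ 0 := by rwa [Ne, map_eq_zero]
  let bl : Fin 3 → blowRing (curveLocalRing g a) f := fun j => ⟨uu g q i0 j / f,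
    Subring.subset_closure (Or.inr ⟨⟨uu g q i0 j, (D.uu_NU j).1⟩, Ideal.subset_span (D.uu_NU j).2,
      by field_simp⟩)⟩
  let kB : k → blowRing (curveLocalRing g a) f := fun c => ⟨algebraMap k (KK g) c, le_blowRing _ f (S.hk c)⟩
  choose s hs using fun j => S.residue D.res hinteg N hN (bl j)
  obtain ⟨j1, hj1, hs1⟩ : ∃ j1, j1 ≠ i0 ∧ s j1 ≠ 0 := by
    by_contra hcon
    push Not at hcon
    have hall : ∀ j, bl j ∈ N := by
      intro j
      by_cases hj : j = i0
      · have : bl j = 0 := by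
          apply Subtype.ext
          change uu g q i0 j / (f : KK g) = 0
          have e0 : (⟨UU g q i0 i0, U_mem i0⟩ : coneRing g) = 0 := Subtype.ext D.U_i0
          rw [hj, uu, e0, map_zero, zero_div, zero_div]
        rw [this]; exact zero_mem _
      · have h3 := hs j
        have : (⟨algebraMap k (KK g) (s j), le_blowRing _ f (S.hk (s j))⟩ :
            blowRing (curveLocalRing g a) f) = 0 := by
          apply Subtype.ext
          change algebraMap k (KK g) (s j) = 0
          rw [hcon j hj, map_zero]
        rw [this, sub_zero] at h3
        exact h3
    obtain ⟨b, hb⟩ := D.gen (z := (f : KK g)) ⟨f.2, hf⟩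
    apply (Ideal.ne_top_iff_one N).1 hNp.ne_top
    have : (1 : blowRing (curveLocalRing g a) f) =
        ∑ j, (⟨b j, le_blowRing _ f (b j).2⟩ : blowRing (curveLocalRing g a) f) * bl j := by
      apply Subtype.ext
      rw [AddSubmonoidClass.coe_finsetSum]
      change (1 : KK g) = ∑ j, (b j : KK g) * (uu g q i0 j / f)
      simp_rw [← mul_div_assoc]
      rw [← Finset.sum_div, ← hb, div_self hf0]
    rw [this]
    exact Ideal.sum_mem _ fun j _ => Ideal.mul_mem_left _ _ (hall j)
  obtain ⟨j2, hj2, hj21⟩ := third i0 j1 hj1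
  set x₁ : blowRing (curveLocalRing g a) f := kB (s j1) * bl j2 - kB (s j2) * bl j1 with hx₁
  have hx₁N : x₁ ∈ N := by
    have h3 := N.sub_mem (N.mul_mem_left (kB (s j1)) (hs j2)) (N.mul_mem_left (kB (s j2)) (hs j1))
    convert h3 using 1
    change x₁ = kB (s j1) * (bl j2 - kB (s j2)) - kB (s j2) * (bl j1 - kB (s j1))
    rw [hx₁]; ring
  have hx₁NU := hNU _ (NU_loc _ N x₁ hx₁N)
  set U : MvPolynomial (Fin 2) k := C (s j1) * UU g q i0 j2 - C (s j2) * UU g q i0 j1 with hU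
  have hUh : U.IsHomogeneous d := ((D.U_hom j2).C_mul _).sub ((D.U_hom j1).C_mul _)
  have hU0 : U ≠ 0 := by
    intro h0
    apply hs1
    have h3 := D.U_lin (Pi.single j2 (s j1) - Pi.single j1 (s j2)) (by
      simp only [Pi.sub_apply, sub_smul, Finset.sum_sub_distrib, Pi.single_apply, ite_smul, zero_smul,
        Finset.sum_ite_eq', Finset.mem_univ, if_true, smul_eq_C_mul]
      exact h0) j2 hj2
    simpa [Pi.single_apply, hj21] using h3
  obtain ⟨P1, hP1⟩ : hh g q i0 r r' ∣ th r r' U := by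
    rw [hU, map_sub, map_mul, map_mul]
    exact dvd_sub (Dvd.dvd.mul_left (hh_dvd_U j2) _) (Dvd.dvd.mul_left (hh_dvd_U j1) _)
  have hP10 : P1 ≠ 0 := by
    rintro rfl
    rw [mul_zero] at hP1
    exact hU0 (th_inj D.hdet hUh hP1)
  have hdeg := (th_deg r r' hUh).1
  rw [hP1, Polynomial.natDegree_mul D.hh_ne hP10] at hdeg
  obtain ⟨v, hv, ev⟩ := D.inv_mem (coneGen g i0) (D.hg i0) D.hq
  have hU1 : Polynomial.aeval (tau r r') (th r r' (g i0)) * incl g ((x₁ : KK g) * f) =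
      Polynomial.aeval (tau r r') (hh g q i0 r r') * Polynomial.aeval (tau r r') P1 := by
    have e1 : (x₁ : KK g) * f = algebraMap k (KK g) (s j1) * uu g q i0 j2 -
        algebraMap k (KK g) (s j2) * uu g q i0 j1 := by
      change (algebraMap k (KK g) (s j1) * (uu g q i0 j2 / f) -
        algebraMap k (KK g) (s j2) * (uu g q i0 j1 / f)) * f = _
      field_simp
    have e2 := D.rep_th (D.uu_rep j1)
    have e3 := D.rep_th (D.uu_rep j2)
    change Polynomial.aeval (tau r r') (th r r' (g i0)) * _ = Polynomial.aeval (tau r r') (th r r' (UU g q i0 _)) at e2 e3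
    rw [← map_mul, ← hP1, hU, map_sub (th r r'), map_mul (th r r'), map_mul (th r r'), algHom_C, algHom_C,
      map_sub (Polynomial.aeval _), map_mul (Polynomial.aeval _), map_mul (Polynomial.aeval _),
      ← e2, ← e3, e1, map_sub, map_mul, map_mul, AlgHom.commutes, AlgHom.commutes,
      Polynomial.algebraMap_eq, Polynomial.aeval_C, Polynomial.aeval_C]
    ring
  change Polynomial.aeval (tau r r') (th r r' (g i0)) * v = 1 at ev
  rw [map_mul] at hU1
  have ww : w * w' = 1 := by
    refine mul_left_cancel₀ D.hhL ?_
    rw [← mul_assoc, ← ew, ← ew', mul_one]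
  have hg1 : incl g (x₁ : KK g) = Polynomial.aeval (tau r r') P1 * (v * w') := by
    refine mul_right_cancel₀ hfL ?_
    linear_combination v * hU1 - incl g (x₁ : KK g) * incl g (f : KK g) * ev +
      v * Polynomial.aeval (tau r r') P1 * ew'
  have hg2 : Polynomial.aeval (tau r r') P1 = incl g (x₁ : KK g) *
      (Polynomial.aeval (tau r r') (th r r' (g i0)) * w) := by
    rw [hg1]
    linear_combination - Polynomial.aeval (tau r r') P1 * ev -
      Polynomial.aeval (tau r r') P1 * v * Polynomial.aeval (tau r r') (th r r' (g i0)) * ww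
  have hx₁0 : (x₁ : KK g) ≠ 0 := by
    intro h0
    rw [h0, map_zero, zero_mul] at hg2
    exact hP10 (D.tau_inj hg2)
  have := I.mult_le S hmultc hx₁NU hx₁0 hP10 (D.V_mul hv hw') (D.V_mul (D.poly_memV _) hw) hg1 hg2
  omega

end Loc4


section Degs
variable {k : Type*} [Field k]
variable {d : ℕ} {g : Fin 3 → MvPolynomial (Fin 2) k} {a : Fin 3 → k} {i0 : Fin 3}
  {q : Fin 2 → k} {t : k} {r r' : Fin 2 → k}

lemma third_all : ∀ i j l : Fin 3, j ≠ i → l ≠ i → l ≠ j → ∀ x, x = i ∨ x = j ∨ x = l := by decide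

lemma PD.degs [IsAlgClosed k] (D : PD d g a i0 q t r r') {c d₁ d₂ : ℕ} (hd : d = 2 * c)
    (hm : (hh g q i0 r r').natDegree = c)
    (φ : Matrix (Fin 3) (Fin 2) (MvPolynomial (Fin 2) k))
    (hHBexact : LinearMap.range φ.mulVecLin =
      LinearMap.ker (Matrix.mulVecLin (Matrix.of fun (_ : Fin 1) (i : Fin 3) => g i)))
    (hcol1 : ∀ i, (φ i 0).IsHomogeneous d₁) (hcol2 : ∀ i, (φ i 1).IsHomogeneous d₂)
    (hsum : d₁ + d₂ = d) : d₂ ≤ c := by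
  by_contra hlt
  push Not at hlt
  choose w hw using fun j => hh_dvd_U (g := g) (q := q) (i0 := i0) (r := r) (r' := r') j
  have hwd : ∀ j, (w j).natDegree ≤ c := by
    intro j
    by_cases h0 : w j = 0
    · rw [h0]; simp
    have h1 := (th_deg r r' (D.U_hom j)).1
    rw [hw, Polynomial.natDegree_mul D.hh_ne h0, hm] at h1
    omega
  set H := homog r r' (hh g q i0 r r') c with hH
  have hHh : H.IsHomogeneous c := homog_hom _ _ _ _
  set W : Fin 3 → MvPolynomial (Fin 2) k := fun j => homog r r' (w j) c with hW
  have hWh : ∀ j, (W j).IsHomogeneous c := fun j => homog_hom _ _ _ _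
  have hWt : ∀ j, th r r' (W j) = w j := fun j => th_homog D.hdet (hwd j)
  have hUW : ∀ j, UU g q i0 j = H * W j := by
    intro j
    rw [← sub_eq_zero]
    refine th_inj D.hdet (e := d) ((D.U_hom j).sub ?_) ?_
    · rw [hd, two_mul]; exact hHh.mul (hWh j)
    · rw [map_sub, map_mul, hWt, hw, hH, th_homog D.hdet hm.le, sub_self]
  obtain ⟨j1, hj1⟩ := exists_ne i0
  obtain ⟨j2, hj2, hj21⟩ := third i0 j1 hj1
  have hall := third_all i0 j1 j2 hj1 hj2 hj21
  set β : Fin 3 → k := fun j => eval q (g j) / eval q (g i0) with hβ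
  set σ : Fin 3 → MvPolynomial (Fin 2) k := Pi.single j1 (W j2) - Pi.single j2 (W j1) +
    Pi.single i0 (C (β j2) * W j1 - C (β j1) * W j2 : MvPolynomial (Fin 2) k) with hσ
  have hσ1 : σ j1 = W j2 := by simp [hσ, Pi.single_apply, hj1, hj21.symm]
  have hσ2 : σ j2 = - W j1 := by simp [hσ, Pi.single_apply, hj2, hj21]
  have hker : σ ∈ LinearMap.ker (Matrix.mulVecLin (Matrix.of fun (_ : Fin 1) (i : Fin 3) => g i)) := by
    rw [LinearMap.mem_ker, Matrix.mulVecLin_apply]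
    ext1 x
    have h1 : ∑ i, g i * σ i = 0 := by
      have e1 : g j1 - C (β j1) * g i0 = H * W j1 := hUW j1
      have e2 : g j2 - C (β j2) * g i0 = H * W j2 := hUW j2
      simp only [hσ, Pi.add_apply, Pi.sub_apply, mul_add, mul_sub, Finset.sum_add_distrib,
        Finset.sum_sub_distrib, Pi.single_apply, mul_ite, mul_zero, Finset.sum_ite_eq',
        Finset.mem_univ, if_true]
      linear_combination W j2 * e1 - W j1 * e2
    simpa [Matrix.mulVec, dotProduct] using h1
  rw [← hHBexact] at hker
  obtain ⟨v, hv⟩ := hker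
  have hv' : ∀ l, σ l = φ l 0 * v 0 + φ l 1 * v 1 := by
    intro l
    rw [← hv, Matrix.mulVecLin_apply, Matrix.mulVec, dotProduct, Fin.sum_univ_two]
  obtain ⟨z, hz, hz0⟩ := exists_zero (homogeneousComponent_isHomogeneous (c - d₁) (v 0)) (by omega)
  have hcomp : ∀ l, (σ l).IsHomogeneous c → eval z (σ l) = 0 := by
    intro l hl
    have h1 := homogeneousComponent_eq_self hl
    have h2 := comp_mul (hcol1 l) (c - d₁) (v 0)
    rw [show d₁ + (c - d₁) = c by omega] at h2
    rw [hv' l, map_add, h2, comp_mul_lt (hcol2 l) c hlt, add_zero] at h1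
    rw [hv' l, ← h1, map_mul, hz0, mul_zero]
  have hz2 : eval z (W j2) = 0 := by rw [← hσ1]; exact hcomp j1 (by rw [hσ1]; exact hWh _)
  have hz1 : eval z (W j1) = 0 := by
    have := hcomp j2 (by rw [hσ2]; exact (hWh _).neg)
    rwa [hσ2, map_neg, neg_eq_zero] at this
  have hw0 : w i0 = 0 := by
    have := hw i0
    rw [D.U_i0, map_zero] at this
    exact (mul_eq_zero.1 this.symm).resolve_left D.hh_ne
  rcases eval_pt D.hdet hz with ⟨x, b, hb, hx⟩ | ⟨b, hb, hx⟩
  · have hroot : ∀ j, (w j).eval x = 0 := by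
      have h1 : ∀ j, eval z (W j) = 0 → (w j).eval x = 0 := by
        intro j hj
        rw [hx c _ (hWh j), hWt] at hj
        exact (mul_eq_zero.1 hj).resolve_left (pow_ne_zero _ hb)
      intro j
      rcases hall j with rfl | rfl | rfl
      · rw [hw0]; simp
      · exact h1 _ hz1
      · exact h1 _ hz2
    obtain ⟨cc, hcc⟩ := hh_comb (g := g) (q := q) (i0 := i0) (r := r) (r' := r')
    have h1 : (1 : Polynomial k) = ∑ j, cc j * w j := by
      refine mul_left_cancel₀ D.hh_ne ?_
      rw [mul_one, Finset.mul_sum]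
      refine hcc.trans (Finset.sum_congr rfl fun j _ => ?_)
      rw [hw]; ring
    have h2 := congrArg (Polynomial.eval x) h1
    rw [Polynomial.eval_finsetSum] at h2
    simp [hroot] at h2
  · have hroot : ∀ j, eval r (UU g q i0 j) = 0 := by
      have h1 : ∀ j, eval z (W j) = 0 → eval r (UU g q i0 j) = 0 := by
        intro j hj
        rw [hx c _ (hWh j)] at hj
        rw [hUW, map_mul, (mul_eq_zero.1 hj).resolve_left (pow_ne_zero _ hb), mul_zero]
      intro j
      rcases hall j with rfl | rfl | rfl
      · rw [D.U_i0, map_zero]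
      · exact h1 _ hz1
      · exact h1 _ hz2
    have hr0 : r ≠ 0 := by
      rintro rfl
      have := D.hdet
      simp at this
    obtain ⟨i, hi⟩ := D.hnz r hr0
    have := hroot i
    rw [UU, map_sub, map_mul, D.hr, mul_zero, sub_zero] at this
    exact hi this

end Degs

/-- Let `C` be a rational plane curve of even degree `d = 2c` over an algebraically closed
field, parameterized birationally and without base points by three forms of degree `d`, with
homogeneous Hilbert–Burch matrix `φ` of column degrees `d₁ ≤ d₂` (`d₁ + d₂ = d`).  If `p` is a
point on `C` and `q` is a singularity of multiplicity `c` infinitely near to `p`, then the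
multiplicity of `C` at `p` is also equal to `c`; moreover in this situation both column degrees
`d₁`, `d₂` equal `c`. -/
theorem stmt13 {k : Type*} [Field k] [IsAlgClosed k] (d c d₁ d₂ : ℕ) (hd : d = 2 * c)
    (g : Fin 3 → MvPolynomial (Fin 2) k) (hg : ∀ i, (g i).IsHomogeneous d)
    (hmin : LinearIndependent k g)
    (hht : idealHeight (Ideal.span (Set.range g)) = 2)
    (hbir : ∀ v ∈ Algebra.adjoin k {f : MvPolynomial (Fin 2) k | f.IsHomogeneous d},
      ∃ x ∈ Algebra.adjoin k (Set.range g), ∃ y ∈ Algebra.adjoin k (Set.range g),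
        y ≠ 0 ∧ y * v = x)
    (φ : Matrix (Fin 3) (Fin 2) (MvPolynomial (Fin 2) k))
    (hHBinj : Function.Injective φ.mulVecLin)
    (hHBexact : LinearMap.range φ.mulVecLin =
      LinearMap.ker (Matrix.mulVecLin (Matrix.of fun (_ : Fin 1) (i : Fin 3) => g i)))
    (hcol1 : ∀ i, (φ i 0).IsHomogeneous d₁) (hcol2 : ∀ i, (φ i 1).IsHomogeneous d₂)
    (h12 : d₁ ≤ d₂) (hsum : d₁ + d₂ = d)
    (a : Fin 3 → k) (ha : a ≠ 0) (haC : onCurve g a)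
    (O' : Subring (FractionRing (coneRing g)))
    (hnear : IsInfinitelyNearTo (curveLocalRing g a) O')
    (hmultc : IsHSMultOfDimOne O' (nuIdeal O') c) (hsing : 2 ≤ c) :
    IsHSMultOfDimOne (curveLocalRing g a) (nuIdeal (curveLocalRing g a)) c ∧
      d₁ = c ∧ d₂ = c := by
  have hd0 : d ≠ 0 := by omega
  obtain ⟨i0, hi0⟩ := Function.ne_iff.1 ha
  obtain ⟨q, hq, t, ht, hat⟩ := haC
  obtain ⟨r, hr, hr0⟩ := exists_zero (hg i0) hd0
  obtain ⟨r', hdet⟩ := exists_compl hr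
  have hqi : eval q (g i0) ≠ 0 := by
    intro h; apply hi0; rw [hat, h, mul_zero]; rfl
  have D : PD d g a i0 q t r r' := 
    { hd := hd0, hg := hg, hnz := fun z hz => no_common_zero g hd0 hg hht hz, hlin := hmin,
      hq := hqi, ht := ht, ha := hat, hdet := hdet, hr := hr0 }
  obtain ⟨h1, h2, h3⟩ := D.bound hbir hnear hmultc
  have hm : (hh g q i0 r r').natDegree = c := by omega
  rw [hm] at h3
  have h4 := D.degs hd hm φ hHBexact hcol1 hcol2 hsum
  exact ⟨h3, by omega, by omega⟩
end

section
/- Let S be a standard graded Noetherian algebra over S₀ = R with R Noetherian. For a nonnegative integer d, the set X(S; ≥ d) = { p ∈ Spec R : dim(S ⊗_R κ(p)) ≥ d } is a closed subset of Spec R. Moreover, for nonnegative integers d and e, the set X(S; =d, ≥e) = { p ∈ Spec R : dim(S ⊗_R κ(p)) = d and e(S ⊗_R κ(p)) ≥ e } is a closed subset of X(S; =d). -/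
theorem ringKrullDim_eq_of_int {P A : Type*} [CommRing P] [CommRing A] [Algebra P A]
    [Algebra.IsIntegral P A] (hinj : Function.Injective (algebraMap P A)) :
    ringKrullDim A = ringKrullDim P := by
  apply le_antisymm
  · apply Order.krullDim_le_of_strictMono (PrimeSpectrum.comap (algebraMap P A))
    intro a b h
    have := Ideal.IsIntegral.comap_lt_comap (R := P) (I := a.asIdeal) (J := b.asIdeal) h
    exact this
  · have : FaithfulSMul P A := (faithfulSMul_iff_algebraMap_injective P A).2 hinj
    refine iSup_le fun l => ?_
    obtain ⟨Q, hQ1, hQ2⟩ := (Ideal.nonempty_primesOver (R := P) (S := A) l.head.asIdeal).some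
    obtain ⟨L, hL, _⟩ := Ideal.exists_ltSeries_of_hasGoingUp (S := A) l Q
    rw [← hL]
    exact Order.LTSeries.length_le_krullDim L

theorem dickson {r : ℕ} (U : Set (Fin r → ℕ)) :
    ∃ G : Finset (Fin r → ℕ), ↑G ⊆ U ∧ ∀ m ∈ U, ∃ g ∈ G, g ≤ m := by
  have hfin : {m | Minimal (· ∈ U) m}.Finite :=
    WellQuasiOrderedLE.finite_of_isAntichain (setOfPred_minimal_antichain _)
  refine ⟨hfin.toFinset, ?_, ?_⟩
  · intro m hm
    simp at hm
    exact hm.1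
  · intro m hm
    obtain ⟨g, hg, hg'⟩ := (Set.isPWO_of_wellQuasiOrderedLE U).exists_le_minimal hm
    exact ⟨g, by simpa using hg', hg⟩

/-- eventually polynomial -/
def EvPoly (f : ℕ → ℝ) : Prop := ∃ Q : Polynomial ℝ, ∀ᶠ n : ℕ in Filter.atTop, f n = Q.eval (n : ℝ)

theorem EvPoly.add {f g : ℕ → ℝ} (hf : EvPoly f) (hg : EvPoly g) : EvPoly (fun n => f n + g n) := by
  obtain ⟨P, hP⟩ := hf
  obtain ⟨Q, hQ⟩ := hg
  refine ⟨P + Q, ?_⟩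
  filter_upwards [hP, hQ] with n h1 h2
  simp [h1, h2]

theorem EvPoly.congr {f g : ℕ → ℝ} (hf : EvPoly f) (h : ∀ᶠ n in Filter.atTop, g n = f n) :
    EvPoly g := by
  obtain ⟨P, hP⟩ := hf
  refine ⟨P, ?_⟩
  filter_upwards [hP, h] with n h1 h2
  rw [h2, h1]

theorem EvPoly.const (c : ℝ) : EvPoly (fun _ => c) := ⟨Polynomial.C c, by simp⟩

theorem EvPoly.sum {ι : Type*} (s : Finset ι) {f : ι → ℕ → ℝ} (hf : ∀ i ∈ s, EvPoly (f i)) :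
    EvPoly (fun n => ∑ i ∈ s, f i n) := by
  classical
  induction s using Finset.induction_on with
  | empty => simpa using EvPoly.const 0
  | insert a s ha ih =>
    simp only [Finset.sum_insert ha]
    exact (hf a (by simp)).add (ih fun i hi => hf i (by simp [hi]))

theorem EvPoly.shift {f : ℕ → ℝ} (hf : EvPoly f) (j : ℕ) : EvPoly (fun n => f (n - j)) := by
  obtain ⟨P, hP⟩ := hf
  refine ⟨P.comp (Polynomial.X - Polynomial.C (j : ℝ)), ?_⟩
  filter_upwards [(Filter.tendsto_sub_atTop_nat j).eventually hP, Filter.eventually_ge_atTop j]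
    with n h1 h2
  rw [h1]
  simp [Nat.cast_sub h2]

theorem EvPoly.shift' {f : ℕ → ℝ} (hf : EvPoly f) (j : ℕ) : EvPoly (fun n => f (n + j)) := by
  obtain ⟨P, hP⟩ := hf
  refine ⟨P.comp (Polynomial.X + Polynomial.C (j : ℝ)), ?_⟩
  filter_upwards [(Filter.tendsto_add_atTop_nat j).eventually hP]
    with n h1
  rw [h1]
  simp

theorem poly_sum (P : Polynomial ℝ) : ∃ Q : Polynomial ℝ, ∀ n : ℕ,
    ∑ i ∈ Finset.range n, P.eval (i : ℝ) = Q.eval (n : ℝ) := by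
  induction P using Polynomial.induction_on' with
  | add p q hp hq =>
    obtain ⟨P, hP⟩ := hp
    obtain ⟨Q, hQ⟩ := hq
    exact ⟨P + Q, fun n => by simp [Finset.sum_add_distrib, hP, hQ]⟩
  | monomial p a =>
    refine ⟨Polynomial.C a * ∑ i ∈ Finset.range (p + 1),
      Polynomial.C ((bernoulli i * ((p + 1).choose i) / (p + 1) : ℚ) : ℝ)
        * Polynomial.X ^ (p + 1 - i), fun n => ?_⟩
    have := congrArg (fun q : ℚ => (q : ℝ)) (sum_range_pow n p)
    push_cast at this
    simp only [Polynomial.eval_monomial, ← Finset.mul_sum, this, Polynomial.eval_mul,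
      Polynomial.eval_C, Polynomial.eval_finsetSum, Polynomial.eval_pow, Polynomial.eval_X]
    congr 1
    refine Finset.sum_congr rfl fun i _ => ?_
    push_cast
    ring

theorem EvPoly.psum {f : ℕ → ℝ} (hf : EvPoly f) :
    EvPoly (fun n => ∑ i ∈ Finset.range n, f i) := by
  obtain ⟨P, hP⟩ := hf
  obtain ⟨N, hN⟩ := Filter.eventually_atTop.1 hP
  obtain ⟨Q, hQ⟩ := poly_sum P
  refine ⟨Polynomial.C (∑ i ∈ Finset.range N, (f i - P.eval (i : ℝ))) + Q, ?_⟩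
  filter_upwards [Filter.eventually_ge_atTop N] with n hn
  rw [Polynomial.eval_add, ← hQ, Polynomial.eval_C]
  have : ∑ i ∈ Finset.range n, (f i - P.eval (i : ℝ)) =
      ∑ i ∈ Finset.range N, (f i - P.eval (i : ℝ)) := by
    symm
    apply Finset.sum_subset (Finset.range_mono hn)
    intro x _ hx
    rw [hN x (by simpa using hx), sub_self]
  rw [← this, Finset.sum_sub_distrib]
  ring

open Classical in
/-- number of exponents of degree `n` outside `U` -/
noncomputable def stdCount {r : ℕ} (U : Set (Fin r → ℕ)) (n : ℕ) : ℕ :=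
  ((Finset.piAntidiag (Finset.univ : Finset (Fin r)) n).filter (· ∉ U)).card

theorem stdCount_succ {r : ℕ} (U : Set (Fin (r + 1) → ℕ)) (n : ℕ) :
    stdCount U n = ∑ j ∈ Finset.range (n + 1), stdCount {m | Fin.cons j m ∈ U} (n - j) := by
  classical
  unfold stdCount
  rw [← Finset.card_sigma]
  symm
  refine Finset.card_bij (fun x _ => Fin.cons x.1 x.2) ?_ ?_ ?_
  · rintro ⟨j, m⟩ h
    simp [Fin.sum_univ_succ] at h ⊢
    obtain ⟨h1, h2, h3⟩ := h
    have h2' : ∑ x, m x = n - j := h2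
    exact ⟨by omega, h3⟩
  · rintro ⟨j, m⟩ h ⟨j', m'⟩ h' heq
    obtain ⟨h1, h2⟩ := Fin.cons_inj.1 heq
    simp only at h1 h2
    subst h1 h2
    rfl
  · intro m hm
    refine ⟨⟨m 0, Fin.tail m⟩, ?_, by simp⟩
    simp [Fin.sum_univ_succ] at hm ⊢
    refine ⟨by omega, ?_, hm.2⟩
    have := hm.1
    have h2 : Finset.univ.sum (Fin.tail m) = ∑ i : Fin r, m i.succ := rfl
    rw [h2]
    omega

theorem stdCount_evPoly {r : ℕ} (U : Set (Fin r → ℕ)) (hU : IsUpperSet U) :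
    EvPoly (fun n => (stdCount U n : ℝ)) := by
  induction r with
  | zero =>
    refine ⟨0, ?_⟩
    filter_upwards [Filter.eventually_gt_atTop 0] with n hn
    simp [stdCount]
    intro a
    omega
  | succ r ih =>
    have hsl : ∀ j, IsUpperSet {m : Fin r → ℕ | (Fin.cons j m : Fin (r + 1) → ℕ) ∈ U} := by
      intro j a b hab ha
      refine hU ?_ ha
      exact Fin.cons_le_cons.2 ⟨le_rfl, hab⟩
    have hmono : ∀ j j', j ≤ j' → ∀ m : Fin r → ℕ, (Fin.cons j m : Fin (r + 1) → ℕ) ∈ U →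
        (Fin.cons j' m : Fin (r + 1) → ℕ) ∈ U := by
      intro j j' hj m hm
      exact hU (Fin.cons_le_cons.2 ⟨hj, le_rfl⟩) hm
    obtain ⟨G, hG, hG'⟩ := dickson U
    set J := G.sup (fun g => g 0) with hJ
    have hstab : ∀ j, J ≤ j → {m : Fin r → ℕ | (Fin.cons j m : Fin (r + 1) → ℕ) ∈ U} =
        {m : Fin r → ℕ | (Fin.cons J m : Fin (r + 1) → ℕ) ∈ U} := by
      intro j hj
      ext m
      refine ⟨fun h => ?_, fun h => hmono _ _ hj _ h⟩
      obtain ⟨g, hg, hgm⟩ := hG' _ h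
      refine hU (a := g) ?_ (hG hg)
      rw [← Fin.cons_self_tail g]
      refine Fin.cons_le_cons.2 ⟨?_, ?_⟩
      · exact Finset.le_sup (f := fun g : Fin (r + 1) → ℕ => g 0) hg
      · intro i
        simpa [Fin.tail] using hgm i.succ
    have h1 : EvPoly (fun n => ∑ j ∈ Finset.range J,
        (stdCount {m : Fin r → ℕ | (Fin.cons j m : Fin (r + 1) → ℕ) ∈ U} (n - j) : ℝ)) :=
      EvPoly.sum _ fun j _ => (ih _ (hsl j)).shift j
    have h2 := ((((ih _ (hsl J)).psum).shift' 1).shift J)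
    refine (h1.add h2).congr ?_
    filter_upwards [Filter.eventually_ge_atTop J] with n hn
    rw [stdCount_succ]
    push_cast
    rw [← Finset.sum_range_add_sum_Ico _ (show J ≤ n + 1 by omega)]
    congr 1
    rw [Finset.sum_Ico_eq_sum_range, ← Finset.sum_range_reflect]
    have : n + 1 - J = n - J + 1 := by omega
    rw [this]
    refine Finset.sum_congr rfl fun i hi => ?_
    simp at hi
    rw [hstab _ (by omega)]
    congr 2
    omega

/-- monomial in `X` -/
def monX {A : Type*} [CommRing A] {r : ℕ} (X : Fin r → A) (m : Fin r → ℕ) : A := ∏ i, X i ^ m i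

theorem monX_add {A : Type*} [CommRing A] {r : ℕ} (X : Fin r → A) (m m' : Fin r → ℕ) :
    monX X (m + m') = monX X m * monX X m' := by
  simp [monX, pow_add, Finset.prod_mul_distrib]

/-- Exponents whose monomial lies in the span of the smaller ones of the same degree. -/
def redSet (k : Type*) {A : Type*} [Field k] [CommRing A] [Algebra k A] {r : ℕ} (X : Fin r → A) :
    Set (Fin r → ℕ) :=
  {m | monX X m ∈ Submodule.span k (monX X '' {m' | ∑ i, m' i = ∑ i, m i ∧ toLex m' < toLex m})}

theorem redSet_isUpperSet (k : Type*) {A : Type*} [Field k] [CommRing A] [Algebra k A] {r : ℕ}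
    (X : Fin r → A) : IsUpperSet (redSet k X) := by
  intro a b hab ha
  obtain ⟨c, rfl⟩ := exists_add_of_le hab
  simp only [redSet, Set.mem_ofPred_eq] at ha ⊢
  have h1 := Submodule.mem_map_of_mem (f := LinearMap.mulLeft k (monX X c)) ha
  rw [Submodule.map_span, ← Set.image_comp] at h1
  rw [monX_add, mul_comm]
  refine Submodule.span_mono ?_ h1
  rintro _ ⟨m, ⟨hm1, hm2⟩, rfl⟩
  refine ⟨m + c, ⟨?_, ?_⟩, ?_⟩
  · simp [Finset.sum_add_distrib, hm1]
  · rw [toLex_add, toLex_add]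
    exact add_lt_add_left hm2 _
  · simp [monX_add, mul_comm]

open Classical in
theorem finrank_span_greedy {k V ι : Type*} [Field k] [AddCommGroup V] [Module k V] [LinearOrder ι]
    (v : ι → V) (s : Finset ι) :
    Module.finrank k (Submodule.span k (v '' s)) =
      (s.filter (fun i => v i ∉ Submodule.span k (v '' {j | j ∈ s ∧ j < i}))).card := by
  classical
  induction s using Finset.induction_on_max with
  | empty => rw [Finset.coe_empty, Set.image_empty, Submodule.span_empty, finrank_bot]; simp
  | insert a s ha ih =>
    have has : a ∉ s := fun h => lt_irrefl _ (ha a h)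
    have e1 : ∀ i ∈ s, {j | j ∈ insert a s ∧ j < i} = {j | j ∈ s ∧ j < i} := by
      intro i hi
      ext j
      simp only [Finset.mem_insert, Set.mem_ofPred_eq]
      constructor
      · rintro ⟨rfl | h, h'⟩
        · exact absurd (ha i hi) (not_lt.2 h'.le)
        · exact ⟨h, h'⟩
      · exact fun h => ⟨Or.inr h.1, h.2⟩
    have e2 : {j | j ∈ insert a s ∧ j < a} = (s : Set ι) := by
      ext j
      simp only [Finset.mem_insert, Set.mem_ofPred_eq, Finset.mem_coe]
      constructor
      · rintro ⟨rfl | h, h'⟩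
        · exact absurd h' (lt_irrefl _)
        · exact h
      · exact fun h => ⟨Or.inr h, ha j h⟩
    have e3 : s.filter (fun i => v i ∉ Submodule.span k (v '' {j | j ∈ insert a s ∧ j < i})) =
        s.filter (fun i => v i ∉ Submodule.span k (v '' {j | j ∈ s ∧ j < i})) := by
      apply Finset.filter_congr
      intro i hi
      rw [e1 i hi]
    rw [Finset.filter_insert, e3, e2]
    rw [Finset.coe_insert, Set.image_insert_eq, Submodule.span_insert]
    have : FiniteDimensional k (Submodule.span k (v '' (s : Set ι))) :=
      FiniteDimensional.span_of_finite k (s.finite_toSet.image v)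
    split_ifs with h
    · rw [← ih, sup_eq_right.2]
      rw [Submodule.span_singleton_le_iff_mem]
      exact h
    · rw [Finset.card_insert_of_notMem (by simp [has]), ← ih]
      have hv0 : v a ≠ 0 := fun h0 => h (by rw [h0]; exact Submodule.zero_mem _)
      have h2 := Submodule.finrank_sup_add_finrank_inf_eq (Submodule.span k {v a})
        (Submodule.span k (v '' (s : Set ι)))
      have hd : Submodule.span k {v a} ⊓ Submodule.span k (v '' (s : Set ι)) = ⊥ := by
        rw [← disjoint_iff, disjoint_comm]
        rw [Submodule.disjoint_span_singleton]
        exact fun h' => absurd h' h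
      rw [hd, finrank_bot, finrank_span_singleton hv0] at h2
      omega

theorem finrank_eq_stdCount (k : Type*) {A : Type*} [Field k] [CommRing A] [Algebra k A] {r : ℕ}
    (X : Fin r → A) (n : ℕ) :
    Module.finrank k (Submodule.span k (monX X '' {m | ∑ i, m i = n})) =
      stdCount (redSet k X) n := by
  classical
  have := finrank_span_greedy (k := k) (ι := Lex (Fin r → ℕ)) (fun m => monX X (ofLex m))
    ((Finset.piAntidiag Finset.univ n).map toLex.toEmbedding)
  have e : (fun m : Lex (Fin r → ℕ) => monX X (ofLex m)) ''
      (((Finset.piAntidiag (Finset.univ : Finset (Fin r)) n).map toLex.toEmbedding :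
        Finset (Lex (Fin r → ℕ))) : Set (Lex (Fin r → ℕ))) =
      monX X '' {m | ∑ i, m i = n} := by
    ext a
    simp
  rw [e] at this
  rw [this, stdCount, Finset.filter_map, Finset.card_map]
  congr 1
  apply Finset.filter_congr
  intro m hm
  have hm' : ∑ i, m i = n := by simpa using hm
  simp only [redSet, Function.comp, Set.mem_ofPred_eq]
  apply not_congr
  have : (fun m : Lex (Fin r → ℕ) => monX X (ofLex m)) '' {j | j ∈
      (Finset.piAntidiag (Finset.univ : Finset (Fin r)) n).map toLex.toEmbedding ∧ j < toLex m} =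
      monX X '' {m' | ∑ i, m' i = ∑ i, m i ∧ toLex m' < toLex m} := by
    ext a
    simp [hm', and_assoc]
  exact this ▸ Iff.rfl

/-- filtration -/
def filtF (k : Type*) {A : Type*} [Field k] [CommRing A] [Algebra k A] {r : ℕ} (X : Fin r → A)
    (N : ℕ) : Submodule k A := Submodule.span k (monX X '' {m | ∑ i, m i < N})

theorem finite_deg_lt (r N : ℕ) : {m : Fin r → ℕ | ∑ i, m i < N}.Finite := by
  apply (Set.finite_Iic (fun _ : Fin r => N)).subset
  intro m hm i
  have h1 := Finset.single_le_sum (f := m) (fun _ _ => Nat.zero_le _) (Finset.mem_univ i)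
  simp only [Set.mem_ofPred_eq] at hm
  exact h1.trans hm.le

instance filtF_fd (k : Type*) {A : Type*} [Field k] [CommRing A] [Algebra k A] {r : ℕ}
    (X : Fin r → A) (N : ℕ) : FiniteDimensional k (filtF k X N) :=
  FiniteDimensional.span_of_finite k ((finite_deg_lt r N).image _)

theorem finrank_filtF (k : Type*) {A : Type*} [Field k] [CommRing A] [Algebra k A] {r : ℕ}
    (X : Fin r → A) (B : ℕ → Submodule k A) (hind : iSupIndep B)
    (hB : ∀ n, B n = Submodule.span k (monX X '' {m | ∑ i, m i = n})) (N : ℕ) :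
    Module.finrank k (filtF k X N) = ∑ i ∈ Finset.range N, Module.finrank k (B i) := by
  induction N with
  | zero =>
    have : {m : Fin r → ℕ | ∑ i, m i < 0} = ∅ := by
      ext m
      simp
    rw [filtF, this, Set.image_empty, Submodule.span_empty, finrank_bot]
    simp
  | succ N ih =>
    have e : filtF k X (N + 1) = filtF k X N ⊔ B N := by
      rw [hB, filtF, filtF, ← Submodule.span_union, ← Set.image_union]
      congr 2
      ext m
      simp only [Set.mem_ofPred_eq, Set.mem_union]
      omega
    have hle : filtF k X N ≤ ⨆ (j) (_ : j ≠ N), B j := by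
      rw [filtF, Submodule.span_le]
      rintro _ ⟨m, hm, rfl⟩
      simp only [Set.mem_ofPred_eq] at hm
      refine Submodule.mem_iSup_of_mem (∑ i, m i) (Submodule.mem_iSup_of_mem (by omega) ?_)
      rw [hB]
      exact Submodule.subset_span ⟨m, rfl, rfl⟩
    have hd := (hind N).symm.mono_left hle
    have : FiniteDimensional k (B N) := by
      refine Submodule.finiteDimensional_of_le (S₂ := filtF k X (N + 1)) ?_
      rw [e]; exact le_sup_right
    have h2 := Submodule.finrank_sup_add_finrank_inf_eq (filtF k X N) (B N)
    rw [hd.eq_bot, finrank_bot] at h2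
    rw [Finset.sum_range_succ, e, ← ih]
    omega

theorem filtF_mono (k : Type*) {A : Type*} [Field k] [CommRing A] [Algebra k A] {r : ℕ}
    (X : Fin r → A) : Monotone (filtF k X) := by
  intro a b h
  apply Submodule.span_mono
  apply Set.image_mono
  intro m hm
  exact lt_of_lt_of_le hm h

theorem filtF_mul (k : Type*) {A : Type*} [Field k] [CommRing A] [Algebra k A] {r : ℕ}
    (X : Fin r → A) {a b : ℕ} {x y : A} (hx : x ∈ filtF k X (a + 1)) (hy : y ∈ filtF k X (b + 1)) :
    x * y ∈ filtF k X (a + b + 1) := by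
  have h := Submodule.mul_mem_mul hx hy
  rw [filtF, filtF, Submodule.span_mul_span] at h
  refine Submodule.span_mono ?_ h
  rintro _ ⟨_, ⟨m, hm, rfl⟩, _, ⟨m', hm', rfl⟩, rfl⟩
  refine ⟨m + m', ?_, monX_add _ _ _⟩
  simp only [Set.mem_ofPred_eq, Pi.add_apply, Finset.sum_add_distrib] at *
  omega

theorem filtF_one (k : Type*) {A : Type*} [Field k] [CommRing A] [Algebra k A] {r : ℕ}
    (X : Fin r → A) : (1 : A) ∈ filtF k X 1 :=
  Submodule.subset_span ⟨0, by simp, by simp [monX]⟩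

theorem filtF_pow (k : Type*) {A : Type*} [Field k] [CommRing A] [Algebra k A] {r : ℕ}
    (X : Fin r → A) {a : ℕ} {x : A} (hx : x ∈ filtF k X (a + 1)) (n : ℕ) :
    x ^ n ∈ filtF k X (n * a + 1) := by
  induction n with
  | zero => simpa using filtF_one k X
  | succ n ih =>
    rw [pow_succ, add_mul, one_mul]
    exact filtF_mul k X ih hx

theorem filtF_prod (k : Type*) {A : Type*} [Field k] [CommRing A] [Algebra k A] {r : ℕ}
    (X : Fin r → A) {ι : Type*} (s : Finset ι) (f : ι → A) (a : ℕ)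
    (hf : ∀ i ∈ s, f i ∈ filtF k X (a + 1)) : ∏ i ∈ s, f i ∈ filtF k X (s.card * a + 1) := by
  classical
  induction s using Finset.induction_on with
  | empty => simpa using filtF_one k X
  | insert i s hi ih =>
    rw [Finset.prod_insert hi, Finset.card_insert_of_notMem hi, add_mul, one_mul, add_comm _ a]
    exact filtF_mul k X (hf i (by simp)) (ih fun j hj => hf j (by simp [hj]))

theorem growth_lower (k : Type*) {A : Type*} [Field k] [CommRing A] [Algebra k A] {r : ℕ}
    (X : Fin r → A) (hX : ∀ a, ∃ N, a ∈ filtF k X N) {s : ℕ}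
    (g : MvPolynomial (Fin s) k →ₐ[k] A) (hg : Function.Injective g) :
    ∃ C : ℕ, ∀ n ≥ 1, n ^ s ≤ Module.finrank k (filtF k X (C * n)) := by
  classical
  choose N hN using fun j : Fin s => hX (g (MvPolynomial.X j))
  set M := Finset.univ.sup N with hM
  have hMj : ∀ j, g (MvPolynomial.X j) ∈ filtF k X (M + 1) := fun j =>
    filtF_mono k X ((Finset.le_sup (Finset.mem_univ j)).trans (Nat.le_succ _)) (hN j)
  refine ⟨s * M + 1, fun n hn => ?_⟩
  let ee : (Fin s → Fin n) → (Fin s →₀ ℕ) := fun e => Finsupp.equivFunOnFinite.symm fun i => (e i : ℕ)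
  have hee : Function.Injective ee := by
    intro a b hab
    have := Finsupp.equivFunOnFinite.symm.injective hab
    funext i
    exact Fin.ext (congrFun this i)
  have hli : LinearIndependent k (fun e : Fin s → Fin n =>
      g (MvPolynomial.basisMonomials (Fin s) k (ee e))) :=
    (((MvPolynomial.basisMonomials (Fin s) k).linearIndependent.comp ee hee).map'
      g.toLinearMap (LinearMap.ker_eq_bot.2 hg))
  have hcard := finrank_span_eq_card hli
  rw [Fintype.card_fun, Fintype.card_fin, Fintype.card_fin] at hcard
  rw [← hcard]
  apply Submodule.finrank_mono
  rw [Submodule.span_le]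
  rintro _ ⟨e, rfl⟩
  have h1 : g (MvPolynomial.basisMonomials (Fin s) k (ee e)) =
      ∏ i, g (MvPolynomial.X i) ^ (e i : ℕ) := by
    rw [MvPolynomial.coe_basisMonomials]
    beta_reduce
    rw [MvPolynomial.monomial_eq]
    simp [ee, Finsupp.prod_fintype]
  beta_reduce
  rw [h1]
  have h2 := filtF_prod k X Finset.univ (fun i => g (MvPolynomial.X i) ^ (e i : ℕ)) (n * M) (by
    intro i _
    refine filtF_mono k X ?_ (filtF_pow k X (hMj i) (e i))
    have := Nat.mul_le_mul_right M (e i).2.le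
    omega)
  refine filtF_mono k X ?_ h2
  rw [Finset.card_univ, Fintype.card_fin]
  nlinarith

/-- auxiliary filtration for the upper bound -/
def auxG (k : Type*) {A : Type*} [Field k] [CommRing A] [Algebra k A] {s L : ℕ}
    (Y : Fin s → A) (a : Fin L → A) (D : ℕ) : Submodule k A :=
  Submodule.span k ((fun z : (Fin s → ℕ) × Fin L => monX Y z.1 * a z.2) ''
    {z | ∀ i, z.1 i ≤ D})

theorem auxG_mono (k : Type*) {A : Type*} [Field k] [CommRing A] [Algebra k A] {s L : ℕ}
    (Y : Fin s → A) (a : Fin L → A) : Monotone (auxG k Y a) := by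
  intro D D' h
  apply Submodule.span_mono
  apply Set.image_mono
  intro z hz i
  exact (hz i).trans h

theorem auxG_eq (k : Type*) {A : Type*} [Field k] [CommRing A] [Algebra k A] {s L : ℕ}
    (Y : Fin s → A) (a : Fin L → A) (D : ℕ) :
    auxG k Y a D = Submodule.span k (Set.range
      fun z : (Fin s → Fin (D + 1)) × Fin L => monX Y (fun i => (z.1 i : ℕ)) * a z.2) := by
  rw [auxG]
  congr 1
  ext x
  constructor
  · rintro ⟨⟨e, l⟩, he, rfl⟩
    exact ⟨⟨fun i => ⟨e i, Nat.lt_succ_of_le (he i)⟩, l⟩, rfl⟩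
  · rintro ⟨⟨e, l⟩, rfl⟩
    exact ⟨⟨fun i => (e i : ℕ), l⟩, fun i => Nat.le_of_lt_succ (e i).2, rfl⟩

theorem auxG_finrank (k : Type*) {A : Type*} [Field k] [CommRing A] [Algebra k A] {s L : ℕ}
    (Y : Fin s → A) (a : Fin L → A) (D : ℕ) :
    Module.Finite k (auxG k Y a D) ∧ Module.finrank k (auxG k Y a D) ≤ (D + 1) ^ s * L := by
  rw [auxG_eq]
  refine ⟨FiniteDimensional.span_of_finite k (Set.finite_range _), ?_⟩
  refine (finrank_range_le_card _).trans ?_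
  simp

theorem growth_upper (k : Type*) {A : Type*} [Field k] [CommRing A] [Algebra k A] {r : ℕ}
    (X : Fin r → A) {s : ℕ}
    (g : MvPolynomial (Fin s) k →ₐ[k] A) (hg : g.Finite) :
    ∃ C : ℕ, ∀ N ≥ 1, Module.finrank k (filtF k X N) ≤ C * N ^ s := by
  classical
  algebraize [g.toRingHom]
  have hfin : Module.Finite (MvPolynomial (Fin s) k) A := hg
  obtain ⟨L, a, ha⟩ := Module.Finite.exists_fin (R := MvPolynomial (Fin s) k) (M := A)
  set Y : Fin s → A := fun j => g (MvPolynomial.X j) with hY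
  have hdir : Directed (· ≤ ·) (auxG k Y a) := (auxG_mono k Y a).directed_le
  have hall : ∀ x : A, ∃ D, x ∈ auxG k Y a D := by
    intro x
    rw [← Submodule.mem_iSup_of_directed _ hdir]
    have hx : x ∈ Submodule.span (MvPolynomial (Fin s) k) (Set.range a) := by rw [ha]; trivial
    obtain ⟨c, rfl⟩ := (Submodule.mem_span_range_iff_exists_fun _).1 hx
    refine Submodule.sum_mem _ fun l _ => ?_
    have hsm : c l • a l = g (c l) * a l := by
      rw [Algebra.smul_def]
      rfl
    rw [hsm]
    induction c l using MvPolynomial.induction_on' with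
    | monomial u t =>
      have h1 : g (MvPolynomial.monomial u t) * a l = t • (monX Y u * a l) := by
        rw [MvPolynomial.monomial_eq, map_mul, ← MvPolynomial.algebraMap_eq, AlgHom.commutes,
          Algebra.smul_def, mul_assoc]
        simp [monX, hY, Finsupp.prod_fintype]
      rw [h1]
      refine Submodule.smul_mem _ _ ?_
      rw [Submodule.mem_iSup_of_directed _ hdir]
      refine ⟨Finset.univ.sup u, Submodule.subset_span ⟨(u, l), ?_, rfl⟩⟩
      exact fun i => Finset.le_sup (f := u) (Finset.mem_univ i)
    | add p q hp hq =>
      rw [map_add, add_mul]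
      exact add_mem hp hq
  choose D hD using hall
  set D0 := D 1 + ∑ i, ∑ l, D (X i * a l) with hD0
  have h1 : (1 : A) ∈ auxG k Y a D0 := auxG_mono k Y a (by omega) (hD 1)
  have hXl : ∀ i l, X i * a l ∈ auxG k Y a D0 := by
    intro i l
    refine auxG_mono k Y a ?_ (hD _)
    have h2 := Finset.single_le_sum (f := fun l => D (X i * a l)) (fun _ _ => Nat.zero_le _)
      (Finset.mem_univ l)
    have h3 := Finset.single_le_sum (f := fun i => ∑ l, D (X i * a l)) (fun _ _ => Nat.zero_le _)
      (Finset.mem_univ i)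
    omega
  have hmon : ∀ (e : Fin s → ℕ) (B : ℕ), (∀ i, e i ≤ B) → ∀ y ∈ auxG k Y a D0,
      monX Y e * y ∈ auxG k Y a (B + D0) := by
    intro e B he y hy
    have h := Submodule.mem_map_of_mem (f := LinearMap.mulLeft k (monX Y e)) hy
    rw [auxG, Submodule.map_span, ← Set.image_comp] at h
    refine Submodule.span_mono ?_ h
    rintro _ ⟨⟨e', l⟩, he', rfl⟩
    refine ⟨(e + e', l), fun i => ?_, ?_⟩
    · exact add_le_add (he i) (he' i)
    · simp [monX_add, mul_assoc]
  have hmulX : ∀ i B, ∀ y ∈ auxG k Y a B, X i * y ∈ auxG k Y a (B + D0) := by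
    intro i B y hy
    have h := Submodule.mem_map_of_mem (f := LinearMap.mulLeft k (X i)) hy
    rw [auxG, Submodule.map_span, ← Set.image_comp] at h
    refine (Submodule.span_le.2 ?_) h
    rintro _ ⟨⟨e, l⟩, he, rfl⟩
    have := hmon e B he _ (hXl i l)
    simp only [Function.comp, LinearMap.mulLeft_apply, SetLike.mem_coe]
    rwa [mul_left_comm]
  have hpow : ∀ i j B, ∀ y ∈ auxG k Y a B, X i ^ j * y ∈ auxG k Y a (B + j * D0) := by
    intro i j
    induction j with
    | zero => intro B y hy; simpa using hy
    | succ j ih =>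
      intro B y hy
      rw [pow_succ, mul_assoc]
      refine auxG_mono k Y a ?_ (ih _ _ (hmulX i B y hy))
      rw [add_mul]; omega
  have hprod : ∀ (t : Finset (Fin r)) (m : Fin r → ℕ),
      ∏ i ∈ t, X i ^ m i ∈ auxG k Y a (D0 + (∑ i ∈ t, m i) * D0) := by
    intro t m
    induction t using Finset.induction_on with
    | empty => simpa using h1
    | insert i t hi ih =>
      rw [Finset.prod_insert hi, Finset.sum_insert hi]
      refine auxG_mono k Y a ?_ (hpow i (m i) _ _ ih)
      rw [add_mul]; omega
  have hle : ∀ N, filtF k X N ≤ auxG k Y a (D0 * N) := by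
    intro N
    rw [filtF, Submodule.span_le]
    rintro _ ⟨m, hm, rfl⟩
    refine auxG_mono k Y a ?_ (hprod Finset.univ m)
    have hm' : ∑ i, m i + 1 ≤ N := hm
    calc _ = D0 * (∑ i, m i + 1) := by ring
      _ ≤ _ := Nat.mul_le_mul_left _ hm'
  refine ⟨(D0 + 1) ^ s * L, fun N hN => ?_⟩
  obtain ⟨hf, hfr⟩ := auxG_finrank k Y a (D0 * N)
  refine (Submodule.finrank_mono (hle N)).trans (hfr.trans ?_)
  calc (D0 * N + 1) ^ s * L ≤ ((D0 + 1) * N) ^ s * L := by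
        gcongr
        nlinarith
    _ = _ := by rw [mul_pow]; ring

theorem growth (k : Type*) {A : Type*} [Field k] [CommRing A] [Nontrivial A] [Algebra k A] {r : ℕ}
    (X : Fin r → A) (hX : ∀ a, ∃ N, a ∈ filtF k X N) :
    ∃ s : ℕ, ringKrullDim A = s ∧
      (∃ C : ℕ, ∀ n ≥ 1, n ^ s ≤ Module.finrank k (filtF k X (C * n))) ∧
      ∃ C : ℕ, ∀ N ≥ 1, Module.finrank k (filtF k X N) ≤ C * N ^ s := by
  have hft : Algebra.FiniteType k A := by
    classical
    refine ⟨⟨Finset.univ.image X, ?_⟩⟩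
    rw [eq_top_iff]
    rintro a -
    obtain ⟨N, hN⟩ := hX a
    have : filtF k X N ≤ Subalgebra.toSubmodule (Algebra.adjoin k (Finset.univ.image X : Set A)) := by
      rw [filtF, Submodule.span_le]
      rintro _ ⟨m, -, rfl⟩
      refine Subalgebra.prod_mem _ fun i _ => Subalgebra.pow_mem _ (Algebra.subset_adjoin ?_) _
      simp
    exact this hN
  obtain ⟨s, g, hinj, hfin⟩ := exists_finite_inj_algHom_of_fg k A
  refine ⟨s, ?_, growth_lower k X hX g hinj, growth_upper k X g hfin⟩
  algebraize [g.toRingHom]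
  have hf : Module.Finite (MvPolynomial (Fin s) k) A := hfin
  rw [ringKrullDim_eq_of_int (P := MvPolynomial (Fin s) k) (A := A) hinj,
    MvPolynomial.ringKrullDim_of_isNoetherianRing]
  simp

theorem EvPoly.tendsto {f : ℕ → ℝ} (hf : EvPoly f) (d : ℕ) (C : ℝ)
    (h0 : ∀ N, 0 ≤ f N) (hC : ∀ N : ℕ, 1 ≤ N → f N ≤ C * (N : ℝ) ^ d) (c : ℝ) :
    ∃ E : ℝ, Filter.Tendsto (fun N : ℕ => c * f N / (N : ℝ) ^ d) Filter.atTop (nhds E) := by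
  obtain ⟨P, hP⟩ := hf
  have key : ∃ E : ℝ, Filter.Tendsto (fun x : ℝ => P.eval x / (Polynomial.X ^ d : Polynomial ℝ).eval x)
      Filter.atTop (nhds E) := by
    rcases lt_trichotomy P.degree (Polynomial.X ^ d : Polynomial ℝ).degree with h | h | h
    · exact ⟨_, Polynomial.div_tendsto_atTop_zero_of_degree_lt _ _ h⟩
    · exact ⟨_, Polynomial.div_tendsto_atTop_leadingCoeff_div_of_degree_eq _ _ h⟩
    · exfalso
      have ht := Polynomial.abs_div_tendsto_atTop_atTop_of_degree_gt P (Polynomial.X ^ d) h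
        (by simp)
      have ht' := ht.comp tendsto_natCast_atTop_atTop
      have h1 := ht'.eventually (Filter.eventually_gt_atTop C)
      obtain ⟨N, h1, h2, h3⟩ := (h1.and (hP.and (Filter.eventually_ge_atTop 1))).exists
      simp only [Function.comp, ← h2, Polynomial.eval_pow, Polynomial.eval_X] at h1
      have hN : (0 : ℝ) < (N : ℝ) ^ d := by positivity
      rw [abs_of_nonneg (div_nonneg (h0 N) hN.le), lt_div_iff₀ hN] at h1
      exact absurd (hC N h3) (not_le.2 h1)
  obtain ⟨E, hE⟩ := key
  refine ⟨c * E, ((hE.comp tendsto_natCast_atTop_atTop).const_mul c).congr' ?_⟩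
  filter_upwards [hP] with N hN
  simp only [Function.comp, hN, Polynomial.eval_pow, Polynomial.eval_X]
  ring

theorem closed_of_generic {R : Type*} [CommRing R] [IsNoetherianRing R]
    (T : Set (PrimeSpectrum R))
    (hspec : ∀ p p' : PrimeSpectrum R, p.asIdeal ≤ p'.asIdeal → p ∈ T → p' ∈ T)
    (hgen : ∀ q : PrimeSpectrum R, ∃ a ∉ q.asIdeal, ∀ p : PrimeSpectrum R,
      q.asIdeal ≤ p.asIdeal → a ∉ p.asIdeal → p ∈ T → q ∈ T) : IsClosed T := by
  classical
  rw [← closure_eq_iff_isClosed]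
  refine subset_antisymm ?_ subset_closure
  rw [← PrimeSpectrum.zeroLocus_vanishingIdeal_eq_closure]
  intro p hp
  set J := PrimeSpectrum.vanishingIdeal T with hJ
  have hJp : J ≤ p.asIdeal := hp
  obtain ⟨q, hq, hqp⟩ := Ideal.exists_minimalPrimes_le hJp
  have hqprime : q.IsPrime := hq.1.1
  refine hspec ⟨q, hqprime⟩ p hqp ?_
  have hfin : J.minimalPrimes.Finite := Ideal.finite_minimalPrimes_of_isNoetherianRing R J
  obtain ⟨a, ha, hgen'⟩ := hgen ⟨q, hqprime⟩
  have hb : ∃ b ∉ q, ∀ q' ∈ J.minimalPrimes, q' ≠ q → b ∈ q' := by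
    by_contra! hcon
    have h1 : (hfin.toFinset.erase q).inf id ≤ q := by
      intro b hb
      by_contra hbq
      obtain ⟨q', hq', hne, hbq'⟩ := hcon b hbq
      apply hbq'
      have : (hfin.toFinset.erase q).inf id ≤ q' := Finset.inf_le (f := id) (by simp [hne, hq'])
      exact this hb
    obtain ⟨q', hq', hle⟩ := (Ideal.IsPrime.inf_le' hqprime).1 h1
    simp only [Finset.mem_erase, Set.Finite.mem_toFinset] at hq'
    exact hq'.1 (le_antisymm hle (hq.2 hq'.2.1 hle))
  obtain ⟨b, hbq, hb⟩ := hb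
  have hab : a * b ∉ q := fun h => (hqprime.mem_or_mem h).elim ha hbq
  have habJ : a * b ∉ J := fun h => hab (hq.1.2 h)
  rw [hJ, PrimeSpectrum.mem_vanishingIdeal] at habJ
  push Not at habJ
  obtain ⟨p', hp'T, hp'⟩ := habJ
  have hJp' : J ≤ p'.asIdeal := by
    intro x hx
    exact (PrimeSpectrum.mem_vanishingIdeal _ _).1 hx p' hp'T
  obtain ⟨q', hq', hqp'⟩ := Ideal.exists_minimalPrimes_le hJp'
  have hqq : q' = q := by
    by_contra hne
    exact hp' (Ideal.mul_mem_left _ _ (hqp' (hb q' hq' hne)))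
  subst hqq
  exact hgen' p' hqp' (fun h => hp' (Ideal.mul_mem_right _ _ h)) hp'T

open TensorProduct in
theorem fiber_rank_mono {R M : Type*} [CommRing R] [AddCommGroup M] [Module R M] [Module.Finite R M]
    (p p' : PrimeSpectrum R) (h : p.asIdeal ≤ p'.asIdeal) :
    Module.finrank p.asIdeal.ResidueField (p.asIdeal.ResidueField ⊗[R] M) ≤
      Module.finrank p'.asIdeal.ResidueField (p'.asIdeal.ResidueField ⊗[R] M) := by
  classical
  set K := p'.asIdeal.ResidueField
  have hspan : Submodule.span K (Set.range fun m : M => (1 : K) ⊗ₜ[R] m) = ⊤ := by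
    rw [eq_top_iff]
    rintro x -
    induction x using TensorProduct.induction_on with
    | zero => exact zero_mem _
    | add x y hx hy => exact add_mem hx hy
    | tmul c m =>
      have : c ⊗ₜ[R] m = c • ((1 : K) ⊗ₜ[R] m) := by simp [TensorProduct.smul_tmul']
      rw [this]
      exact Submodule.smul_mem _ _ (Submodule.subset_span ⟨m, rfl⟩)
  obtain ⟨b, hbsub, hbspan, hbli⟩ := exists_linearIndependent K (Set.range fun m : M => (1 : K) ⊗ₜ[R] m)
  rw [hspan] at hbspan
  have hbfin : b.Finite := hbli.setFinite
  have : Fintype b := hbfin.fintype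
  have hbsub' : ∀ z ∈ b, ∃ m : M, (1 : K) ⊗ₜ[R] m = z := fun z hz => hbsub hz
  choose! w hw using hbsub'
  have hcard : Module.finrank K (K ⊗[R] M) = Fintype.card b := by
    rw [← finrank_span_eq_card hbli, Subtype.range_coe, hbspan, finrank_top]
  rw [hcard]
  let N : Submodule R M := Submodule.span R (Set.range fun x : b => w x)
  -- generation criterion
  have crit : ∀ P : PrimeSpectrum R,
      P ∉ Module.support R (M ⧸ N) ↔ LinearMap.range (N.subtype.baseChange P.asIdeal.ResidueField) = ⊤ := by
    intro P
    rw [Module.mem_support_iff_nontrivial_residueField_tensorProduct,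
      not_nontrivial_iff_subsingleton]
    have hex : Function.Exact (N.subtype.baseChange P.asIdeal.ResidueField)
        (N.mkQ.baseChange P.asIdeal.ResidueField) := by
      have := lTensor_exact P.asIdeal.ResidueField (LinearMap.exact_subtype_mkQ N) N.mkQ_surjective
      exact this
    have hsurj : Function.Surjective (N.mkQ.baseChange P.asIdeal.ResidueField) :=
      LinearMap.lTensor_surjective _ N.mkQ_surjective
    rw [← (LinearMap.exact_iff.1 hex), LinearMap.ker_eq_top]
    constructor
    · intro hs
      ext x
      exact Subsingleton.elim _ _
    · intro h0
      refine ⟨fun x y => ?_⟩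
      obtain ⟨x, rfl⟩ := hsurj x
      obtain ⟨y, rfl⟩ := hsurj y
      rw [h0]; rfl
  have himg : ∀ P : PrimeSpectrum R,
      LinearMap.range (N.subtype.baseChange P.asIdeal.ResidueField) =
      Submodule.span P.asIdeal.ResidueField
        (Set.range fun x : b => (1 : P.asIdeal.ResidueField) ⊗ₜ[R] w x) := by
    intro P
    have h1 : LinearMap.range (N.subtype.baseChange P.asIdeal.ResidueField) =
      N.baseChange P.asIdeal.ResidueField := rfl
    rw [h1, Submodule.baseChange_span, ← Set.range_comp]
    rfl
  have h1 : p' ∉ Module.support R (M ⧸ N) := by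
    rw [crit, himg, ← hbspan]
    congr 1
    ext z
    constructor
    · rintro ⟨x, rfl⟩
      have := hw x.1 x.2
      beta_reduce at this ⊢
      rw [this]
      exact x.2
    · intro hz
      exact ⟨⟨z, hz⟩, hw z hz⟩
  have h2 : p ∉ Module.support R (M ⧸ N) := by
    intro hp
    exact h1 (Module.mem_support_mono (p := p) (q := p') h hp)
  rw [crit, himg] at h2
  rw [← finrank_top, ← h2]
  exact finrank_range_le_card _

open TensorProduct in
theorem zero_spread {R M : Type*} [CommRing R] [AddCommGroup M] [Module R M]
    (q : PrimeSpectrum R) (y : M) (hy : (1 : q.asIdeal.ResidueField) ⊗ₜ[R] y = 0) :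
    ∃ t ∉ q.asIdeal, ∀ p : PrimeSpectrum R, q.asIdeal ≤ p.asIdeal → t ∉ p.asIdeal →
      (1 : p.asIdeal.ResidueField) ⊗ₜ[R] y = 0 := by
  let D := R ⧸ q.asIdeal
  let K := q.asIdeal.ResidueField
  have h1 : (1 : K) ⊗ₜ[D] ((1 : D) ⊗ₜ[R] y) = 0 := by
    apply (TensorProduct.AlgebraTensorModule.cancelBaseChange R D K K M).injective
    simpa using hy
  have hloc : IsLocalizedModule (nonZeroDivisors D) (TensorProduct.mk D K (D ⊗[R] M) 1) :=
    (isLocalizedModule_iff_isBaseChange (nonZeroDivisors D) K _).2 (TensorProduct.isBaseChange _ _ _)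
  obtain ⟨t, ht⟩ := (IsLocalizedModule.eq_zero_iff (nonZeroDivisors D)
    (TensorProduct.mk D K (D ⊗[R] M) 1)).1 h1
  obtain ⟨t0, ht0⟩ := Ideal.Quotient.mk_surjective t.1
  refine ⟨t0, ?_, ?_⟩
  · intro h
    have := nonZeroDivisors.ne_zero t.2
    exact this (by rw [← ht0]; exact Ideal.Quotient.eq_zero_iff_mem.2 h)
  · intro p hqp htp
    have h2 : ((Ideal.Quotient.mk q.asIdeal t0 : D)) ⊗ₜ[R] y = 0 := by
      have : t.1 • ((1 : D) ⊗ₜ[R] y) = 0 := ht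
      rw [← ht0, TensorProduct.smul_tmul', smul_eq_mul, mul_one] at this
      exact this
    let g : D →ₐ[R] p.asIdeal.ResidueField := Ideal.Quotient.liftₐ q.asIdeal
      (Algebra.ofId R p.asIdeal.ResidueField) (fun a ha => by
        have : a ∈ p.asIdeal := hqp ha
        rw [← Ideal.algebraMap_residueField_eq_zero] at this
        exact this)
    have h3 := congrArg (LinearMap.rTensor M g.toLinearMap) h2
    rw [map_zero, LinearMap.rTensor_tmul] at h3
    have h4 : g.toLinearMap (Ideal.Quotient.mk q.asIdeal t0) = algebraMap R p.asIdeal.ResidueField t0 :=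
      g.commutes t0
    rw [h4] at h3
    have h5 : algebraMap R p.asIdeal.ResidueField t0 ≠ 0 := by
      rwa [Ne, Ideal.algebraMap_residueField_eq_zero]
    have h6 := congrArg (fun z => (algebraMap R p.asIdeal.ResidueField t0)⁻¹ • z) h3
    beta_reduce at h6
    rwa [TensorProduct.smul_tmul', smul_eq_mul, inv_mul_cancel₀ h5, smul_zero] at h6

open TensorProduct in
theorem mem_baseChange_iff {R M K : Type*} [CommRing R] [AddCommGroup M] [Module R M] [Field K] [Algebra R K]
    (N : Submodule R M) (y : M) :
    (1 : K) ⊗ₜ[R] y ∈ N.baseChange K ↔ (1 : K) ⊗ₜ[R] (N.mkQ y) = 0 := by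
  have hex : Function.Exact (N.subtype.baseChange K) (N.mkQ.baseChange K) :=
    lTensor_exact K (LinearMap.exact_subtype_mkQ N) N.mkQ_surjective
  have := hex ((1 : K) ⊗ₜ[R] y)
  rw [LinearMap.baseChange_tmul] at this
  rw [this]
  rfl

open TensorProduct in
theorem monX_tmul {R S K : Type*} [CommRing R] [CommRing S] [Algebra R S] [Field K] [Algebra R K] {r : ℕ}
    (x : Fin r → S) (m : Fin r → ℕ) :
    monX (fun i => (1 : K) ⊗ₜ[R] x i) m = (1 : K) ⊗ₜ[R] monX x m := by
  have : ∀ s : S, (1 : K) ⊗ₜ[R] s = (Algebra.TensorProduct.includeRight : S →ₐ[R] K ⊗[R] S) s := fun s => rfl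
  simp only [this, monX, map_prod, map_pow]

open TensorProduct in
theorem span_monX_tmul {R S K : Type*} [CommRing R] [CommRing S] [Algebra R S] [Field K] [Algebra R K] {r : ℕ}
    (x : Fin r → S) (T : Set (Fin r → ℕ)) :
    Submodule.span K (monX (fun i => (1 : K) ⊗ₜ[R] x i) '' T) =
      (Submodule.span R (monX x '' T)).baseChange K := by
  rw [Submodule.baseChange_span, ← Set.image_comp]
  congr 1
  apply Set.image_congr
  intro m _
  exact monX_tmul x m

open TensorProduct in
theorem redSet_generic {R S : Type*} [CommRing R] [CommRing S] [Algebra R S] {r : ℕ} (x : Fin r → S)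
    (q : PrimeSpectrum R) : ∃ a ∉ q.asIdeal, ∀ p : PrimeSpectrum R, q.asIdeal ≤ p.asIdeal →
      a ∉ p.asIdeal →
      redSet q.asIdeal.ResidueField (fun i => (1 : q.asIdeal.ResidueField) ⊗ₜ[R] x i) ⊆
      redSet p.asIdeal.ResidueField (fun i => (1 : p.asIdeal.ResidueField) ⊗ₜ[R] x i) := by
  classical
  obtain ⟨G, hGU, hG⟩ := dickson
    (redSet q.asIdeal.ResidueField (fun i => (1 : q.asIdeal.ResidueField) ⊗ₜ[R] x i))
  have hmem : ∀ (P : PrimeSpectrum R) (m : Fin r → ℕ),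
      m ∈ redSet P.asIdeal.ResidueField (fun i => (1 : P.asIdeal.ResidueField) ⊗ₜ[R] x i) ↔
      (1 : P.asIdeal.ResidueField) ⊗ₜ[R] ((Submodule.span R (monX x ''
        {m' | ∑ i, m' i = ∑ i, m i ∧ toLex m' < toLex m})).mkQ (monX x m)) = 0 := by
    intro P m
    rw [← mem_baseChange_iff, ← span_monX_tmul, ← monX_tmul]
    rfl
  have h1 : ∀ m ∈ G, ∃ t ∉ q.asIdeal, ∀ p : PrimeSpectrum R, q.asIdeal ≤ p.asIdeal → t ∉ p.asIdeal →
      m ∈ redSet p.asIdeal.ResidueField (fun i => (1 : p.asIdeal.ResidueField) ⊗ₜ[R] x i) := by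
    intro m hm
    obtain ⟨t, ht, h⟩ := zero_spread q _ ((hmem q m).1 (hGU hm))
    exact ⟨t, ht, fun p hp htp => (hmem p m).2 (h p hp htp)⟩
  choose! t ht h using h1
  refine ⟨∏ m ∈ G, t m, ?_, ?_⟩
  · intro hc
    obtain ⟨m, hm, hmq⟩ := (Ideal.IsPrime.prod_mem_iff (hp := q.2)).1 hc
    exact ht m hm hmq
  · intro p hqp hp m hm
    obtain ⟨g, hg, hgm⟩ := hG m hm
    refine redSet_isUpperSet _ _ hgm (h g hg p hqp fun hc => hp ?_)
    exact Ideal.mem_of_dvd _ (Finset.dvd_prod_of_mem t hg) hc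

theorem stdCount_anti {r : ℕ} {U V : Set (Fin r → ℕ)} (h : U ⊆ V) (n : ℕ) :
    stdCount V n ≤ stdCount U n := by
  classical
  unfold stdCount
  apply Finset.card_le_card
  intro m hm
  rw [Finset.mem_filter] at hm ⊢
  exact ⟨hm.1, fun hc => hm.2 (h hc)⟩

theorem graded_eq_span {R S : Type*} [CommRing R] [CommRing S] [Algebra R S]
    (𝒜 : ℕ → Submodule R S)
    (h0 : 𝒜 0 = (1 : Submodule R S))
    (hfg1 : Module.Finite R (𝒜 1))
    (hstd : ∀ n : ℕ, 𝒜 (n + 1) = 𝒜 1 * 𝒜 n) :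
    ∃ (r : ℕ) (x : Fin r → S), ∀ n, 𝒜 n = Submodule.span R (monX x '' {m | ∑ i, m i = n}) := by
  classical
  obtain ⟨r, x, hx⟩ := Submodule.fg_iff_exists_fin_generating_family.1 (Module.Finite.iff_fg.1 hfg1)
  refine ⟨r, x, fun n => ?_⟩
  induction n with
  | zero =>
    have : {m : Fin r → ℕ | ∑ i, m i = 0} = {0} := by
      ext m
      simp [funext_iff]
    rw [h0, this, Set.image_singleton, Submodule.one_eq_span]
    simp [monX]
  | succ n ih =>
    rw [hstd, ih, ← hx, Submodule.span_mul_span]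
    congr 1
    ext s
    constructor
    · rintro ⟨_, ⟨i, rfl⟩, _, ⟨m, hm, rfl⟩, rfl⟩
      refine ⟨Pi.single i 1 + m, ?_, ?_⟩
      · simp only [Set.mem_ofPred_eq] at hm ⊢
        simp [Finset.sum_add_distrib, hm, add_comm]
      · rw [monX_add]
        congr 1
        simp [monX, Pi.single_apply, pow_ite]
    · rintro ⟨m, hm, rfl⟩
      simp only [Set.mem_ofPred_eq] at hm
      have : ∃ i, m i ≠ 0 := by
        by_contra! hc
        simp [hc] at hm
      obtain ⟨i, hi⟩ := this
      have hle : Pi.single i 1 ≤ m := by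
        intro j
        by_cases h : j = i
        · subst h; simp; omega
        · simp [h]
      obtain ⟨c, rfl⟩ := exists_add_of_le hle
      refine ⟨_, ⟨i, rfl⟩, _, ⟨c, ?_, rfl⟩, ?_⟩
      · simp only [Pi.add_apply, Finset.sum_add_distrib, Finset.sum_pi_single', Finset.mem_univ,
          if_true, Set.mem_ofPred_eq] at hm ⊢
        omega
      · rw [monX_add]
        congr 1
        simp [monX, Pi.single_apply, pow_ite]

open TensorProduct in
theorem fiber_facts {R S : Type*} [CommRing R] [CommRing S] [Algebra R S]
    (𝒜 : ℕ → Submodule R S) [GradedAlgebra 𝒜]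
    (h0 : 𝒜 0 = (1 : Submodule R S)) (hinj : Function.Injective (algebraMap R S))
    {r : ℕ} (x : Fin r → S) (hx : ∀ n, 𝒜 n = Submodule.span R (monX x '' {m | ∑ i, m i = n}))
    (K : Type*) [Field K] [Algebra R K] :
    (∀ n, Module.finrank K (K ⊗[R] 𝒜 n) = stdCount (redSet K (fun i => (1 : K) ⊗ₜ[R] x i)) n) ∧
    (∀ N, Module.finrank K (filtF K (fun i => (1 : K) ⊗ₜ[R] x i) N) =
      ∑ i ∈ Finset.range N, Module.finrank K (K ⊗[R] 𝒜 i)) ∧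
    (∀ a : K ⊗[R] S, ∃ N, a ∈ filtF K (fun i => (1 : K) ⊗ₜ[R] x i) N) ∧
    Nontrivial (K ⊗[R] S) := by
  classical
  have hB : ∀ n, (𝒜 n).baseChange K =
      Submodule.span K (monX (fun i => (1 : K) ⊗ₜ[R] x i) '' {m | ∑ i, m i = n}) := by
    intro n
    rw [span_monX_tmul, ← hx]
  have hinter : DirectSum.IsInternal (fun n => (𝒜 n).baseChange K) :=
    DirectSum.Decomposition.isInternal _
  have hrank : ∀ n, Module.finrank K (K ⊗[R] 𝒜 n) = Module.finrank K ((𝒜 n).baseChange K) := by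
    intro n
    exact (LinearEquiv.ofBijective _ (DirectSum.toBaseChange_bijective (S := K) 𝒜 n)).finrank_eq
  refine ⟨?_, ?_, ?_, ?_⟩
  · intro n
    rw [hrank, hB, finrank_eq_stdCount]
  · intro N
    rw [finrank_filtF K _ (fun n => (𝒜 n).baseChange K) hinter.submodule_iSupIndep hB]
    simp only [hrank]
  · intro a
    have ha : a ∈ ⨆ n, (𝒜 n).baseChange K := by
      rw [hinter.submodule_iSup_eq_top]; trivial
    induction ha using Submodule.iSup_induction' with
    | mem i z hz =>
      refine ⟨i + 1, ?_⟩
      rw [hB] at hz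
      refine Submodule.span_mono (Set.image_mono ?_) hz
      intro m hm
      exact Nat.lt_succ_of_le (le_of_eq hm)
    | zero => exact ⟨0, zero_mem _⟩
    | add y z _ _ hy hz =>
      obtain ⟨N, hN⟩ := hy
      obtain ⟨N', hN'⟩ := hz
      exact ⟨max N N', add_mem (filtF_mono K _ (le_max_left _ _) hN)
        (filtF_mono K _ (le_max_right _ _) hN')⟩
  · have e : R ≃ₗ[R] 𝒜 0 := (LinearEquiv.ofInjective (Algebra.linearMap R S) hinj).trans
      (LinearEquiv.ofEq _ _ (by rw [h0, Submodule.one_eq_range]))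
    have e2 : K ≃ₗ[R] K ⊗[R] 𝒜 0 := (TensorProduct.rid R K).symm.trans (LinearEquiv.lTensor K e)
    have h1 := DirectSum.toBaseChange_injective (S := K) 𝒜 0
    have h2 : Function.Injective (fun z : K => (((𝒜 0).toBaseChange K (e2 z) : (𝒜 0).baseChange K) : K ⊗[R] S)) :=
      Subtype.val_injective.comp (h1.comp e2.injective)
    exact h2.nontrivial

open TensorProduct in
theorem closed_of_monotone {R S : Type*} [CommRing R] [IsNoetherianRing R] [CommRing S] [Algebra R S]
    (𝒜 : ℕ → Submodule R S) [GradedAlgebra 𝒜]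
    (h0 : 𝒜 0 = (1 : Submodule R S)) (hinj : Function.Injective (algebraMap R S))
    {r : ℕ} (x : Fin r → S) (hx : ∀ n, 𝒜 n = Submodule.span R (monX x '' {m | ∑ i, m i = n}))
    (P : (ℕ → ℕ) → Prop) (hP : ∀ h h' : ℕ → ℕ, (∀ n, h n ≤ h' n) → P h → P h') :
    IsClosed {p : PrimeSpectrum R | P (fun n => Module.finrank p.asIdeal.ResidueField
      (p.asIdeal.ResidueField ⊗[R] 𝒜 n))} := by
  have hfin : ∀ n, Module.Finite R (𝒜 n) := by
    intro n
    rw [hx]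
    refine Module.Finite.span_of_finite R (((finite_deg_lt r (n + 1)).subset ?_).image _)
    intro m hm
    exact Nat.lt_succ_of_le (le_of_eq hm)
  refine closed_of_generic _ ?_ ?_
  · intro p p' hpp' hp
    exact hP _ _ (fun n => fiber_rank_mono p p' hpp') hp
  · intro q
    obtain ⟨a, ha, h⟩ := redSet_generic x q
    refine ⟨a, ha, fun p hqp hap hp => hP _ _ (fun n => ?_) hp⟩
    rw [(fiber_facts 𝒜 h0 hinj x hx p.asIdeal.ResidueField).1,
      (fiber_facts 𝒜 h0 hinj x hx q.asIdeal.ResidueField).1]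
    exact stdCount_anti (h p hqp hap) n

theorem dim_le_of_growth {d s C C' : ℕ} (h : ∀ n ≥ 1, n ^ d ≤ C' * (C * n) ^ s) : d ≤ s := by
  by_contra! hlt
  have h1 := h (C' * C ^ s + 1) (by omega)
  have h2 : (C' * C ^ s + 1) ^ (s + 1) ≤ (C' * C ^ s + 1) ^ d :=
    Nat.pow_le_pow_right (by omega) hlt
  have h3 : (C' * C ^ s + 1) ^ (s + 1) ≤ C' * C ^ s * (C' * C ^ s + 1) ^ s := by
    refine (h2.trans h1).trans (le_of_eq ?_)
    rw [mul_pow]; ring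
  have h4 : 0 < (C' * C ^ s + 1) ^ s := by positivity
  rw [pow_succ] at h3
  nlinarith

open Filter

theorem stmt14 {R S : Type*} [CommRing R] [IsNoetherianRing R] [CommRing S] [Algebra R S]
    (𝒜 : ℕ → Submodule R S) [GradedAlgebra 𝒜]
    (h0 : 𝒜 0 = (1 : Submodule R S)) (hinj : Function.Injective (algebraMap R S))
    (hfg1 : Module.Finite R (𝒜 1))
    (hstd : ∀ n : ℕ, 𝒜 (n + 1) = 𝒜 1 * 𝒜 n)
    (d e : ℕ) :
    -- the fiber dimension over `p`
    let fibdim : PrimeSpectrum R → WithBot ℕ∞ := fun p =>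
      ringKrullDim (TensorProduct R
        (IsLocalRing.ResidueField (Localization.AtPrime p.asIdeal)) S)
    -- the Hilbert function of the fiber over `p`
    let H : PrimeSpectrum R → ℕ → ℕ := fun p n =>
      Module.finrank (IsLocalRing.ResidueField (Localization.AtPrime p.asIdeal))
        (TensorProduct R (IsLocalRing.ResidueField (Localization.AtPrime p.asIdeal)) (𝒜 n))
    -- `e(S ⊗ κ(p)) ≥ e`, via the Hilbert–Samuel limit in dimension `d`
    let multGE : PrimeSpectrum R → Prop := fun p =>
      ∃ E : ℝ, Tendsto (fun N : ℕ =>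
          (Nat.factorial d : ℝ) * (∑ i ∈ Finset.range N, (H p i : ℝ)) / (N : ℝ) ^ d)
        atTop (nhds E) ∧ (e : ℝ) ≤ E
    IsClosed {p : PrimeSpectrum R | (d : WithBot ℕ∞) ≤ fibdim p} ∧
    IsClosed {p : {q : PrimeSpectrum R // fibdim q = (d : WithBot ℕ∞)} | multGE p.1} := by
  intro fibdim H multGE
  obtain ⟨r, x, hx⟩ := graded_eq_span 𝒜 h0 hfg1 hstd
  have hgrow : ∀ p, ∃ s : ℕ, fibdim p = s ∧
      (∃ C : ℕ, ∀ n ≥ 1, n ^ s ≤ ∑ i ∈ Finset.range (C * n), H p i) ∧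
      ∃ C : ℕ, ∀ N ≥ 1, ∑ i ∈ Finset.range N, H p i ≤ C * N ^ s := by
    intro p
    obtain ⟨-, hf, hX, hnt⟩ := fiber_facts 𝒜 h0 hinj x hx p.asIdeal.ResidueField
    have := growth p.asIdeal.ResidueField _ hX
    simp only [hf] at this
    exact this
  have hev : ∀ p, EvPoly (fun n => (H p n : ℝ)) := by
    intro p
    have := stdCount_evPoly _ (redSet_isUpperSet p.asIdeal.ResidueField
      (fun i => (1 : p.asIdeal.ResidueField) ⊗ₜ[R] x i))
    simp only [← (fiber_facts 𝒜 h0 hinj x hx p.asIdeal.ResidueField).1] at this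
    exact this
  constructor
  · have hcl := closed_of_monotone 𝒜 h0 hinj x hx
      (fun h => ∃ C : ℕ, ∀ n ≥ 1, n ^ d ≤ ∑ i ∈ Finset.range (C * n), h i)
      (fun h h' hle ⟨C, hC⟩ => ⟨C, fun n hn => (hC n hn).trans
        (Finset.sum_le_sum fun i _ => hle i)⟩)
    convert hcl using 1
    ext p
    simp only [Set.mem_ofPred_eq]
    obtain ⟨s, hs, ⟨C, hC⟩, ⟨C', hC'⟩⟩ := hgrow p
    rw [hs, Nat.cast_le]
    constructor
    · intro hds
      exact ⟨C, fun n hn => (Nat.pow_le_pow_right hn hds).trans (hC n hn)⟩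
    · rintro ⟨C₁, hC₁⟩
      have hpos : 0 < C₁ := by
        rcases Nat.eq_zero_or_pos C₁ with h | h
        · have := hC₁ 1 le_rfl
          simp [h] at this
        · exact h
      refine dim_le_of_growth (C := C₁) (C' := C') fun n hn => (hC₁ n hn).trans (hC' _ ?_)
      exact Nat.mul_pos hpos hn
  · have hcl := closed_of_monotone 𝒜 h0 hinj x hx
      (fun h => ∀ ε > (0 : ℝ), ∀ᶠ N : ℕ in atTop,
        ((e : ℝ) - ε) ≤ (Nat.factorial d : ℝ) * (∑ i ∈ Finset.range N, (h i : ℝ)) / (N : ℝ) ^ d)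
      (fun h h' hle hh ε hε => (hh ε hε).mono fun N hN => hN.trans (by
        gcongr with i _
        exact hle i))
    convert hcl.preimage (continuous_subtype_val
      (p := fun q : PrimeSpectrum R => fibdim q = (d : WithBot ℕ∞))) using 1
    ext ⟨p, hp⟩
    simp only [Set.mem_preimage, Set.mem_ofPred_eq]
    constructor
    · rintro ⟨E, hE, heE⟩ ε hε
      exact (hE.eventually (lt_mem_nhds (show (e : ℝ) - ε < E by linarith))).mono
        fun N hN => hN.le
    · intro h
      obtain ⟨s, hs, -, ⟨C, hC⟩⟩ := hgrow p
      have hsd : s = d := by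
        rw [hp] at hs
        exact_mod_cast hs.symm
      subst hsd
      obtain ⟨E, hE⟩ := (hev p).psum.tendsto s C
        (fun N => Finset.sum_nonneg fun i _ => Nat.cast_nonneg _)
        (fun N hN => by exact_mod_cast hC N hN) (Nat.factorial s)
      refine ⟨E, hE, ?_⟩
      refine le_of_forall_pos_sub_le fun ε hε => ?_
      exact ge_of_tendsto hE (h ε hε)
end
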